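/- Suppose f is such a piecewise-C³ one-parameter family with β > 0, a_R < −1, and 1/a_R < a_L < 0, and let ν(μ) = f(0;μ). Then there exist μ₀ > 0, continuous functions s_L(μ) = a_L + O(μ), s_R(μ) = a_R + O(μ), and t(μ), and open neighbourhoods N of 0 and M(μ) of 0 such that, writing g̃(y;μ) = g(y; ν(μ), s_L(μ), s_R(μ), t(μ)): (i) for μ ∈ (−μ₀, 0], f(·;μ) on N and g̃(·;μ) on M(μ) are differentiably conjugate; (ii) for μ ∈ (0, μ₀), f has an unstable fixed point x_R > 0 and a stable period-two orbit {u_L, u_R} in N, g̃ has an unstable fixed point y_R > 0 and a stable period-two orbit in M(μ), and f on N and g̃ on M(μ) are differentiably conjugate on the basins of repulsion of their fixed points and on the basins of attraction of their period-two solutions. Moreover, for any δ > 0 one can choose μ₀ > 0, N = (−p, p), and M(μ) = (q⁻(μ), q⁺(μ)) so that (1 − δ)p < |q⁻(μ)| < (1 + δ)p and (1 − δ)p < |q⁺(μ)| < (1 + δ)p for all μ ∈ (−μ₀, μ₀). -/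

import Mathlib

/-- The piecewise-smooth family: `f(x;μ) = f_L(x;μ)` for `x ≤ 0` and `f_R(x;μ)` for `x > 0`
(these agree when the continuity condition `f_L(0;μ) = f_R(0;μ)` holds). -/
noncomputable def pwFam (fL fR : ℝ → ℝ → ℝ) (μ : ℝ) : ℝ → ℝ :=
  fun x => if x ≤ 0 then fL x μ else fR x μ

/-- The extended normal form `g(y; ν, s_L, s_R, t)`. -/
noncomputable def enf (ν sL sR t : ℝ) : ℝ → ℝ :=
  fun y => if y ≤ 0 then ν + sL * y + t * y ^ 2 else ν + sR * y

/-- `h` is a `C¹` diffeomorphism from `U` onto `V`. -/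
def IsDiffeoOn (h : ℝ → ℝ) (U V : Set ℝ) : Prop :=
  Set.BijOn h U V ∧ ContDiffOn ℝ 1 h U ∧
    ∃ hinv : ℝ → ℝ, Set.InvOn hinv h U V ∧ ContDiffOn ℝ 1 hinv V

/-- `h` intertwines `f` and `g` on `U`: `h (f x) = g (h x)` for all `x ∈ U` with `f x ∈ U`. -/
def ConjRelOn (h f g : ℝ → ℝ) (U : Set ℝ) : Prop :=
  ∀ x ∈ U, f x ∈ U → h (f x) = g (h x)

/-- `f` on `U` is differentiably conjugate to `g` on `V`. -/
def DiffConjOn (f g : ℝ → ℝ) (U V : Set ℝ) : Prop :=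
  ∃ h : ℝ → ℝ, IsDiffeoOn h U V ∧ ConjRelOn h f g U

/-- The basin of repulsion within `N` of an unstable fixed point `p` of `F`:
points admitting a backward orbit in `N` converging to `p`. -/
def basinRep (F : ℝ → ℝ) (N : Set ℝ) (p : ℝ) : Set ℝ :=
  {x ∈ N | ∃ u : ℕ → ℝ, u 0 = x ∧ (∀ n, u n ∈ N) ∧ (∀ n, F (u (n + 1)) = u n) ∧
    Filter.Tendsto u Filter.atTop (nhds p)}

/-- The basin of attraction within `N` of a stable period-two solution `{p, q}` of `F`:
points whose forward orbit stays in `N` and whose even iterates converge to `p` or to `q`. -/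
def basinAttr2 (F : ℝ → ℝ) (N : Set ℝ) (p q : ℝ) : Set ℝ :=
  {x ∈ N | (∀ n : ℕ, F^[n] x ∈ N) ∧
    (Filter.Tendsto (fun n => F^[2 * n] x) Filter.atTop (nhds p) ∨
     Filter.Tendsto (fun n => F^[2 * n] x) Filter.atTop (nhds q))}

/-- The conclusions (i)–(ii) of Theorem 2.3, for the data `(μ₀, s_L, s_R, t, N, M)`:
writing `g̃(y;μ) = g(y; ν(μ), s_L(μ), s_R(μ), t(μ))` with `ν(μ) = f(0;μ) = f_L(0;μ)`,
(i) for `μ ∈ (−μ₀,0]`, `f` on `N` and `g̃` on `M(μ)` are differentiably conjugate;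
(ii) for `μ ∈ (0,μ₀)`, `f` has an unstable fixed point `x_R > 0` and a stable period-two
solution `{u_L, u_R}` in `N`, `g̃` has an unstable fixed point `y_R > 0` and a stable
period-two solution `{v_L, v_R}` in `M(μ)`, and `f` on `N` and `g̃` on `M(μ)` are
differentiably conjugate on the basins of repulsion of their fixed points and on the basins
of attraction of their period-two solutions. -/
def PdConclusion (fL fR : ℝ → ℝ → ℝ) (μ₀ : ℝ) (sL sR t : ℝ → ℝ)
    (N : Set ℝ) (M : ℝ → Set ℝ) : Prop :=
  (∀ μ ∈ Set.Ioo (-μ₀) μ₀, IsOpen (M μ) ∧ (0:ℝ) ∈ M μ) ∧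
  (∀ μ ∈ Set.Ioc (-μ₀) 0,
    DiffConjOn (pwFam fL fR μ) (enf (fL 0 μ) (sL μ) (sR μ) (t μ)) N (M μ)) ∧
  (∀ μ ∈ Set.Ioo 0 μ₀,
    ∃ xR uL uR yR vL vR : ℝ,
      0 < xR ∧ xR ∈ N ∧ pwFam fL fR μ xR = xR ∧
      1 < |deriv (pwFam fL fR μ) xR| ∧
      uL < 0 ∧ xR < uR ∧ uL ∈ N ∧ uR ∈ N ∧ uL ≠ uR ∧
      pwFam fL fR μ uL = uR ∧ pwFam fL fR μ uR = uL ∧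
      |deriv (pwFam fL fR μ) uL * deriv (pwFam fL fR μ) uR| < 1 ∧
      0 < yR ∧ yR ∈ M μ ∧ enf (fL 0 μ) (sL μ) (sR μ) (t μ) yR = yR ∧
      1 < |deriv (enf (fL 0 μ) (sL μ) (sR μ) (t μ)) yR| ∧
      vL < 0 ∧ yR < vR ∧ vL ∈ M μ ∧ vR ∈ M μ ∧ vL ≠ vR ∧
      enf (fL 0 μ) (sL μ) (sR μ) (t μ) vL = vR ∧
      enf (fL 0 μ) (sL μ) (sR μ) (t μ) vR = vL ∧
      |deriv (enf (fL 0 μ) (sL μ) (sR μ) (t μ)) vL *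
        deriv (enf (fL 0 μ) (sL μ) (sR μ) (t μ)) vR| < 1 ∧
      DiffConjOn (pwFam fL fR μ) (enf (fL 0 μ) (sL μ) (sR μ) (t μ))
        (basinRep (pwFam fL fR μ) N xR)
        (basinRep (enf (fL 0 μ) (sL μ) (sR μ) (t μ)) (M μ) yR) ∧
      DiffConjOn (pwFam fL fR μ) (enf (fL 0 μ) (sL μ) (sR μ) (t μ))
        (basinAttr2 (pwFam fL fR μ) N uL uR)
        (basinAttr2 (enf (fL 0 μ) (sL μ) (sR μ) (t μ)) (M μ) vL vR))


open Set Filter Topology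


lemma mvt_glob {F F' : ℝ → ℝ} (hF : ∀ x, HasDerivAt F (F' x) x) {x y : ℝ} (h : x < y) :
    ∃ ξ ∈ Ioo x y, F y - F x = F' ξ * (y - x) := by
  obtain ⟨ξ, hξ, he⟩ := exists_hasDerivAt_eq_slope F F' h
    (fun z _ => (hF z).continuousAt.continuousWithinAt) (fun z _ => hF z)
  refine ⟨ξ, hξ, ?_⟩
  have : y - x ≠ 0 := by linarith
  rw [he]; field_simp

lemma lip_glob {F F' : ℝ → ℝ} (hF : ∀ x, HasDerivAt F (F' x) x) {θ : ℝ}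
    (hθ : ∀ x, |F' x| ≤ θ) (x y : ℝ) : |F x - F y| ≤ θ * |x - y| := by
  have := Convex.norm_image_sub_le_of_norm_hasDerivWithin_le (f := F) (f' := F') (C := θ)
    (s := univ) (x := y) (y := x) (fun z _ => (hF z).hasDerivWithinAt)
    (fun z _ => by simpa using hθ z) convex_univ (mem_univ _) (mem_univ _)
  simpa using this

lemma iter_contr {F : ℝ → ℝ} {xs θ : ℝ} (h0 : 0 ≤ θ) (hfix : F xs = xs)
    (h : ∀ x, |F x - xs| ≤ θ * |x - xs|) (x : ℝ) (n : ℕ) :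
    |F^[n] x - xs| ≤ θ ^ n * |x - xs| := by
  induction n with
  | zero => simp
  | succ n ih =>
    rw [Function.iterate_succ_apply']
    calc _ ≤ θ * |F^[n] x - xs| := h _
      _ ≤ θ * (θ ^ n * |x - xs|) := by gcongr
      _ = _ := by ring

lemma tendsto_contr {F : ℝ → ℝ} {xs θ : ℝ} (h0 : 0 ≤ θ) (h1 : θ < 1) (hfix : F xs = xs)
    (h : ∀ x, |F x - xs| ≤ θ * |x - xs|) (x : ℝ) :
    Tendsto (fun n => F^[n] x) atTop (𝓝 xs) := by
  rw [tendsto_iff_norm_sub_tendsto_zero]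
  have : Tendsto (fun n : ℕ => θ ^ n * |x - xs|) atTop (𝓝 0) := by
    simpa using (tendsto_pow_atTop_nhds_zero_of_lt_one h0 h1).mul_const (|x - xs|)
  exact squeeze_zero (fun _ => norm_nonneg _) (fun n => iter_contr h0 hfix h x n) this

lemma strictMono_of_pos {Φ ψ : ℝ → ℝ} (h : ∀ x, HasDerivAt Φ (ψ x) x) (hp : ∀ x, 0 < ψ x) :
    StrictMono Φ :=
  strictMono_of_deriv_pos (fun x => by rw [(h x).deriv]; exact hp x)

lemma cont_of_deriv {Φ ψ : ℝ → ℝ} (h : ∀ x, HasDerivAt Φ (ψ x) x) : Continuous Φ :=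
  continuous_iff_continuousAt.2 fun x => (h x).continuousAt

lemma lin_exists (F φ : ℝ → ℝ) (e xs C κ : ℝ) (he : |e| = 1)
    (hF : ∀ x, HasDerivAt F (e * Real.exp (φ x)) x)
    (hC : ∀ x y, |φ x - φ y| ≤ C * |x - y|) (hκ : 0 < κ) (hφ : ∀ x, φ x ≤ -κ)
    (hfix : F xs = xs) (hsurj : Function.Surjective F) :
    ∃ Φ ψ : ℝ → ℝ, (∀ x, HasDerivAt Φ (ψ x) x) ∧ Continuous ψ ∧ (∀ x, 0 < ψ x) ∧
      Φ xs = 0 ∧ ψ xs = 1 ∧ (∀ x, Φ (F x) = e * Real.exp (φ xs) * Φ x) ∧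
      Function.Surjective Φ := by
  set θ := Real.exp (-κ) with hθ
  have h0 : 0 ≤ θ := (Real.exp_pos _).le
  have h1 : θ < 1 := by rw [hθ]; simpa using hκ
  have hC0 : 0 ≤ C := by
    have := hC 1 0
    simp at this
    exact (abs_nonneg _).trans this
  have hcontr : ∀ x, |F x - xs| ≤ θ * |x - xs| := by
    intro x
    have := lip_glob hF (θ := θ) (fun x => by
      rw [abs_mul, he, one_mul, abs_of_pos (Real.exp_pos _)]
      exact Real.exp_le_exp.2 (hφ x)) x xs
    rwa [hfix] at this
  have hφc : Continuous φ := by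
    have : LipschitzWith (Real.toNNReal C) φ := LipschitzWith.of_dist_le_mul (fun x y => by
      rw [Real.dist_eq, Real.dist_eq, Real.coe_toNNReal _ hC0]; exact hC x y)
    exact this.continuous
  have hFc : Continuous F := cont_of_deriv hF
  let u : ℕ → ℝ → ℝ := fun k x => φ (F^[k] x) - φ xs
  have hu : ∀ k x, |u k x| ≤ C * (θ ^ k * |x - xs|) := fun k x =>
    (hC _ _).trans (mul_le_mul_of_nonneg_left (iter_contr h0 hfix hcontr x k) hC0)
  have hsum : ∀ R : ℝ, Summable (fun k : ℕ => C * (θ ^ k * R)) := fun R =>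
    ((summable_geometric_of_lt_one h0 h1).mul_right R).mul_left C
  have hsumu : ∀ x, Summable (fun k => u k x) := fun x =>
    Summable.of_norm_bounded (hsum |x - xs|) (fun k => hu k x)
  let σ : ℝ → ℝ := fun x => ∑' k, u k x
  have hσc : Continuous σ := by
    rw [continuous_iff_continuousAt]
    intro x
    have hR : ContinuousOn σ (Metric.ball xs (|x - xs| + 1)) := by
      refine continuousOn_tsum (fun k => ?_) (hsum (|x - xs| + 1)) (fun k y hy => ?_)
      · exact ((hφc.comp (hFc.iterate k)).sub continuous_const).continuousOn
      · rw [Metric.mem_ball, Real.dist_eq] at hy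
        refine (hu k y).trans ?_
        gcongr
    exact hR.continuousAt (Metric.isOpen_ball.mem_nhds (by
      rw [Metric.mem_ball, Real.dist_eq]; linarith))
  have hσF : ∀ x, σ x = φ x - φ xs + σ (F x) := by
    intro x
    have := (hsumu x).tsum_eq_zero_add
    simpa [σ, u] using this
  have hiter : ∀ k : ℕ, F^[k] xs = xs := fun k => Function.iterate_fixed hfix k
  have hσ0 : σ xs = 0 := by simp [σ, u, hiter]
  let ψ : ℝ → ℝ := fun x => Real.exp (σ x)
  have hψc : Continuous ψ := Real.continuous_exp.comp hσc
  let Φ : ℝ → ℝ := fun x => ∫ s in xs..x, ψ s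
  have hΦ : ∀ x, HasDerivAt Φ (ψ x) x := fun x =>
    intervalIntegral.integral_hasDerivAt_right (hψc.intervalIntegrable _ _)
      hψc.aestronglyMeasurable.stronglyMeasurableAtFilter hψc.continuousAt
  have hψp : ∀ x, 0 < ψ x := fun x => Real.exp_pos _
  have hΦ0 : Φ xs = 0 := by simp [Φ]
  set lam := e * Real.exp (φ xs) with hlam
  have hΦF : ∀ x, Φ (F x) = lam * Φ x := by
    have hd : ∀ x, HasDerivAt (fun x => Φ (F x) - lam * Φ x) 0 x := by
      intro x
      have h1 := ((hΦ (F x)).comp x (hF x)).sub ((hΦ x).const_mul lam)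
      have key : ψ (F x) * (e * Real.exp (φ x)) - lam * ψ x = 0 := by
        have e1 : ψ x = Real.exp (φ x) / Real.exp (φ xs) * ψ (F x) := by
          change Real.exp (σ x) = _ * Real.exp (σ (F x))
          rw [hσF x, Real.exp_add, Real.exp_sub]
        rw [e1, hlam]
        field_simp
        ring
      rw [key] at h1
      exact h1
    intro x
    have := is_const_of_deriv_eq_zero (fun x => (hd x).differentiableAt)
      (fun x => (hd x).deriv) x xs
    simp only [hfix, hΦ0] at this
    linarith
  have hlam1 : |lam| < 1 := by
    rw [hlam, abs_mul, he, one_mul, abs_of_pos (Real.exp_pos _), Real.exp_lt_one_iff]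
    linarith [hφ xs]
  have hlam0 : lam ≠ 0 := by
    rw [← abs_pos, hlam, abs_mul, he, one_mul]; positivity
  refine ⟨Φ, ψ, hΦ, hψc, hψp, hΦ0, by simp [ψ, hσ0], hΦF, ?_⟩
  have hmono := strictMono_of_pos hΦ hψp
  have hrange : ∀ n : ℕ, ∀ x, ∃ x', Φ x = (lam ^ 2) ^ n * Φ x' := by
    intro n
    induction n with
    | zero => intro x; exact ⟨x, by simp⟩
    | succ n ih =>
      intro x
      obtain ⟨x', hx'⟩ := ih x
      obtain ⟨y, rfl⟩ := hsurj x'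
      obtain ⟨z, rfl⟩ := hsurj y
      refine ⟨z, ?_⟩
      rw [hx', hΦF, hΦF]; ring
  have hl2 : 0 < lam ^ 2 := by positivity
  have hl21 : lam ^ 2 < 1 := by rw [sq_lt_one_iff_abs_lt_one]; exact hlam1
  intro y
  have hp : 0 < Φ (xs + 1) := by rw [← hΦ0]; exact hmono (by linarith)
  have hn : Φ (xs - 1) < 0 := by rw [← hΦ0]; exact hmono (by linarith)
  have ht := tendsto_pow_atTop_nhds_zero_of_lt_one hl2.le hl21
  have e1 : ∀ᶠ n : ℕ in atTop, (lam ^ 2) ^ n * y < Φ (xs + 1) := by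
    have := ht.mul_const y
    rw [zero_mul] at this
    exact this.eventually_lt_const hp
  have e2 : ∀ᶠ n : ℕ in atTop, Φ (xs - 1) < (lam ^ 2) ^ n * y := by
    have := ht.mul_const y
    rw [zero_mul] at this
    exact this.eventually_const_lt hn
  obtain ⟨n, hn1, hn2⟩ := (e1.and e2).exists
  obtain ⟨a, ha⟩ := hrange n (xs + 1)
  obtain ⟨b, hb⟩ := hrange n (xs - 1)
  rw [ha] at hn1
  rw [hb] at hn2
  have hpow : 0 < (lam ^ 2) ^ n := by positivity
  have h3 : y < Φ a := lt_of_mul_lt_mul_left hn1 hpow.le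
  have h4 : Φ b < y := lt_of_mul_lt_mul_left hn2 hpow.le
  exact mem_range_of_exists_le_of_exists_ge (cont_of_deriv hΦ) ⟨b, h4.le⟩ ⟨a, h3.le⟩

/-- conjugacy of two smooth contractions with the same multiplier -/
lemma conj_exists (F φ G γ : ℝ → ℝ) (e xs ys C κ : ℝ) (he : |e| = 1)
    (hF : ∀ x, HasDerivAt F (e * Real.exp (φ x)) x)
    (hG : ∀ x, HasDerivAt G (e * Real.exp (γ x)) x)
    (hC : ∀ x y, |φ x - φ y| ≤ C * |x - y|) (hC' : ∀ x y, |γ x - γ y| ≤ C * |x - y|)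
    (hκ : 0 < κ) (hφ : ∀ x, φ x ≤ -κ) (hγ : ∀ x, γ x ≤ -κ)
    (hfix : F xs = xs) (hfix' : G ys = ys) (hsurj : Function.Surjective F)
    (hsurj' : Function.Surjective G) (hmul : φ xs = γ ys)
    (hs : (0 < xs ∧ 0 < ys) ∨ (xs < 0 ∧ ys < 0) ∨ (xs = 0 ∧ ys = 0)) :
    ∃ h k : ℝ → ℝ, (∀ x, HasDerivAt h (k x) x) ∧ Continuous k ∧ (∀ x, 0 < k x) ∧
      h 0 = 0 ∧ (xs = 0 → k 0 = 1) ∧ (∀ x, h (F x) = G (h x)) ∧ Function.Surjective h ∧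
      h xs = ys := by
  obtain ⟨Φ, ψ, hΦ, hψc, hψp, hΦ0, hψ1, hΦF, hΦs⟩ :=
    lin_exists F φ e xs C κ he hF hC hκ hφ hfix hsurj
  obtain ⟨Ψ, χ, hΨ, hχc, hχp, hΨ0, hχ1, hΨF, hΨs⟩ :=
    lin_exists G γ e ys C κ he hG hC' hκ hγ hfix' hsurj'
  have hm1 := strictMono_of_pos hΦ hψp
  have hm2 := strictMono_of_pos hΨ hχp
  obtain ⟨c, hc, hc0, hc1⟩ : ∃ c : ℝ, 0 < c ∧ c * Φ 0 = Ψ 0 ∧ (xs = 0 → c = 1) := by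
    rcases hs with ⟨h1, h2⟩ | ⟨h1, h2⟩ | ⟨h1, h2⟩
    · have a1 := hm1 h1
      have a2 := hm2 h2
      rw [hΦ0] at a1; rw [hΨ0] at a2
      exact ⟨Ψ 0 / Φ 0, div_pos_of_neg_of_neg a2 a1, div_mul_cancel₀ _ a1.ne, fun h => by linarith⟩
    · have a1 := hm1 h1
      have a2 := hm2 h2
      rw [hΦ0] at a1; rw [hΨ0] at a2
      exact ⟨Ψ 0 / Φ 0, div_pos a2 a1, div_mul_cancel₀ _ a1.ne', fun h => by linarith⟩
    · refine ⟨1, one_pos, ?_, fun _ => rfl⟩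
      rw [h1] at hΦ0; rw [h2] at hΨ0
      rw [hΦ0, hΨ0]; simp
  let E : ℝ ≃o ℝ := hm2.orderIsoOfSurjective Ψ hΨs
  have hE : ∀ y, Ψ (E.symm y) = y := fun y => E.apply_symm_apply y
  have hE' : ∀ y, E.symm (Ψ y) = y := fun y => E.symm_apply_apply y
  have hEd : ∀ y, HasDerivAt E.symm (χ (E.symm y))⁻¹ y := fun y =>
    HasDerivAt.of_local_left_inverse (f := Ψ) E.symm.continuous.continuousAt (hΨ _) (hχp _).ne'
      (Eventually.of_forall hE)
  refine ⟨fun x => E.symm (c * Φ x), fun x => (χ (E.symm (c * Φ x)))⁻¹ * (c * ψ x), ?_, ?_, ?_, ?_,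
    ?_, ?_, ?_, ?_⟩
  · intro x
    exact (hEd (c * Φ x)).comp x ((hΦ x).const_mul c)
  · have c1 : Continuous (fun x => χ (E.symm (c * Φ x))) :=
      hχc.comp (E.symm.continuous.comp (continuous_const.mul (cont_of_deriv hΦ)))
    exact (c1.inv₀ (fun x => (hχp _).ne')).mul (continuous_const.mul hψc)
  · intro x
    have := hχp (E.symm (c * Φ x))
    have := hψp x
    positivity
  · simp only [hc0, hE']
  · intro h
    have hy : ys = 0 := by rcases hs with h' | h' | h' <;> [linarith; linarith; exact h'.2]
    simp only [hc0, hE']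
    rw [hc1 h]
    rw [h] at hψ1; rw [hy] at hχ1
    rw [hψ1, hχ1]; simp
  · intro x
    apply hm2.injective
    rw [hE, hΨF, hE, hΦF, hmul]; ring
  · intro y
    obtain ⟨x, hx⟩ := hΦs (Ψ y / c)
    refine ⟨x, ?_⟩
    simp only [hx]
    rw [mul_div_cancel₀ _ hc.ne', hE']
  · simp only [hΦ0, mul_zero]
    rw [← hΨ0, hE']



lemma contDiffAt_glue {h u v : ℝ → ℝ} {c : ℝ} (hu : ContDiffAt ℝ 1 u c) (hv : ContDiffAt ℝ 1 v c)
    (hd : deriv u c = deriv v c)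
    (he : ∀ᶠ x in 𝓝 c, (x ≤ c → h x = u x) ∧ (c ≤ x → h x = v x)) :
    ContDiffAt ℝ 1 h c ∧ deriv h c = deriv u c := by
  have e1 := hu.eventually (by simp)
  have e2 := hv.eventually (by simp)
  obtain ⟨ε, hε, hB⟩ := Metric.eventually_nhds_iff_ball.1 (e1.and (e2.and he))
  set B := Metric.ball c ε with hBdef
  have hBo : IsOpen B := Metric.isOpen_ball
  have hcB : c ∈ B := Metric.mem_ball_self hε
  have hmin : ∀ x ∈ B, min x c ∈ B := fun x hx => by
    rcases min_choice x c with h | h <;> rw [h] <;> assumption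
  have hmax : ∀ x ∈ B, max x c ∈ B := fun x hx => by
    rcases max_choice x c with h | h <;> rw [h] <;> assumption
  have cu : ContinuousOn (deriv u) B := fun x hx =>
    (((hB x hx).1).derivWithin (m := 0) (by simp)).continuousAt.continuousWithinAt
  have cv : ContinuousOn (deriv v) B := fun x hx =>
    (((hB x hx).2.1).derivWithin (m := 0) (by simp)).continuousAt.continuousWithinAt
  have du : ∀ x ∈ B, HasDerivAt u (deriv u x) x := fun x hx =>
    ((hB x hx).1.differentiableAt (by simp)).hasDerivAt
  have dv : ∀ x ∈ B, HasDerivAt v (deriv v x) x := fun x hx =>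
    ((hB x hx).2.1.differentiableAt (by simp)).hasDerivAt
  let w : ℝ → ℝ := fun x => deriv u (min x c) + deriv v (max x c) - deriv u c
  have wc : ContinuousOn w B := by
    refine ContinuousOn.sub (ContinuousOn.add ?_ ?_) continuousOn_const
    · exact cu.comp (by fun_prop) hmin
    · exact cv.comp (by fun_prop) hmax
  have wd : ∀ x ∈ B, HasDerivAt h (w x) x := by
    intro x hx
    rcases lt_trichotomy x c with hxc | hxc | hxc
    · have : w x = deriv u x := by simp [w, min_eq_left hxc.le, max_eq_right hxc.le, hd]
      rw [this]
      refine (du x hx).congr_of_eventuallyEq ?_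
      filter_upwards [hBo.mem_nhds hx, Iio_mem_nhds hxc] with y hy hyc
      exact (hB y hy).2.2.1 (le_of_lt hyc)
    · subst hxc
      have : w x = deriv u x := by simp [w, hd]
      rw [this]
      have h1 : HasDerivWithinAt h (deriv u x) (Iic x) x := by
        refine (du x hx).hasDerivWithinAt.congr_of_eventuallyEq ?_ ((hB x hx).2.2.1 le_rfl)
        filter_upwards [nhdsWithin_le_nhds (hBo.mem_nhds hx), self_mem_nhdsWithin] with y hy hyc
        exact (hB y hy).2.2.1 hyc
      have h2 : HasDerivWithinAt h (deriv u x) (Ici x) x := by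
        rw [hd]
        refine (dv x hx).hasDerivWithinAt.congr_of_eventuallyEq ?_ ((hB x hx).2.2.2 le_rfl)
        filter_upwards [nhdsWithin_le_nhds (hBo.mem_nhds hx), self_mem_nhdsWithin] with y hy hyc
        exact (hB y hy).2.2.2 hyc
      have := h1.union h2
      rwa [Iic_union_Ici, hasDerivWithinAt_univ] at this
    · have : w x = deriv v x := by simp [w, min_eq_right hxc.le, max_eq_left hxc.le]
      rw [this]
      refine (dv x hx).congr_of_eventuallyEq ?_
      filter_upwards [hBo.mem_nhds hx, Ioi_mem_nhds hxc] with y hy hyc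
      exact (hB y hy).2.2.2 (le_of_lt hyc)
  constructor
  · rw [contDiffAt_one_iff]
    refine ⟨fun x => ContinuousLinearMap.toSpanSingleton ℝ (w x), B, hBo.mem_nhds hcB, ?_,
      fun x hx => (wd x hx).hasFDerivAt⟩
    exact (ContinuousLinearMap.toSpanSingletonLE ℝ ℝ ℝ).toLinearMap.continuous_of_finiteDimensional.comp_continuousOn wc
  · rw [(wd c hcB).deriv]; simp [w, hd]

structure Kink (c : ℝ) (f fL fR : ℝ ≃ₜ ℝ) : Prop where
  left : ∀ x, x ≤ c → f x = fL x
  right : ∀ x, c ≤ x → f x = fR x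
  cL : ContDiff ℝ 1 fL
  cR : ContDiff ℝ 1 fR
  dL : ∀ x, deriv fL x < 0
  dR : ∀ x, deriv fR x < 0
  anti : StrictAnti f

lemma homeo_symm_smooth {f : ℝ ≃ₜ ℝ} (c : ContDiff ℝ 1 f) (d : ∀ x, deriv f x < 0) :
    ContDiff ℝ 1 f.symm ∧ ∀ y, HasDerivAt f.symm (deriv f (f.symm y))⁻¹ y := by
  have hd : ∀ x, HasDerivAt f (deriv f x) x := fun x =>
    (c.differentiable (by simp) x).hasDerivAt
  refine ⟨f.contDiff_symm_deriv (fun x => (d x).ne) hd c, fun y => ?_⟩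
  exact HasDerivAt.of_local_left_inverse f.symm.continuous.continuousAt (hd _) (d _).ne
    (Eventually.of_forall fun z => f.apply_symm_apply z)

lemma Kink.symm {c : ℝ} {f fL fR : ℝ ≃ₜ ℝ} (K : Kink c f fL fR) :
    Kink (f c) f.symm fR.symm fL.symm := by
  have hanti : StrictAnti f.symm := by
    intro x y hxy
    by_contra hcon
    push Not at hcon
    have := K.anti.antitone hcon
    simp at this
    linarith
  refine ⟨fun x hx => ?_, fun x hx => ?_, (homeo_symm_smooth K.cR K.dR).1,
    (homeo_symm_smooth K.cL K.dL).1, fun x => ?_, fun x => ?_, hanti⟩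
  · rw [Homeomorph.eq_symm_apply, ← K.right]
    · simp
    · have := hanti.antitone hx; simpa using this
  · rw [Homeomorph.eq_symm_apply, ← K.left]
    · simp
    · have := hanti.antitone hx; simpa using this
  · rw [((homeo_symm_smooth K.cR K.dR).2 x).deriv]; exact inv_lt_zero.2 (K.dR _)
  · rw [((homeo_symm_smooth K.cL K.dL).2 x).deriv]; exact inv_lt_zero.2 (K.dL _)

lemma pull_smooth {f g : ℝ ≃ₜ ℝ} (cf : ContDiff ℝ 1 f) (df : ∀ x, deriv f x < 0)
    (cg : ContDiff ℝ 1 g) (dg : ∀ x, deriv g x < 0) {h : ℝ → ℝ} {y : ℝ}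
    (hh : ContDiffAt ℝ 1 h (f y)) :
    ContDiffAt ℝ 1 (fun x => g.symm (h (f x))) y ∧
    deriv (fun x => g.symm (h (f x))) y =
      (deriv g (g.symm (h (f y))))⁻¹ * (deriv h (f y) * deriv f y) := by
  constructor
  · exact (homeo_symm_smooth cg dg).1.contDiffAt.comp y (hh.comp y cf.contDiffAt)
  · exact (((homeo_symm_smooth cg dg).2 (h (f y))).comp y
      (((hh.differentiableAt (by simp)).hasDerivAt).comp y
        (cf.differentiable (by simp) y).hasDerivAt)).deriv

lemma pull_back {c : ℝ} {f fL fR g gL gR : ℝ ≃ₜ ℝ} (K : Kink c f fL fR) (K' : Kink c g gL gR)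
    (hr : deriv fL c * deriv gR c = deriv fR c * deriv gL c) {h : ℝ → ℝ} {y : ℝ}
    (hc : ∀ᶠ x in 𝓝 y, h (f x) = g (h x))
    (hs : ∀ᶠ x in 𝓝 y, (x ≤ c → h x ≤ c) ∧ (c ≤ x → c ≤ h x))
    (hh : ContDiffAt ℝ 1 h (f y)) (hp : 0 < deriv h (f y)) :
    ContDiffAt ℝ 1 h y ∧ 0 < deriv h y := by
  have eL : ∀ᶠ x in 𝓝 y, x ≤ c → h x = gL.symm (h (fL x)) := by
    filter_upwards [hc, hs] with x h1 h2 hx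
    rw [Homeomorph.eq_symm_apply, ← K'.left _ (h2.1 hx), ← K.left _ hx, h1]
  have eR : ∀ᶠ x in 𝓝 y, c ≤ x → h x = gR.symm (h (fR x)) := by
    filter_upwards [hc, hs] with x h1 h2 hx
    rw [Homeomorph.eq_symm_apply, ← K'.right _ (h2.2 hx), ← K.right _ hx, h1]
  have posL : ∀ z w a, 0 < a → 0 < (deriv gL z)⁻¹ * (a * deriv fL w) := fun z w a ha =>
    mul_pos_of_neg_of_neg (inv_lt_zero.2 (K'.dL _)) (mul_neg_of_pos_of_neg ha (K.dL _))
  have posR : ∀ z w a, 0 < a → 0 < (deriv gR z)⁻¹ * (a * deriv fR w) := fun z w a ha =>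
    mul_pos_of_neg_of_neg (inv_lt_zero.2 (K'.dR _)) (mul_neg_of_pos_of_neg ha (K.dR _))
  rcases lt_trichotomy y c with hy | hy | hy
  · rw [K.left _ hy.le] at hh hp
    obtain ⟨p1, p2⟩ := pull_smooth K.cL K.dL K'.cL K'.dL hh
    have ee : h =ᶠ[𝓝 y] fun x => gL.symm (h (fL x)) := by
      filter_upwards [eL, Iio_mem_nhds hy] with x h1 h2 using h1 (le_of_lt h2)
    refine ⟨p1.congr_of_eventuallyEq ee, ?_⟩
    rw [ee.deriv_eq, p2]
    exact posL _ _ _ hp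
  · subst hy
    have hfL : f y = fL y := K.left _ le_rfl
    have hfR : f y = fR y := K.right _ le_rfl
    have hyy : h y = y := le_antisymm (hs.self_of_nhds.1 le_rfl) (hs.self_of_nhds.2 le_rfl)
    obtain ⟨p1, p2⟩ := pull_smooth (h := h) (y := y) K.cL K.dL K'.cL K'.dL (by rwa [← hfL])
    obtain ⟨q1, q2⟩ := pull_smooth (h := h) (y := y) K.cR K.dR K'.cR K'.dR (by rwa [← hfR])
    have e1 : gL.symm (h (fL y)) = y := by rw [← eL.self_of_nhds le_rfl, hyy]
    have e2 : gR.symm (h (fR y)) = y := by rw [← eR.self_of_nhds le_rfl, hyy]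
    rw [e1, ← hfL] at p2
    rw [e2, ← hfR] at q2
    have := contDiffAt_glue p1 q1 (by
      rw [p2, q2]
      have n1 := (K'.dL y).ne
      have n2 := (K'.dR y).ne
      field_simp
      linear_combination hr) (eL.and eR)
    refine ⟨this.1, ?_⟩
    rw [this.2, p2]
    exact posL _ _ _ hp
  · rw [K.right _ hy.le] at hh hp
    obtain ⟨p1, p2⟩ := pull_smooth K.cR K.dR K'.cR K'.dR hh
    have ee : h =ᶠ[𝓝 y] fun x => gR.symm (h (fR x)) := by
      filter_upwards [eR, Ioi_mem_nhds hy] with x h1 h2 using h1 (le_of_lt h2)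
    refine ⟨p1.congr_of_eventuallyEq ee, ?_⟩
    rw [ee.deriv_eq, p2]
    exact posR _ _ _ hp

lemma iter_mapsTo {f : ℝ → ℝ} {W : Set ℝ} (hW : MapsTo f W W) {x : ℝ} {n m : ℕ} (hnm : n ≤ m)
    (hx : f^[n] x ∈ W) : f^[m] x ∈ W := by
  obtain ⟨j, rfl⟩ := Nat.exists_eq_add_of_le hnm
  rw [add_comm, Function.iterate_add_apply]
  exact hW.iterate j hx

lemma anti_iter_lt {f g : ℝ ≃ₜ ℝ} (hf : StrictAnti f) (hg : StrictAnti g) (h0 : ℝ → ℝ)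
    (W : Set ℝ) (hm : StrictMonoOn h0 W) (n : ℕ) : ∀ x y a b : ℝ, x < y → f^[n] x ∈ W → f^[n] y ∈ W →
    g^[n] a = h0 (f^[n] x) → g^[n] b = h0 (f^[n] y) → a < b := by
  have key : ∀ n : ℕ, ∀ x y a b : ℝ, ((f^[n] x < f^[n] y ↔ x < y) ∧ (g^[n] a < g^[n] b ↔ a < b)) ∨
      ((f^[n] x < f^[n] y ↔ y < x) ∧ (g^[n] a < g^[n] b ↔ b < a)) := by
    intro n
    induction n with
    | zero => intros; left; simp
    | succ n ih =>
      intro x y a b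
      rw [Function.iterate_succ_apply', Function.iterate_succ_apply',
        Function.iterate_succ_apply', Function.iterate_succ_apply', hf.lt_iff_gt, hg.lt_iff_gt]
      rcases ih y x b a with h | h
      · right; exact h
      · left; exact h
  intro x y a b hxy hx hy ha hb
  rcases key n x y a b with ⟨h1, h2⟩ | ⟨h1, h2⟩
  · rw [← h2, ha, hb]; exact hm hx hy (h1.2 hxy)
  · rcases key n y x b a with ⟨h3, h4⟩ | ⟨h3, h4⟩
    · exfalso
      rcases lt_trichotomy (f^[n] x) (f^[n] y) with h | h | h
      · exact lt_asymm hxy (h1.1 h)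
      · have := (f.injective.iterate n) h; linarith
      · exact lt_asymm hxy (h3.1 h)
    · rw [← h4, ha, hb]; exact hm hy hx (h3.2 hxy)

lemma ext_conj {c : ℝ} {f fL fR g gL gR : ℝ ≃ₜ ℝ} (K : Kink c f fL fR) (K' : Kink c g gL gR)
    (hr : deriv fL c * deriv gR c = deriv fR c * deriv gL c) {h0 : ℝ → ℝ} {W : Set ℝ}
    (hWo : IsOpen W) (hW : MapsTo f W W) (hconj : ∀ x ∈ W, h0 (f x) = g (h0 x))
    (hsm : ∀ x ∈ W, ContDiffAt ℝ 1 h0 x ∧ 0 < deriv h0 x) (hm : StrictMonoOn h0 W)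
    {n0 : ℕ} (hn0 : f^[n0] c ∈ W) (hc0 : h0 (f^[n0] c) = g^[n0] c) :
    ∃ h : ℝ → ℝ, EqOn h h0 W ∧ (∀ x, (∃ n, f^[n] x ∈ W) → h (f x) = g (h x)) ∧
      (∀ x, (∃ n, f^[n] x ∈ W) → ContDiffAt ℝ 1 h x ∧ 0 < deriv h x) ∧
      StrictMonoOn h {x | ∃ n, f^[n] x ∈ W} ∧ h c = c ∧
      h '' {x | ∃ n, f^[n] x ∈ W} = {y | ∃ n, g^[n] y ∈ h0 '' W} := by
  classical
  have gi : ∀ n : ℕ, ∀ y, g^[n] (g.symm^[n] y) = y := fun n y =>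
    Function.LeftInverse.iterate (fun z => g.apply_symm_apply z) n y
  have gij : ∀ n : ℕ, Function.Injective g^[n] := fun n => g.injective.iterate n
  let h : ℝ → ℝ := fun x => if hx : ∃ n, f^[n] x ∈ W then
    g.symm^[Nat.find hx] (h0 (f^[Nat.find hx] x)) else x
  have conjn : ∀ j : ℕ, ∀ x ∈ W, h0 (f^[j] x) = g^[j] (h0 x) := by
    intro j
    induction j with
    | zero => intros; rfl
    | succ j ih =>
      intro x hx
      rw [Function.iterate_succ_apply', Function.iterate_succ_apply',
        hconj _ (hW.iterate j hx), ih x hx]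
  have hchar : ∀ x n, f^[n] x ∈ W → g^[n] (h x) = h0 (f^[n] x) := by
    intro x n hn
    have hx : ∃ n, f^[n] x ∈ W := ⟨n, hn⟩
    have hle : Nat.find hx ≤ n := Nat.find_min' hx hn
    have hmem := Nat.find_spec hx
    have hdef : h x = g.symm^[Nat.find hx] (h0 (f^[Nat.find hx] x)) := by simp only [h, dif_pos hx]
    set m := Nat.find hx
    obtain ⟨j, rfl⟩ := Nat.exists_eq_add_of_le hle
    rw [hdef, add_comm, Function.iterate_add_apply, Function.iterate_add_apply, gi, conjn j _ hmem]
  have hconj' : ∀ x, (∃ n, f^[n] x ∈ W) → h (f x) = g (h x) := by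
    rintro x ⟨n, hn⟩
    have h1 := hchar x (n + 1) (iter_mapsTo hW (Nat.le_succ n) hn)
    have h2 := hchar (f x) n (by
      have := iter_mapsTo hW (Nat.le_succ n) hn
      rwa [Function.iterate_succ_apply] at this)
    rw [Function.iterate_succ_apply, Function.iterate_succ_apply] at h1
    exact gij n (h2.trans h1.symm)
  have hmono : StrictMonoOn h {x | ∃ n, f^[n] x ∈ W} := by
    rintro x ⟨n, hn⟩ y ⟨m, hm'⟩ hxy
    have a1 := iter_mapsTo hW (le_max_left n m) hn
    have a2 := iter_mapsTo hW (le_max_right n m) hm'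
    exact anti_iter_lt K.anti K'.anti h0 W hm _ x y _ _ hxy a1 a2 (hchar _ _ a1) (hchar _ _ a2)
  have hcc : h c = c := gij n0 (by rw [hchar c n0 hn0, hc0])
  have hEq : EqOn h h0 W := fun x hx => hchar x 0 hx
  have hUo : ∀ n : ℕ, IsOpen {x | f^[n] x ∈ W} := fun n => hWo.preimage (f.continuous.iterate n)
  refine ⟨h, hEq, hconj', ?_, hmono, hcc, ?_⟩
  · rintro x ⟨n, hn⟩
    induction n generalizing x with
    | zero =>
      have ee : h =ᶠ[𝓝 x] h0 := by
        filter_upwards [hWo.mem_nhds hn] with y hy using hEq hy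
      exact ⟨(hsm x hn).1.congr_of_eventuallyEq ee, by rw [ee.deriv_eq]; exact (hsm x hn).2⟩
    | succ n ih =>
      have hU := (hUo (n + 1)).mem_nhds hn
      obtain ⟨s1, s2⟩ := ih (f x) (by rwa [Function.iterate_succ_apply] at hn)
      refine pull_back K K' hr ?_ ?_ s1 s2
      · filter_upwards [hU] with y hy using hconj' y ⟨n + 1, hy⟩
      · filter_upwards [hU] with y hy
        constructor
        · intro hyc
          have := hmono.monotoneOn ⟨n + 1, hy⟩ ⟨n0, hn0⟩ hyc
          rwa [hcc] at this
        · intro hyc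
          have := hmono.monotoneOn ⟨n0, hn0⟩ ⟨n + 1, hy⟩ hyc
          rwa [hcc] at this
  · ext y
    constructor
    · rintro ⟨x, ⟨n, hn⟩, rfl⟩
      exact ⟨n, f^[n] x, hn, (hchar x n hn).symm⟩
    · rintro ⟨n, w, hw, hwy⟩
      have fi : f^[n] (f.symm^[n] w) = w :=
        Function.LeftInverse.iterate (fun z => f.apply_symm_apply z) n w
      refine ⟨f.symm^[n] w, ⟨n, by rwa [fi]⟩, gij n ?_⟩
      rw [hchar _ n (by rwa [fi]), fi, hwy]

lemma diffeo_of {h : ℝ → ℝ} {U : Set ℝ} (hU : IsOpen U) (hi : InjOn h U)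
    (hs : ∀ x ∈ U, ContDiffAt ℝ 1 h x ∧ 0 < deriv h x) : IsDiffeoOn h U (h '' U) := by
  refine ⟨hi.bijOn_image, fun x hx => (hs x hx).1.contDiffWithinAt, Function.invFunOn h U, ?_, ?_⟩
  · exact ⟨hi.leftInvOn_invFunOn, fun y hy => Function.invFunOn_eq hy⟩
  · rintro _ ⟨x, hx, rfl⟩
    obtain ⟨c1, c2⟩ := hs x hx
    have hd : HasDerivAt h (deriv h x) x := (c1.differentiableAt (by simp)).hasDerivAt
    let e : OpenPartialHomeomorph ℝ ℝ := c1.toOpenPartialHomeomorph h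
      (f' := ContinuousLinearEquiv.unitsEquivAut ℝ (Units.mk0 _ c2.ne')) (hd.hasFDerivAt_equiv c2.ne') (by simp)
    have he : (e : ℝ → ℝ) = h := rfl
    have hxe : x ∈ e.source := c1.mem_toOpenPartialHomeomorph_source _ (by simp)
    have hex : e.symm (h x) = x := e.left_inv hxe
    have hy : h x ∈ e.target := e.map_source hxe
    have c3 : ContDiffAt ℝ 1 e.symm (h x) := e.contDiffAt_symm_deriv c2.ne' hy
      (by rw [hex]; exact hd) (by rw [hex]; exact c1)
    refine (c3.congr_of_eventuallyEq ?_).contDiffWithinAt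
    have hcont : ContinuousAt e.symm (h x) := e.continuousAt_symm hy
    have : ∀ᶠ y in 𝓝 (h x), e.symm y ∈ U := hcont (by rw [hex]; exact hU.mem_nhds hx)
    filter_upwards [this, e.open_target.mem_nhds hy] with y hy1 hy2
    have h3 : h (e.symm y) = y := e.right_inv hy2
    have := hi.leftInvOn_invFunOn hy1
    rwa [h3] at this



lemma exists_homeo {f : ℝ → ℝ} (ha : StrictAnti f) (hc : Continuous f)
    (hs : Function.Surjective f) : ∃ e : ℝ ≃ₜ ℝ, ∀ x, e x = f x := by
  have hm : StrictMono (fun x => -f x) := fun x y h => neg_lt_neg (ha h)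
  have hs' : Function.Surjective (fun x => -f x) := fun y => by
    obtain ⟨x, hx⟩ := hs (-y)
    exact ⟨x, by simp [hx]⟩
  refine ⟨(hm.orderIsoOfSurjective _ hs').toHomeomorph.trans (Homeomorph.neg ℝ), fun x => ?_⟩
  simp

lemma exists_homeo_deriv {F φ : ℝ → ℝ} {m : ℝ} (hF : ∀ x, HasDerivAt F (-Real.exp (φ x)) x)
    (hm : ∀ x, -m ≤ φ x) : ∃ e : ℝ ≃ₜ ℝ, ∀ x, e x = F x := by
  have ha : StrictAnti F := strictAnti_of_deriv_neg (fun x => by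
    rw [(hF x).deriv]; simpa using Real.exp_pos _)
  have hc : Continuous F := cont_of_deriv hF
  have key : ∀ x y, x < y → F y - F x ≤ -Real.exp (-m) * (y - x) := by
    intro x y hxy
    obtain ⟨ξ, -, h⟩ := mvt_glob hF hxy
    rw [h]
    have : Real.exp (-m) ≤ Real.exp (φ ξ) := Real.exp_le_exp.2 (hm ξ)
    have : 0 ≤ y - x := by linarith
    nlinarith
  have he := Real.exp_pos (-m)
  refine exists_homeo ha hc fun y => ?_
  -- take a big K
  set K := (|y - F 0| + 1) / Real.exp (-m) with hK
  have hK0 : 0 < K := by positivity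
  have hKe : Real.exp (-m) * K = |y - F 0| + 1 := by rw [hK]; field_simp
  have h1 := key 0 K hK0
  have h2 := key (-K) 0 (by linarith)
  have hy1 : F K ≤ y := by have := neg_abs_le (y - F 0); nlinarith
  have hy2 : y ≤ F (-K) := by have := le_abs_self (y - F 0); nlinarith
  obtain ⟨x, -, hx⟩ := intermediate_value_Icc' (by linarith : -K ≤ K) hc.continuousOn ⟨hy1, hy2⟩
  exact ⟨x, hx⟩

structure Cls (ν C κ m : ℝ) (α β : ℝ → ℝ) (f fL fR : ℝ ≃ₜ ℝ) : Prop where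
  left : ∀ x, x ≤ 0 → f x = fL x
  right : ∀ x, 0 ≤ x → f x = fR x
  L0 : fL 0 = ν
  R0 : fR 0 = ν
  dL : ∀ x, HasDerivAt fL (-Real.exp (α x)) x
  dR : ∀ x, HasDerivAt fR (-Real.exp (β x)) x
  lipL : ∀ x y, |α x - α y| ≤ C * |x - y|
  lipR : ∀ x y, |β x - β y| ≤ C * |x - y|
  hC : 0 ≤ C
  hκ : 0 < κ
  aκ : ∀ x, α x ≤ -κ
  bκ : ∀ x, κ ≤ β x
  ab : ∀ x y, α x + β y ≤ -κ
  am : ∀ x, -m ≤ α x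
  bm : ∀ x, β x ≤ m

lemma Cls.exists {ν C κ m : ℝ} {α β FL FR : ℝ → ℝ} (L0 : FL 0 = ν) (R0 : FR 0 = ν)
    (dL : ∀ x, HasDerivAt FL (-Real.exp (α x)) x)
    (dR : ∀ x, HasDerivAt FR (-Real.exp (β x)) x)
    (lipL : ∀ x y, |α x - α y| ≤ C * |x - y|)
    (lipR : ∀ x y, |β x - β y| ≤ C * |x - y|)
    (hC : 0 ≤ C) (hκ : 0 < κ) (aκ : ∀ x, α x ≤ -κ) (bκ : ∀ x, κ ≤ β x)
    (ab : ∀ x y, α x + β y ≤ -κ) (am : ∀ x, -m ≤ α x) (bm : ∀ x, β x ≤ m) :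
    ∃ f fL fR : ℝ ≃ₜ ℝ, (∀ x, fL x = FL x) ∧ (∀ x, fR x = FR x) ∧ Cls ν C κ m α β f fL fR := by
  obtain ⟨fL, hL⟩ := exists_homeo_deriv dL am
  obtain ⟨fR, hR⟩ := exists_homeo_deriv (m := 0) dR (fun x => by linarith [bκ x])
  have hLe : FL = fL := funext fun x => (hL x).symm
  have hRe : FR = fR := funext fun x => (hR x).symm
  subst hLe hRe
  have aL : StrictAnti fL := strictAnti_of_deriv_neg (fun x => by
    rw [(dL x).deriv]; simpa using Real.exp_pos _)
  have aR : StrictAnti fR := strictAnti_of_deriv_neg (fun x => by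
    rw [(dR x).deriv]; simpa using Real.exp_pos _)
  have ac : Continuous (fun x => if x ≤ 0 then fL x else fR x) :=
    Continuous.if_le fL.continuous fR.continuous continuous_id continuous_const (by
      rintro x rfl; rw [L0, R0])
  have a : StrictAnti (fun x => if x ≤ 0 then fL x else fR x) := by
    intro x y hxy
    dsimp only
    split_ifs with h1 h2 h2
    · exact aL hxy
    · linarith
    · have := aR (not_le.1 h1)
      have := aL.antitone h2
      linarith
    · exact aR hxy
  have as : Function.Surjective (fun x => if x ≤ 0 then fL x else fR x) := by
    intro y
    rcases le_or_gt ν y with h | h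
    · refine ⟨fL.symm y, ?_⟩
      have : fL.symm y ≤ 0 := by
        by_contra hcon
        have := aL (not_le.1 hcon)
        simp at this; linarith
      simp [this]
    · refine ⟨fR.symm y, ?_⟩
      have : 0 < fR.symm y := by
        by_contra hcon
        have := aR.antitone (not_lt.1 hcon)
        simp at this; linarith
      simp [not_le.2 this]
  obtain ⟨f, hf⟩ := exists_homeo a ac as
  refine ⟨f, fL, fR, fun _ => rfl, fun _ => rfl, ⟨fun x hx => by simp [hf, hx], fun x hx => ?_,
    L0, R0, dL, dR, lipL, lipR, hC, hκ, aκ, bκ, ab, am, bm⟩⟩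
  rcases hx.eq_or_lt with rfl | hx
  · simp [hf, L0, R0]
  · simp [hf, not_le.2 hx]

section
variable {ν C κ m : ℝ} {α β : ℝ → ℝ} {f fL fR : ℝ ≃ₜ ℝ}

lemma lip_cont {α : ℝ → ℝ} {C : ℝ} (h : ∀ x y, |α x - α y| ≤ C * |x - y|) : Continuous α := by
  have hC : 0 ≤ C := by have := (abs_nonneg _).trans (h 1 0); simpa using this
  exact (LipschitzWith.of_dist_le_mul (K := C.toNNReal) fun x y => by
    rw [Real.coe_toNNReal _ hC]; exact h x y).continuous

lemma Cls.antiL (H : Cls ν C κ m α β f fL fR) : StrictAnti fL :=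
  strictAnti_of_deriv_neg (fun x => by rw [(H.dL x).deriv]; simpa using Real.exp_pos _)

lemma Cls.antiR (H : Cls ν C κ m α β f fL fR) : StrictAnti fR :=
  strictAnti_of_deriv_neg (fun x => by rw [(H.dR x).deriv]; simpa using Real.exp_pos _)

lemma Cls.f0 (H : Cls ν C κ m α β f fL fR) : f 0 = ν := by rw [H.left 0 le_rfl, H.L0]

lemma Cls.anti (H : Cls ν C κ m α β f fL fR) : StrictAnti f := by
  intro x y hxy
  rcases le_or_gt x 0 with hx | hx <;> rcases le_or_gt y 0 with hy | hy
  · rw [H.left x hx, H.left y hy]; exact H.antiL hxy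
  · rw [H.left x hx, H.right y hy.le]
    have h1 := H.antiL.antitone hx
    have h2 := H.antiR hy
    rw [H.L0] at h1; rw [H.R0] at h2; linarith
  · linarith
  · rw [H.right x hx.le, H.right y hy.le]; exact H.antiR hxy

lemma Cls.kink (H : Cls ν C κ m α β f fL fR) : Kink 0 f fL fR where
  left := H.left
  right := H.right
  cL := contDiff_one_iff_deriv.2 ⟨fun x => (H.dL x).differentiableAt, by
    have : deriv fL = fun x => -Real.exp (α x) := funext fun x => (H.dL x).deriv
    rw [this]; have := lip_cont H.lipL; fun_prop⟩
  cR := contDiff_one_iff_deriv.2 ⟨fun x => (H.dR x).differentiableAt, by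
    have : deriv fR = fun x => -Real.exp (β x) := funext fun x => (H.dR x).deriv
    rw [this]; have := lip_cont H.lipR; fun_prop⟩
  dL := fun x => by rw [(H.dL x).deriv]; simpa using Real.exp_pos _
  dR := fun x => by rw [(H.dR x).deriv]; simpa using Real.exp_pos _
  anti := H.anti

lemma Cls.th (H : Cls ν C κ m α β f fL fR) : Real.exp (-κ) < 1 := by simpa using H.hκ

lemma Cls.contrL (H : Cls ν C κ m α β f fL fR) (x y : ℝ) :
    |fL x - fL y| ≤ Real.exp (-κ) * |x - y| :=
  lip_glob H.dL (fun x => by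
    rw [abs_neg, abs_of_pos (Real.exp_pos _)]; exact Real.exp_le_exp.2 (H.aκ x)) x y

lemma Cls.lipFR (H : Cls ν C κ m α β f fL fR) (x y : ℝ) :
    |fR x - fR y| ≤ Real.exp m * |x - y| :=
  lip_glob H.dR (fun x => by
    rw [abs_neg, abs_of_pos (Real.exp_pos _)]; exact Real.exp_le_exp.2 (H.bm x)) x y

lemma Cls.expR (H : Cls ν C κ m α β f fL fR) {x y : ℝ} (h : x ≤ y) :
    fR y ≤ fR x - Real.exp κ * (y - x) := by
  rcases h.eq_or_lt with rfl | h
  · simp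
  obtain ⟨ξ, -, he⟩ := mvt_glob H.dR h
  have : Real.exp κ ≤ Real.exp (β ξ) := Real.exp_le_exp.2 (H.bκ ξ)
  have : 0 ≤ y - x := by linarith
  nlinarith

lemma Cls.dF (H : Cls ν C κ m α β f fL fR) (x : ℝ) :
    HasDerivAt (fun x => fR (fL x)) (1 * Real.exp (α x + β (fL x))) x := by
  have := (H.dR (fL x)).comp x (H.dL x)
  exact this.congr_deriv (by rw [Real.exp_add]; ring)

lemma Cls.lipF (H : Cls ν C κ m α β f fL fR) (x y : ℝ) :
    |(α x + β (fL x)) - (α y + β (fL y))| ≤ 2 * C * |x - y| := by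
  have h1 := H.lipL x y
  have h2 := H.lipR (fL x) (fL y)
  have h3 := H.contrL x y
  have h4 := H.th
  have h5 : C * |fL x - fL y| ≤ C * |x - y| :=
    mul_le_mul_of_nonneg_left (by nlinarith [abs_nonneg (x - y)]) H.hC
  calc _ = |(α x - α y) + (β (fL x) - β (fL y))| := by ring_nf
    _ ≤ _ := (abs_add_le _ _)
    _ ≤ _ := by linarith

lemma Cls.contrF (H : Cls ν C κ m α β f fL fR) (x y : ℝ) :
    |fR (fL x) - fR (fL y)| ≤ Real.exp (-κ) * |x - y| :=
  lip_glob H.dF (fun x => by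
    rw [one_mul, abs_of_pos (Real.exp_pos _)]; exact Real.exp_le_exp.2 (H.ab _ _)) x y

lemma Cls.surjF (H : Cls ν C κ m α β f fL fR) : Function.Surjective (fun x => fR (fL x)) :=
  fR.surjective.comp fL.surjective

lemma Cls.monoF (H : Cls ν C κ m α β f fL fR) : StrictMono (fun x => fR (fL x)) :=
  H.antiR.comp H.antiL

lemma Cls.κm (H : Cls ν C κ m α β f fL fR) : κ ≤ m := (H.bκ 0).trans (H.bm 0)

lemma Cls.dRs (H : Cls ν C κ m α β f fL fR) (x : ℝ) :
    HasDerivAt fR.symm (-1 * Real.exp (-β (fR.symm x))) x := by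
  have := (homeo_symm_smooth H.kink.cR H.kink.dR).2 x
  exact this.congr_deriv (by rw [(H.dR _).deriv, Real.exp_neg, neg_one_mul, inv_neg])

lemma Cls.contrRs (H : Cls ν C κ m α β f fL fR) (x y : ℝ) :
    |fR.symm x - fR.symm y| ≤ Real.exp (-κ) * |x - y| :=
  lip_glob H.dRs (fun x => by
    rw [abs_mul, abs_of_pos (Real.exp_pos _)]; simp; exact (H.bκ _)) x y

/-- location of fixed points -/
lemma Cls.xL_mem (H : Cls ν C κ m α β f fL fR) (hν : ν ≤ 0) {x : ℝ} (hx : fL x = x) :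
    ν ≤ x ∧ x ≤ 0 ∧ (ν < 0 → ν < x ∧ x < 0) := by
  have a := H.antiL
  have h0 := H.L0
  have h1 : x ≤ 0 := by
    by_contra hcon
    have := a (not_le.1 hcon); linarith
  have h2 := a.antitone h1
  refine ⟨by linarith, h1, fun hν => ?_⟩
  have h3 : x < 0 := by
    rcases h1.eq_or_lt with h | h
    · rw [h] at hx; linarith
    · exact h
  have := a h3
  exact ⟨by linarith, h3⟩

lemma Cls.xR_mem (H : Cls ν C κ m α β f fL fR) (hν : 0 < ν) {x : ℝ} (hx : fR x = x) :
    0 < x ∧ x < ν := by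
  have a := H.antiR
  have h0 := H.R0
  have h1 : 0 < x := by
    by_contra hcon
    have := a.antitone (not_lt.1 hcon); linarith
  have := a h1
  exact ⟨h1, by linarith⟩

lemma Cls.Rν (H : Cls ν C κ m α β f fL fR) (hν : 0 < ν) :
    fR ν < 0 ∧ -(Real.exp m * ν) ≤ fR ν := by
  have h1 := H.expR hν.le
  have h2 := H.lipFR ν 0
  have h3 : 1 < Real.exp κ := by simpa using H.hκ
  rw [H.R0] at h1 h2
  rw [sub_zero, abs_of_pos hν] at h2
  have := (abs_le.1 h2).1
  constructor <;> nlinarith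

lemma Cls.uL_mem (H : Cls ν C κ m α β f fL fR) (hν : 0 < ν) {u : ℝ} (hu : fR (fL u) = u) :
    u < 0 ∧ |u| * (1 - Real.exp (-κ)) ≤ Real.exp m * ν ∧ ν < fL u ∧ u < fR ν := by
  have h1 := H.contrF u 0
  rw [hu, H.L0, sub_zero] at h1
  obtain ⟨h2, h3⟩ := H.Rν hν
  have h4 := H.th
  have h5 : u < 0 := by
    by_contra hcon
    rw [abs_of_nonneg (not_lt.1 hcon), abs_of_pos (by linarith [not_lt.1 hcon])] at h1
    have := not_lt.1 hcon
    nlinarith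
  have h6 : ν < fL u := by have := H.antiL h5; rwa [H.L0] at this
  refine ⟨h5, ?_, h6, by have := H.antiR h6; linarith⟩
  have := abs_sub_abs_le_abs_sub u (fR ν)
  rw [abs_of_neg h2] at this
  nlinarith

end



lemma iter_contr_on {F : ℝ → ℝ} {S : Set ℝ} {xs θ : ℝ} (h0 : 0 ≤ θ) (hS : MapsTo F S S)
    (h : ∀ x ∈ S, |F x - xs| ≤ θ * |x - xs|) {x : ℝ} (hx : x ∈ S) (n : ℕ) :
    F^[n] x ∈ S ∧ |F^[n] x - xs| ≤ θ ^ n * |x - xs| := by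
  refine ⟨hS.iterate n hx, ?_⟩
  induction n with
  | zero => simp
  | succ n ih =>
    rw [Function.iterate_succ_apply']
    calc _ ≤ θ * |F^[n] x - xs| := h _ (hS.iterate n hx)
      _ ≤ θ * (θ ^ n * |x - xs|) := by gcongr
      _ = _ := by ring

lemma tendsto_contr_on {F : ℝ → ℝ} {S : Set ℝ} {xs θ : ℝ} (h0 : 0 ≤ θ) (h1 : θ < 1)
    (hS : MapsTo F S S) (h : ∀ x ∈ S, |F x - xs| ≤ θ * |x - xs|) {x : ℝ} (hx : x ∈ S) :
    Tendsto (fun n => F^[n] x) atTop (𝓝 xs) := by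
  rw [tendsto_iff_norm_sub_tendsto_zero]
  have : Tendsto (fun n : ℕ => θ ^ n * |x - xs|) atTop (𝓝 0) := by
    simpa using (tendsto_pow_atTop_nhds_zero_of_lt_one h0 h1).mul_const (|x - xs|)
  exact squeeze_zero (fun _ => norm_nonneg _) (fun n => (iter_contr_on h0 hS h hx n).2) this

lemma contDiff_one_of {h k : ℝ → ℝ} (hd : ∀ x, HasDerivAt h (k x) x) (hk : Continuous k) :
    ContDiff ℝ 1 h :=
  contDiff_one_iff_deriv.2 ⟨fun x => (hd x).differentiableAt, by
    have : deriv h = k := funext fun x => (hd x).deriv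
    rwa [this]⟩

section
variable {ν C κ m : ℝ} {α β : ℝ → ℝ} {f fL fR : ℝ ≃ₜ ℝ}
variable {α' β' : ℝ → ℝ} {g gL gR : ℝ ≃ₜ ℝ}

lemma Cls.ff (H : Cls ν C κ m α β f fL fR) (hν : ν ≤ 0) {xs : ℝ} (hxs : fL xs = xs) {x : ℝ}
    (hx : x ≤ 0) : f (f x) ≤ 0 ∧ |f (f x) - xs| ≤ Real.exp (-κ) * |x - xs| := by
  have ht := H.th
  have ht0 := Real.exp_pos (-κ)
  obtain ⟨m1, m2, -⟩ := H.xL_mem hν hxs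
  have hν2 : fL ν ≤ 0 := by
    have := H.contrL ν 0
    rw [H.L0, sub_zero, abs_of_nonpos hν] at this
    have := (abs_le.1 this).2
    nlinarith
  have hfx : ν ≤ f x := by have := H.anti.antitone hx; rwa [H.f0] at this
  rcases le_or_gt (f x) 0 with h1 | h1
  · rw [H.left _ h1]
    have h2 : fL (f x) ≤ 0 := (H.antiL.antitone hfx).trans hν2
    refine ⟨h2, ?_⟩
    rw [H.left _ hx]
    have e1 := H.contrL (fL x) xs
    have e2 := H.contrL x xs
    rw [hxs] at e1 e2
    nlinarith [abs_nonneg (x - xs), abs_nonneg (fL x - xs)]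
  · rw [H.right _ h1.le]
    have h2 : fR (f x) ≤ ν := by have := H.antiR.antitone h1.le; rwa [H.R0] at this
    refine ⟨h2.trans hν, ?_⟩
    rw [H.left _ hx] at h1 h2 ⊢
    set z := fL.symm 0 with hz
    have hfz : fL z = 0 := by simp [hz]
    have hxz : x < z := by
      by_contra hcon
      have := H.antiL.antitone (not_lt.1 hcon); linarith
    have hzx : z ≤ xs := by
      by_contra hcon
      have := H.antiL (not_le.1 hcon); linarith
    have e1 := H.contrF x z
    have e2 := H.contrL (fL z) xs
    have e3 := H.contrL z xs
    rw [hxs] at e2 e3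
    have e4 : fR (fL z) = fL (fL z) := by rw [hfz, H.L0, H.R0]
    rw [e4] at e1
    rw [abs_of_nonpos (by linarith : x - z ≤ 0)] at e1
    rw [abs_of_nonpos (by linarith : z - xs ≤ 0)] at e3
    rw [abs_of_nonpos (by linarith : x - xs ≤ 0)]
    have e5 := abs_sub_le (fR (fL x)) (fL (fL z)) xs
    nlinarith [abs_nonneg (fL z - xs)]

lemma conj_nonpos (H : Cls ν C κ m α β f fL fR) (H' : Cls ν C κ m α' β' g gL gR) (hν : ν ≤ 0)
    {xs ys : ℝ} (hxs : fL xs = xs) (hys : gL ys = ys) (hmul : α xs = α' ys)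
    (hr : α 0 + β' 0 = β 0 + α' 0) :
    ∃ h k : ℝ → ℝ, (∀ x, HasDerivAt h (k x) x) ∧ Continuous k ∧ (∀ x, 0 < k x) ∧
      h 0 = 0 ∧ h xs = ys ∧ (∀ x, h (f x) = g (h x)) ∧ (ν = 0 → k 0 = 1) := by
  obtain ⟨m1, m2, m3⟩ := H.xL_mem hν hxs
  obtain ⟨m1', m2', m3'⟩ := H'.xL_mem hν hys
  rcases hν.eq_or_lt with h0 | hν0
  · subst h0
    have ex : xs = 0 := le_antisymm m2 m1
    have ey : ys = 0 := le_antisymm m2' m1'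
    subst ex ey
    obtain ⟨h0, k0, a1, a2, a3, a4, a5, a6, a7, a8⟩ := conj_exists (fun x => fR (fL x))
      (fun x => α x + β (fL x)) (fun x => gR (gL x)) (fun x => α' x + β' (gL x)) 1 0 0 (2 * C) κ
      (by simp) H.dF H'.dF H.lipF H'.lipF H.hκ (fun x => H.ab _ _) (fun x => H'.ab _ _)
      (by simp [H.L0, H.R0]) (by simp [H'.L0, H'.R0]) H.surjF H'.surjF
      (by simp only [H.L0, H'.L0]; linarith) (by simp)
    have hm : StrictMono h0 := strictMono_of_pos a1 a3
    have hneg : ∀ x, x ≤ 0 → h0 x ≤ 0 := fun x hx => by have := hm.monotone hx; rwa [a4] at this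
    let h1 : ℝ → ℝ := fun x => gL (h0 (fL.symm x))
    have hLs : ∀ x, 0 ≤ x → fL.symm x ≤ 0 := fun x hx => by
      by_contra hcon
      have := H.antiL (not_le.1 hcon)
      rw [H.L0] at this; simp at this; linarith
    have hLs0 : fL.symm 0 = 0 := by rw [Homeomorph.symm_apply_eq, H.L0]
    have h10 : h1 0 = 0 := by simp [h1, hLs0, a4, H'.L0]
    have hs := homeo_symm_smooth H.kink.cL H.kink.dL
    have d1 : ∀ x, HasDerivAt h1 (-Real.exp (α' (h0 (fL.symm x))) *
        (k0 (fL.symm x) * (deriv fL (fL.symm x))⁻¹)) x := fun x =>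
      (H'.dL _).comp x ((a1 _).comp x (hs.2 x))
    have c0 := contDiff_one_of a1 a2
    have c1 : ContDiff ℝ 1 h1 := H'.kink.cL.comp (c0.comp hs.1)
    have p1 : ∀ x, 0 < deriv h1 x := fun x => by
      rw [(d1 x).deriv]
      exact mul_pos_of_neg_of_neg (by simpa using Real.exp_pos _)
        (mul_neg_of_pos_of_neg (a3 _) (inv_lt_zero.2 (H.kink.dL _)))
    let h : ℝ → ℝ := fun x => if x ≤ 0 then h0 x else h1 x
    have hl : ∀ x, x ≤ 0 → h x = h0 x := fun x hx => by simp [h, hx]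
    have hrr : ∀ x, 0 ≤ x → h x = h1 x := fun x hx => by
      rcases hx.eq_or_lt with rfl | hx
      · simp [h, h10, a4]
      · simp [h, not_le.2 hx]
    have dd : deriv h0 0 = deriv h1 0 := by
      rw [(a1 0).deriv, (d1 0).deriv, hLs0, (H.dL 0).deriv, a4, hmul]
      have := (Real.exp_pos (α' 0)).ne'
      field_simp
    have sm : ∀ x, ContDiffAt ℝ 1 h x ∧ 0 < deriv h x := by
      intro x
      rcases lt_trichotomy x 0 with hx | hx | hx
      · have ee : h =ᶠ[𝓝 x] h0 := by
          filter_upwards [Iio_mem_nhds hx] with y hy using hl y (le_of_lt hy)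
        exact ⟨c0.contDiffAt.congr_of_eventuallyEq ee, by
          rw [ee.deriv_eq, (a1 x).deriv]; exact a3 x⟩
      · subst hx
        have := contDiffAt_glue (h := h) (u := h0) (v := h1) c0.contDiffAt c1.contDiffAt dd
          (Eventually.of_forall fun x => ⟨hl x, hrr x⟩)
        exact ⟨this.1, by rw [this.2, (a1 _).deriv]; exact a3 _⟩
      · have ee : h =ᶠ[𝓝 x] h1 := by
          filter_upwards [Ioi_mem_nhds hx] with y hy using hrr y (le_of_lt hy)
        exact ⟨c1.contDiffAt.congr_of_eventuallyEq ee, by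
          rw [ee.deriv_eq]; exact p1 x⟩
    have dh : ∀ x, HasDerivAt h (deriv h x) x := fun x =>
      ((sm x).1.differentiableAt (by simp)).hasDerivAt
    have ch : ContDiff ℝ 1 h := contDiff_iff_contDiffAt.2 fun x => (sm x).1
    refine ⟨h, deriv h, dh, ch.continuous_deriv (by simp), fun x => (sm x).2, by simp [h, a4],
      by simp [h, a4], fun x => ?_, fun _ => ?_⟩
    · rcases le_total x 0 with hx | hx
      · rw [H.left _ hx, hl x hx, H'.left _ (hneg x hx), hrr]
        · simp [h1]
        · have := H.antiL.antitone hx; rwa [H.L0] at this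
      · have hw := hneg _ (hLs x hx)
        have h1p : 0 ≤ h1 x := by
          have := H'.antiL.antitone hw; rwa [H'.L0] at this
        rw [H.right _ hx, hrr x hx, H'.right _ h1p, hl]
        · have := a6 (fL.symm x)
          simpa [h1] using this
        · have := H.antiR.antitone hx; rwa [H.R0] at this
    · have := contDiffAt_glue (h := h) (u := h0) (v := h1) c0.contDiffAt c1.contDiffAt dd
          (Eventually.of_forall fun x => ⟨hl x, hrr x⟩)
      rw [this.2, (a1 _).deriv, a5 rfl]
  · obtain ⟨n1, n2⟩ := m3 hν0
    obtain ⟨n1', n2'⟩ := m3' hν0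
    obtain ⟨h0, k0, a1, a2, a3, a4, a5, a6, a7, a8⟩ := conj_exists fL α gL α' (-1) xs ys C κ
      (by simp) (fun x => by simpa using H.dL x) (fun x => by simpa using H'.dL x) H.lipL H'.lipL
      H.hκ H.aκ H'.aκ hxs hys fL.surjective gL.surjective hmul (Or.inr (Or.inl ⟨n2, n2'⟩))
    have hm : StrictMono h0 := strictMono_of_pos a1 a3
    have hneg : ∀ x, x < 0 → h0 x < 0 := fun x hx => by have := hm hx; rwa [a4] at this
    set z := fL.symm 0 with hz
    have hfz : fL z = 0 := by simp [hz]
    have hν2 : fL ν < 0 := by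
      have := H.contrL ν 0
      rw [H.L0, sub_zero, abs_of_nonpos hν] at this
      have := (abs_le.1 this).2
      nlinarith [H.th]
    have hzν : z < ν := by
      by_contra hcon
      have := H.antiL.antitone (not_lt.1 hcon); linarith
    have c0 := contDiff_one_of a1 a2
    have hM : MapsTo f (Ioo z 0) (Ioo z 0) := by
      rintro x ⟨x1, x2⟩
      rw [H.left _ x2.le]
      have e1 := H.antiL x1
      have e2 := H.antiL x2
      rw [hfz] at e1
      rw [H.L0] at e2
      exact ⟨by linarith, e1⟩
    have hν1 : h0 ν = ν := by
      have := a6 0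
      rwa [H.L0, a4, H'.L0] at this
    obtain ⟨h, b1, b2, b3, b4, b5, -⟩ := ext_conj H.kink H'.kink (h0 := h0) (W := Ioo z 0)
      (by
        rw [(H.dL 0).deriv, (H.dR 0).deriv, (H'.dL 0).deriv, (H'.dR 0).deriv, neg_mul_neg,
          neg_mul_neg, ← Real.exp_add, ← Real.exp_add, hr])
      isOpen_Ioo hM (fun x hx => by
        rw [H.left _ hx.2.le, a6, H'.left _ (hneg x hx.2).le])
      (fun x _ => ⟨c0.contDiffAt, by rw [(a1 x).deriv]; exact a3 x⟩)
      (hm.strictMonoOn _) (n0 := 1) (by simp [H.f0]; exact ⟨hzν, hν0⟩)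
      (by simp [H.f0, H'.f0, hν1])
    have hU : ∀ x, ∃ n, f^[n] x ∈ Ioo z 0 := by
      have neg : ∀ x, x ≤ 0 → ∃ n, f^[n] x ∈ Ioo z 0 := by
        intro x hx
        have := tendsto_contr_on (F := f^[2]) (S := Iic 0) (xs := xs) (Real.exp_pos (-κ)).le H.th
          (fun y hy => (H.ff hν hxs hy).1) (fun y hy => (H.ff hν hxs hy).2) hx
        have := this.eventually (Ioo_mem_nhds (hzν.trans n1) n2)
        obtain ⟨n, hn⟩ := this.exists
        exact ⟨2 * n, by rwa [Function.iterate_mul]⟩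
      intro x
      rcases le_total x 0 with hx | hx
      · exact neg x hx
      · obtain ⟨n, hn⟩ := neg (f x) (by
          have := H.anti.antitone hx; rw [H.f0] at this; linarith)
        exact ⟨n + 1, hn⟩
    have ch : ContDiff ℝ 1 h := contDiff_iff_contDiffAt.2 fun x => (b3 x (hU x)).1
    refine ⟨h, deriv h, fun x => ((b3 x (hU x)).1.differentiableAt (by simp)).hasDerivAt,
      ch.continuous_deriv (by simp), fun x => (b3 x (hU x)).2, b5, ?_, fun x => b2 x (hU x),
      fun hh => by linarith⟩
    rw [b1 ⟨hzν.trans n1, n2⟩, a8]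

end



section
variable {ν C κ m : ℝ} {α β : ℝ → ℝ} {f fL fR : ℝ ≃ₜ ℝ}
variable {α' β' : ℝ → ℝ} {g gL gR : ℝ ≃ₜ ℝ}

lemma Cls.escape (H : Cls ν C κ m α β f fL fR) (hν : 0 < ν) {xR : ℝ} (hx : fR xR = xR) :
    {x | ∃ n, f^[n] x ∈ Iio 0 ∪ Ioi ν} = {x | x ≠ xR} := by
  obtain ⟨x1, x2⟩ := H.xR_mem hν hx
  have hfx : f xR = xR := by rw [H.right _ x1.le, hx]
  ext x
  constructor
  · rintro ⟨n, hn⟩ rfl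
    rw [Function.iterate_fixed hfx] at hn
    rcases hn with hn | hn
    · exact lt_asymm x1 hn
    · exact lt_asymm x2 hn
  · intro hne
    by_contra hcon
    simp only [mem_setOf_eq, not_exists, mem_union, mem_Iio, mem_Ioi, not_or, not_lt] at hcon
    have hb : ∀ n : ℕ, Real.exp κ ^ n * |x - xR| ≤ |f^[n] x - xR| := by
      intro n
      induction n with
      | zero => simp
      | succ n ih =>
        rw [Function.iterate_succ_apply']
        have h0 := (hcon n).1
        set w := f^[n] x
        rw [H.right _ h0]
        have e := Real.exp_pos κ
        have : Real.exp κ * |w - xR| ≤ |fR w - xR| := by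
          rcases le_total w xR with h | h
          · have h1 := H.expR h
            rw [hx] at h1
            rw [abs_of_nonpos (by linarith : w - xR ≤ 0)]
            have := le_abs_self (fR w - xR)
            nlinarith
          · have h1 := H.expR h
            rw [hx] at h1
            rw [abs_of_nonneg (by linarith : 0 ≤ w - xR)]
            have := neg_abs_le (fR w - xR)
            nlinarith
        calc _ = Real.exp κ * (Real.exp κ ^ n * |x - xR|) := by ring
          _ ≤ _ := by gcongr
          _ ≤ _ := this
    have hp : 0 < |x - xR| := abs_pos.2 (sub_ne_zero.2 hne)
    obtain ⟨n, hn⟩ := pow_unbounded_of_one_lt (ν / |x - xR|) (by simpa using H.hκ : 1 < Real.exp κ)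
    rw [div_lt_iff₀ hp] at hn
    have h1 := hb n
    have h2 := hcon n
    have : |f^[n] x - xR| ≤ ν := by rw [abs_le]; constructor <;> linarith
    linarith

lemma conj_attr (H : Cls ν C κ m α β f fL fR) (H' : Cls ν C κ m α' β' g gL gR) (hν : 0 < ν)
    {u v xR yR : ℝ} (hu : fR (fL u) = u) (hv : gR (gL v) = v)
    (hxR : fR xR = xR) (hyR : gR yR = yR)
    (hmul : α u + β (fL u) = α' v + β' (gL v))
    (hr : α 0 + β' 0 = β 0 + α' 0) :
    ∃ h0 k0 h : ℝ → ℝ, (∀ x, HasDerivAt h0 (k0 x) x) ∧ Continuous k0 ∧ (∀ x, 0 < k0 x) ∧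
      h0 0 = 0 ∧ h0 u = v ∧ (∀ x, h0 (fR (fL x)) = gR (gL (h0 x))) ∧
      (∀ x, x < 0 → h x = h0 x) ∧ (∀ x, x ≠ xR → h (f x) = g (h x)) ∧
      (∀ x, x ≠ xR → ContDiffAt ℝ 1 h x ∧ 0 < deriv h x) ∧ StrictMonoOn h {x | x ≠ xR} ∧
      h '' {x | x ≠ xR} = {y | y ≠ yR} := by
  obtain ⟨u1, -⟩ := H.uL_mem hν hu
  obtain ⟨v1, -⟩ := H'.uL_mem hν hv
  obtain ⟨h0, k0, a1, a2, a3, a4, a5, a6, a7, a8⟩ := conj_exists (fun x => fR (fL x))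
      (fun x => α x + β (fL x)) (fun x => gR (gL x)) (fun x => α' x + β' (gL x)) 1 u v (2 * C) κ
      (by simp) H.dF H'.dF H.lipF H'.lipF H.hκ (fun x => H.ab _ _) (fun x => H'.ab _ _)
      hu hv H.surjF H'.surjF hmul (Or.inr (Or.inl ⟨u1, v1⟩))
  have hm : StrictMono h0 := strictMono_of_pos a1 a3
  have hneg : ∀ x, x < 0 → h0 x < 0 := fun x hx => by have := hm hx; rwa [a4] at this
  let h1 : ℝ → ℝ := fun x => gL (h0 (fL.symm x))
  have hLs : ∀ x, ν < x → fL.symm x < 0 := fun x hx => by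
    by_contra hcon
    have := H.antiL.antitone (not_lt.1 hcon)
    rw [H.L0] at this; simp at this; linarith
  have hLp : ∀ x, x < 0 → ν < fL x := fun x hx => by
    have := H.antiL hx; rwa [H.L0] at this
  have hLp' : ∀ x, x < 0 → ν < gL x := fun x hx => by
    have := H'.antiL hx; rwa [H'.L0] at this
  have h1p : ∀ x, ν < x → ν < h1 x := fun x hx => hLp' _ (hneg _ (hLs x hx))
  have hs := homeo_symm_smooth H.kink.cL H.kink.dL
  have d1 : ∀ x, HasDerivAt h1 (-Real.exp (α' (h0 (fL.symm x))) *
      (k0 (fL.symm x) * (deriv fL (fL.symm x))⁻¹)) x := fun x =>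
    (H'.dL _).comp x ((a1 _).comp x (hs.2 x))
  have c0 := contDiff_one_of a1 a2
  have c1 : ContDiff ℝ 1 h1 := H'.kink.cL.comp (c0.comp hs.1)
  have p1 : ∀ x, 0 < deriv h1 x := fun x => by
    rw [(d1 x).deriv]
    exact mul_pos_of_neg_of_neg (by simpa using Real.exp_pos _)
      (mul_neg_of_pos_of_neg (a3 _) (inv_lt_zero.2 (H.kink.dL _)))
  have hm1 : StrictMono h1 := strictMono_of_deriv_pos p1
  let H0 : ℝ → ℝ := fun x => if x < 0 then h0 x else h1 x
  have Hl : ∀ x, x < 0 → H0 x = h0 x := fun x hx => by simp [H0, hx]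
  have Hr : ∀ x, ν < x → H0 x = h1 x := fun x hx => by simp [H0, not_lt.2 (hν.trans hx).le]
  set W : Set ℝ := Iio 0 ∪ Ioi ν with hW
  have hR2 := (H.Rν hν).1
  have hfl : ∀ x, x < 0 → f x = fL x := fun x hx => H.left x hx.le
  have hfr : ∀ x, ν < x → f x = fR x := fun x hx => H.right x (hν.trans hx).le
  have hRn : ∀ x, ν < x → fR x < 0 := fun x hx => (H.antiR hx).trans hR2
  have hM : MapsTo f W W := by
    rintro x (hx | hx)
    · right; rw [hfl x hx]; exact hLp x hx
    · left; rw [hfr x hx]; exact hRn x hx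
  obtain ⟨h, b1, b2, b3, b4, b5, b6⟩ := ext_conj H.kink H'.kink (h0 := H0) (W := W)
      (by
        rw [(H.dL 0).deriv, (H.dR 0).deriv, (H'.dL 0).deriv, (H'.dR 0).deriv, neg_mul_neg,
          neg_mul_neg, ← Real.exp_add, ← Real.exp_add, hr])
      (isOpen_Iio.union isOpen_Ioi) hM (by
        rintro x (hx | hx)
        · rw [hfl x hx, Hr _ (hLp x hx), Hl _ hx, H'.left _ (hneg _ hx).le]
          simp [h1]
        · rw [hfr x hx, Hl _ (hRn x hx), Hr _ hx, H'.right _ (hν.trans (h1p x hx)).le]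
          have := a6 (fL.symm x)
          simpa [h1] using this)
      (by
        rintro x (hx | hx)
        · have ee : H0 =ᶠ[𝓝 x] h0 := by
            filter_upwards [Iio_mem_nhds hx] with y hy using Hl y hy
          exact ⟨c0.contDiffAt.congr_of_eventuallyEq ee, by
            rw [ee.deriv_eq, (a1 x).deriv]; exact a3 x⟩
        · have ee : H0 =ᶠ[𝓝 x] h1 := by
            filter_upwards [Ioi_mem_nhds hx] with y hy using Hr y hy
          exact ⟨c1.contDiffAt.congr_of_eventuallyEq ee, by
            rw [ee.deriv_eq]; exact p1 x⟩)
      (by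
        rintro x (hx | hx) y (hy | hy) hxy
        · rw [Hl x hx, Hl y hy]; exact hm hxy
        · rw [Hl x hx, Hr y hy]; exact (hneg x hx).trans (hν.trans (h1p y hy))
        · exact absurd (hx.trans (hxy.trans hy)) (not_lt.2 hν.le)
        · rw [Hr x hx, Hr y hy]; exact hm1 hxy) (n0 := 2)
      (by
        left
        simp only [Function.iterate_succ_apply, Function.iterate_zero, id, H.f0, mem_Iio]
        rwa [H.right _ hν.le])
      (by
        simp only [Function.iterate_succ_apply, Function.iterate_zero, id, H.f0, H'.f0]
        rw [H.right _ hν.le, H'.right _ hν.le, Hl _ hR2]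
        have := a6 0
        simpa [H.L0, H'.L0, a4] using this)
  have hU := H.escape hν hxR
  have hU' := H'.escape hν hyR
  have hWW : H0 '' W = W := by
    apply Subset.antisymm
    · rintro _ ⟨x, hx | hx, rfl⟩
      · left; rw [Hl x hx]; exact hneg x hx
      · right; rw [Hr x hx]; exact h1p x hx
    · rintro y (hy | hy)
      · obtain ⟨x, rfl⟩ := a7 y
        have hx : x < 0 := by
          by_contra hcon
          have := hm.monotone (not_lt.1 hcon)
          rw [a4] at this
          exact absurd hy (not_lt.2 this)
        exact ⟨x, Or.inl hx, Hl x hx⟩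
      · obtain ⟨w, hw⟩ := a7 (gL.symm y)
        have hyw : gL (h0 w) = y := by rw [hw]; simp
        have hx : w < 0 := by
          by_contra hcon
          have h1 := hm.monotone (not_lt.1 hcon)
          have h2 := H'.antiL.antitone h1
          rw [a4, H'.L0, hyw] at h2
          exact absurd hy (not_lt.2 h2)
        refine ⟨fL w, Or.inr (hLp w hx), ?_⟩
        rw [Hr _ (hLp w hx)]
        simp [h1, hyw]
  have hmem : ∀ x, x ≠ xR → ∃ n, f^[n] x ∈ W := fun x hx => by
    have : x ∈ {x | x ≠ xR} := hx
    rwa [← hU] at this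
  refine ⟨h0, k0, h, a1, a2, a3, a4, a8, a6, fun x hx => ?_, fun x hx => b2 x (hmem x hx),
    fun x hx => b3 x (hmem x hx), ?_, ?_⟩
  · rw [b1 (Or.inl hx), Hl x hx]
  · rwa [hU] at b4
  · rw [hU, hWW, hU'] at b6; exact b6

lemma conj_rep (H : Cls ν C κ m α β f fL fR) (H' : Cls ν C κ m α' β' g gL gR) (hν : 0 < ν)
    {xR yR : ℝ} (hxR : fR xR = xR) (hyR : gR yR = yR)
    (hmul : β xR = β' yR)
    (hr : α 0 + β' 0 = β 0 + α' 0) :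
    ∃ h : ℝ → ℝ, 
      (∀ x, (∃ n, f.symm^[n] x ∈ Ioo 0 ν) → h (f.symm x) = g.symm (h x)) ∧
      (∀ x, (∃ n, f.symm^[n] x ∈ Ioo 0 ν) → ContDiffAt ℝ 1 h x ∧ 0 < deriv h x) ∧
      StrictMonoOn h {x | ∃ n, f.symm^[n] x ∈ Ioo 0 ν} ∧
      h '' {x | ∃ n, f.symm^[n] x ∈ Ioo 0 ν} = {y | ∃ n, g.symm^[n] y ∈ Ioo 0 ν} := by
  obtain ⟨x1, x2⟩ := H.xR_mem hν hxR
  obtain ⟨y1, y2⟩ := H'.xR_mem hν hyR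
  have K := H.kink.symm
  have K' := H'.kink.symm
  rw [H.f0] at K
  rw [H'.f0] at K'
  have lipS : ∀ {α β : ℝ → ℝ} {f fL fR : ℝ ≃ₜ ℝ} (_ : Cls ν C κ m α β f fL fR) (x y : ℝ),
      |-β (fR.symm x) - -β (fR.symm y)| ≤ C * |x - y| := by
    intro α β f fL fR H x y
    have h1 := H.lipR (fR.symm x) (fR.symm y)
    have h2 := H.contrRs x y
    have h3 := H.th
    have h4 : C * |fR.symm x - fR.symm y| ≤ C * |x - y| :=
      mul_le_mul_of_nonneg_left (by nlinarith [abs_nonneg (x - y)]) H.hC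
    rw [neg_sub_neg, abs_sub_comm]
    linarith
  have sR : fR.symm xR = xR := by rw [Homeomorph.symm_apply_eq, hxR]
  have sR' : gR.symm yR = yR := by rw [Homeomorph.symm_apply_eq, hyR]
  obtain ⟨h0, k0, a1, a2, a3, a4, a5, a6, a7, a8⟩ := conj_exists fR.symm
      (fun x => -β (fR.symm x)) gR.symm (fun x => -β' (gR.symm x)) (-1) xR yR C κ
      (by simp) H.dRs H'.dRs (lipS H) (lipS H') H.hκ (fun x => neg_le_neg (H.bκ _))
      (fun x => neg_le_neg (H'.bκ _)) sR sR' fR.symm.surjective gR.symm.surjective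
      (by simp only [sR, sR', hmul]) (Or.inl ⟨x1, y1⟩)
  have hm : StrictMono h0 := strictMono_of_pos a1 a3
  have c0 := contDiff_one_of a1 a2
  have z0 : fR.symm ν = 0 := by rw [Homeomorph.symm_apply_eq, H.R0]
  have z0' : gR.symm ν = 0 := by rw [Homeomorph.symm_apply_eq, H'.R0]
  have w0 : fL.symm ν = 0 := by rw [Homeomorph.symm_apply_eq, H.L0]
  have w0' : gL.symm ν = 0 := by rw [Homeomorph.symm_apply_eq, H'.L0]
  have f0 : f.symm ν = 0 := by rw [K.left _ le_rfl, z0]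
  have f0' : g.symm ν = 0 := by rw [K'.left _ le_rfl, z0']
  have hν1 : h0 ν = ν := by
    have := a6 ν
    rw [z0, a4] at this
    apply gR.symm.injective
    rw [← this, z0']
  -- bounds for symm
  have hmapf : ∀ {α β : ℝ → ℝ} {f fL fR : ℝ ≃ₜ ℝ} (_ : Cls ν C κ m α β f fL fR) (x : ℝ),
      0 ≤ x → x < ν → fR.symm x ∈ Ioo 0 ν := by
    intro α β f fL fR H x hx hxν
    have hR2 := (H.Rν hν).1
    constructor
    · by_contra hcon
      have := H.antiR.antitone (not_lt.1 hcon)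
      simp [H.R0] at this; linarith
    · by_contra hcon
      have := H.antiR.antitone (not_lt.1 hcon)
      simp at this; linarith
  have hin : ∀ x ∈ Ioo 0 ν, h0 x ∈ Ioo 0 ν := fun x hx => by
    have e1 := hm hx.1
    have e2 := hm hx.2
    rw [a4] at e1; rw [hν1] at e2
    exact ⟨e1, e2⟩
  obtain ⟨h, b1, b2, b3, b4, b5, b6⟩ := ext_conj K K' (h0 := h0) (W := Ioo 0 ν)
      (by
        rw [((homeo_symm_smooth H.kink.cR H.kink.dR).2 ν).deriv,
          ((homeo_symm_smooth H.kink.cL H.kink.dL).2 ν).deriv,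
          ((homeo_symm_smooth H'.kink.cR H'.kink.dR).2 ν).deriv,
          ((homeo_symm_smooth H'.kink.cL H'.kink.dL).2 ν).deriv, z0, z0', w0, w0',
          (H.dL 0).deriv, (H.dR 0).deriv, (H'.dL 0).deriv, (H'.dR 0).deriv, ← mul_inv, ← mul_inv,
          neg_mul_neg, neg_mul_neg, ← Real.exp_add, ← Real.exp_add, hr])
      isOpen_Ioo (fun x hx => by
        rw [K.left _ hx.2.le]; exact hmapf H x hx.1.le hx.2)
      (fun x hx => by
        rw [K.left _ hx.2.le, a6, K'.left _ (hin x hx).2.le])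
      (fun x _ => ⟨c0.contDiffAt, by rw [(a1 x).deriv]; exact a3 x⟩)
      (hm.strictMonoOn _) (n0 := 2)
      (by
        simp only [Function.iterate_succ_apply, Function.iterate_zero, id, f0]
        rw [K.left _ hν.le]; exact hmapf H 0 le_rfl hν)
      (by
        simp only [Function.iterate_succ_apply, Function.iterate_zero, id, f0, f0']
        rw [K.left _ hν.le, K'.left _ hν.le, a6, a4])
  have hWW : h0 '' Ioo 0 ν = Ioo 0 ν := by
    apply Subset.antisymm
    · rintro _ ⟨x, hx, rfl⟩; exact hin x hx
    · intro y hy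
      obtain ⟨x, rfl⟩ := a7 y
      refine ⟨x, ⟨?_, ?_⟩, rfl⟩
      · have := hy.1; rw [← a4] at this; exact hm.lt_iff_lt.1 this
      · have := hy.2; rw [← hν1] at this; exact hm.lt_iff_lt.1 (by rwa [hν1] at *)
  rw [hWW] at b6
  exact ⟨h, b2, b3, b4, b6⟩

end



lemma est {F l h : ℝ → ℝ} {S : Set ℝ} {xs ys θ D : ℝ} (h0 : 0 ≤ θ) (h1 : θ < 1) (hD : 0 ≤ D)
    (hS : MapsTo F S S) (c1 : ∀ x ∈ S, |F x - xs| ≤ θ * |x - xs|)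
    (c2 : ∀ x ∈ S, |h (F x) - ys| ≤ θ * |h x - ys|)
    (hl : ∀ x ∈ S, |l x - l (F x)| ≤ D * (|x - xs| + |h x - ys|)) (hc : ContinuousAt l xs)
    {x : ℝ} (hx : x ∈ S) : |l x - l xs| ≤ D / (1 - θ) * (|x - xs| + |h x - ys|) := by
  have h2 : 0 < 1 - θ := by linarith
  have hD1 : 0 ≤ D / (1 - θ) := by positivity
  have key : ∀ n : ℕ, ∀ x ∈ S, |l x - l (F^[n] x)| ≤ D / (1 - θ) * (|x - xs| + |h x - ys|) := by
    intro n
    induction n with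
    | zero => intro x _; simp; positivity
    | succ n ih =>
      intro x hx
      rw [Function.iterate_succ_apply]
      have e1 := hl x hx
      have e2 := ih (F x) (hS hx)
      have e3 := c1 x hx
      have e4 := c2 x hx
      have e5 : D / (1 - θ) * (|F x - xs| + |h (F x) - ys|) ≤
          D / (1 - θ) * (θ * |x - xs| + θ * |h x - ys|) := by gcongr
      have e6 : D / (1 - θ) * (|x - xs| + |h x - ys|) = D * (|x - xs| + |h x - ys|) +
          D / (1 - θ) * (θ * |x - xs| + θ * |h x - ys|) := by field_simp; ring
      have := abs_sub_le (l x) (l (F x)) (l (F^[n] (F x)))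
      linarith
  have t1 := tendsto_contr_on h0 h1 hS c1 hx
  have t2 : Tendsto (fun n => |l x - l (F^[n] x)|) atTop (𝓝 |l x - l xs|) :=
    ((hc.tendsto.comp t1).const_sub _).abs
  exact le_of_tendsto t2 (Eventually.of_forall fun n => key n x hx)

lemma boot {h k : ℝ → ℝ} (hd : ∀ x, HasDerivAt h (k x) x) (kp : ∀ x, 0 < k x) (h0 : h 0 = 0)
    {P ε : ℝ} (hP : 0 < P) (hε : ε < Real.log 2)
    (H : ∀ x ∈ Icc (-P) 0, |h x| ≤ 2 * P → |Real.log (k x)| ≤ ε) :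
    ∀ x ∈ Icc (-P) 0, |h x| ≤ 2 * P ∧ |Real.log (k x)| ≤ ε := by
  have hm := strictMono_of_pos hd kp
  have hc := cont_of_deriv hd
  suffices hs : -(2 * P) ≤ h (-P) by
    intro x hx
    have : |h x| ≤ 2 * P := by
      rw [abs_le]
      have e1 := hm.monotone hx.1
      have e2 := hm.monotone hx.2
      constructor <;> linarith
    exact ⟨this, H x hx this⟩
  by_contra hcon
  push Not at hcon
  obtain ⟨y, hy, hyP⟩ := intermediate_value_Ioo (by linarith : -P ≤ 0) hc.continuousOn
    (⟨hcon, by rw [h0]; linarith⟩ : -(2 * P) ∈ Ioo (h (-P)) (h 0))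
  obtain ⟨ξ, hξ, he⟩ := mvt_glob hd hy.2
  have e1 := hm hξ.1
  have e2 := hm hξ.2
  rw [h0, hyP] at he
  have := H ξ ⟨by linarith [hy.1, hξ.1], hξ.2.le⟩ (by rw [abs_le]; constructor <;> linarith)
  have h3 : Real.log (k ξ) < Real.log 2 := lt_of_le_of_lt ((le_abs_self _).trans this) hε
  have h4 : k ξ < 2 := (Real.log_lt_log_iff (kp ξ) (by norm_num)).1 h3
  nlinarith [hy.1, hy.2]

lemma abs_log_bounds {k ε : ℝ} (hk : 0 < k) (h : |Real.log k| ≤ ε) :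
    Real.exp (-ε) ≤ k ∧ k ≤ Real.exp ε := by
  have := abs_le.1 h
  constructor
  · rw [← Real.exp_log hk]; exact Real.exp_le_exp.2 this.1
  · rw [← Real.exp_log hk]; exact Real.exp_le_exp.2 this.2

lemma ratio_neg {h k : ℝ → ℝ} (hd : ∀ x, HasDerivAt h (k x) x) (kp : ∀ x, 0 < k x) (h0 : h 0 = 0)
    {P ε : ℝ} (H : ∀ x ∈ Icc (-P) 0, |Real.log (k x)| ≤ ε) {p : ℝ} (hp : 0 < p) (hpP : p ≤ P) :
    Real.exp (-ε) * p ≤ -h (-p) ∧ -h (-p) ≤ Real.exp ε * p := by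
  obtain ⟨ξ, hξ, he⟩ := mvt_glob hd (by linarith : -p < 0)
  obtain ⟨e1, e2⟩ := abs_log_bounds (kp ξ) (H ξ ⟨by linarith [hξ.1], hξ.2.le⟩)
  rw [h0] at he
  constructor <;> nlinarith

lemma L1_lem {κ : ℝ} (hκ : 0 < κ) : ∀ b b' : ℝ, κ ≤ b → b ≤ b' →
      Real.log (Real.exp b' - 1) - Real.log (Real.exp b - 1) ≤ (b' - b) / (1 - Real.exp (-κ)) := by
    intro b b' hb hbb
    have ht : Real.exp (-κ) < 1 := by simpa using hκ
    have hb0 : 0 < b := hκ.trans_le hb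
    have p1 : 0 < Real.exp b - 1 := by linarith [Real.add_one_lt_exp hb0.ne']
    have p2 : 0 < Real.exp b' - 1 := by linarith [Real.add_one_lt_exp (hb0.trans_le hbb).ne']
    rcases hbb.eq_or_lt with rfl | hlt
    · simp
    obtain ⟨c, hc, hce⟩ := exists_hasDerivAt_eq_slope (fun x => Real.log (Real.exp x - 1))
      (fun x => Real.exp x / (Real.exp x - 1)) hlt (fun x hx => by
        have : Real.exp x - 1 ≠ 0 := by
          have := Real.add_one_lt_exp (hb0.trans_le hx.1).ne'
          have := hb0.trans_le hx.1
          linarith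
        exact (((Real.continuous_exp.sub continuous_const).continuousAt).log this).continuousWithinAt)
      (fun x hx => by
        have : Real.exp x - 1 ≠ 0 := by
          have := Real.add_one_lt_exp (hb0.trans hx.1).ne'
          have := hb0.trans hx.1
          linarith
        exact ((Real.hasDerivAt_exp x).sub_const 1).log this)
    have hbb0 : 0 < b' - b := by linarith
    rw [eq_div_iff hbb0.ne'] at hce
    rw [← hce]
    have : Real.exp c / (Real.exp c - 1) ≤ 1 / (1 - Real.exp (-κ)) := by
      have hcκ : κ ≤ c := by linarith [hc.1]
      have p3 : 0 < Real.exp c - 1 := by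
        linarith [Real.add_one_lt_exp (hb0.trans hc.1).ne', hb0.trans hc.1]
      rw [div_le_div_iff₀ p3 (by linarith)]
      have : 1 ≤ Real.exp c * Real.exp (-κ) := by
        rw [← Real.exp_add]; exact Real.one_le_exp (by linarith)
      linarith
    calc _ ≤ 1 / (1 - Real.exp (-κ)) * (b' - b) := by gcongr
      _ = _ := by ring

section
variable {ν C κ m : ℝ} {α β : ℝ → ℝ} {f fL fR : ℝ ≃ₜ ℝ}
variable {α' β' : ℝ → ℝ} {g gL gR : ℝ ≃ₜ ℝ}

lemma deriv_rel {h k a b : ℝ → ℝ} {s : Set ℝ} (hs : UniqueDiffOn ℝ s) {x A B : ℝ} (hx : x ∈ s)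
    (hd : ∀ x, HasDerivAt h (k x) x) (ha : HasDerivAt a A x) (hb : HasDerivAt b B (h x))
    (he : ∀ y ∈ s, h (a y) = b (h y)) : k (a x) * A = B * k x := by
  have h1 : HasDerivWithinAt (fun y => h (a y)) (k (a x) * A) s x :=
    ((hd (a x)).comp x ha).hasDerivWithinAt
  have h2 : HasDerivWithinAt (fun y => b (h y)) (B * k x) s x :=
    (hb.comp x (hd x)).hasDerivWithinAt
  exact (hs x hx).eq_deriv s h1 (h2.congr he (he x hx))

lemma log_rel {a b A B : ℝ} (ha : 0 < a) (hb : 0 < b)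
    (h : a * Real.exp A = Real.exp B * b) : Real.log b - Real.log a = A - B := by
  have := congrArg Real.log h
  rw [Real.log_mul ha.ne' (Real.exp_pos _).ne', Real.log_mul (Real.exp_pos _).ne' hb.ne',
    Real.log_exp, Real.log_exp] at this
  linarith

lemma k_rel (H : Cls ν C κ m α β f fL fR) (H' : Cls ν C κ m α' β' g gL gR) (hν : ν ≤ 0)
    {xs ys : ℝ} (hxs : fL xs = xs) (hys : gL ys = ys) (hmul : α xs = α' ys)
    (hr : α 0 + β' 0 = β 0 + α' 0) {h k : ℝ → ℝ} (hd : ∀ x, HasDerivAt h (k x) x)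
    (kp : ∀ x, 0 < k x) (h0 : h 0 = 0) (hc : ∀ x, h (f x) = g (h x)) (w : ℝ) :
    |Real.log (k w) - Real.log (k (f w))| ≤ C * (|w - xs| + |h w - ys|) := by
  obtain ⟨-, m2, -⟩ := H.xL_mem hν hxs
  obtain ⟨-, m2', -⟩ := H'.xL_mem hν hys
  have hm := strictMono_of_pos hd kp
  rcases le_total w 0 with hw | hw
  · have e := deriv_rel (s := Iic 0) (uniqueDiffOn_Iic 0) hw hd (H.dL w) (H'.dL (h w)) (by
      intro y hy
      have := hc y
      rwa [H.left _ hy, H'.left _ (by have := hm.monotone hy; rwa [h0] at this)] at this)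
    rw [H.left _ hw, log_rel (A := α w) (B := α' (h w)) (kp _) (kp _) (by linarith)]
    have l1 := H.lipL w xs
    have l2 := H'.lipL ys (h w)
    rw [abs_sub_comm ys] at l2
    calc _ = |(α w - α xs) + (α' ys - α' (h w))| := by rw [hmul]; ring_nf
      _ ≤ _ := abs_add_le _ _
      _ ≤ _ := by linarith
  · have hw' : 0 ≤ h w := by have := hm.monotone hw; rwa [h0] at this
    have e := deriv_rel (s := Ici 0) (uniqueDiffOn_Ici 0) hw hd (H.dR w) (H'.dR (h w)) (by
      intro y hy
      have := hc y
      rwa [H.right _ hy, H'.right _ (by have := hm.monotone hy; rwa [h0] at this)] at this)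
    rw [H.right _ hw, log_rel (A := β w) (B := β' (h w)) (kp _) (kp _) (by linarith)]
    have l1 := H.lipR w 0
    have l2 := H'.lipR 0 (h w)
    have l3 := H.lipL 0 xs
    have l4 := H'.lipL ys 0
    rw [abs_of_nonneg (by linarith : 0 ≤ w - 0)] at l1
    rw [abs_of_nonpos (by linarith : 0 - h w ≤ 0)] at l2
    rw [abs_of_nonneg (by linarith : 0 ≤ 0 - xs)] at l3
    rw [abs_of_nonpos (by linarith : ys - 0 ≤ 0)] at l4
    rw [abs_of_nonneg (by linarith : 0 ≤ w - xs), abs_of_nonneg (by linarith : 0 ≤ h w - ys)]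
    rw [abs_le] at *
    constructor <;> nlinarith

/-- main estimate for `ν ≤ 0` -/
lemma bound_nonpos (H : Cls ν C κ m α β f fL fR) (H' : Cls ν C κ m α' β' g gL gR) (hν : ν ≤ 0)
    {xs ys : ℝ} (hxs : fL xs = xs) (hys : gL ys = ys) (hmul : α xs = α' ys)
    (hr : α 0 + β' 0 = β 0 + α' 0) {h k : ℝ → ℝ} (hd : ∀ x, HasDerivAt h (k x) x)
    (kc : Continuous k)
    (kp : ∀ x, 0 < k x) (h0 : h 0 = 0) (hxy : h xs = ys) (hc : ∀ x, h (f x) = g (h x))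
    (hk0 : ν = 0 → k 0 = 1) {P : ℝ} (hP : 0 < P) (hνP : -ν ≤ P)
    (hε : 12 * C / (1 - Real.exp (-κ)) * P < Real.log 2) :
    ∀ x ∈ Icc (-P) 0, |h x| ≤ 2 * P ∧ |Real.log (k x)| ≤ 12 * C / (1 - Real.exp (-κ)) * P := by
  obtain ⟨m1, m2, -⟩ := H.xL_mem hν hxs
  obtain ⟨m1', m2', -⟩ := H'.xL_mem hν hys
  have hm := strictMono_of_pos hd kp
  have ht := H.th
  have hC := H.hC
  set θ := Real.exp (-κ) with hθ
  have ht0 : 0 < θ := Real.exp_pos _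
  set D := 2 * C / (1 - θ) with hDdef
  have hD : 0 ≤ D := div_nonneg (by linarith) (by linarith)
  have hDD : 12 * C / (1 - θ) = 6 * D := by rw [hDdef]; ring
  have krel := k_rel H H' hν hxs hys hmul hr hd kp h0 hc
  have neg : ∀ x, x ≤ 0 → h x ≤ 0 := fun x hx => by have := hm.monotone hx; rwa [h0] at this
  have E : ∀ x, x ≤ 0 → |Real.log (k x) - Real.log (k xs)| ≤ D * (|x - xs| + |h x - ys|) := by
    intro x hx
    refine est (F := fun x => f (f x)) (l := fun x => Real.log (k x)) (h := h) (S := Iic 0)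
      (θ := θ) (D := 2 * C) ht0.le ht (by linarith) (fun y hy => (H.ff hν hxs hy).1)
      (fun y hy => (H.ff hν hxs hy).2) (fun y hy => ?_) (fun y hy => ?_)
      (kc.continuousAt.log (kp _).ne') hx
    · rw [hc, hc]; exact (H'.ff hν hys (neg y hy)).2
    · have e1 := krel y
      have e2 := krel (f y)
      have e3 : |f y - xs| ≤ |y - xs| := by
        have := H.contrL y xs
        rw [hxs, ← H.left y hy] at this
        nlinarith [abs_nonneg (y - xs)]
      have e4 : |h (f y) - ys| ≤ |h y - ys| := by
        have := H'.contrL (h y) ys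
        rw [hys, ← H'.left _ (neg y hy), ← hc] at this
        nlinarith [abs_nonneg (h y - ys)]
      have e5 : C * (|f y - xs| + |h (f y) - ys|) ≤ C * (|y - xs| + |h y - ys|) := by gcongr
      have := abs_sub_le (Real.log (k y)) (Real.log (k (f y))) (Real.log (k (f (f y))))
      linarith
  have hνν : h ν = ν := by
    have := hc 0
    rwa [H.f0, h0, H'.f0] at this
  have hξ : ∃ ξ, ν ≤ ξ ∧ ξ ≤ 0 ∧ k ξ = 1 := by
    rcases hν.eq_or_lt with h | h
    · exact ⟨0, hν, le_rfl, hk0 h⟩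
    · obtain ⟨ξ, hξ, he⟩ := mvt_glob hd h
      refine ⟨ξ, hξ.1.le, hξ.2.le, ?_⟩
      rw [h0, hνν] at he
      have : (k ξ - 1) * (0 - ν) = 0 := by linarith
      rcases mul_eq_zero.1 this with h | h <;> linarith
  obtain ⟨ξ, ξ1, ξ2, ξ3⟩ := hξ
  have L0 : |Real.log (k xs)| ≤ D * (2 * P) := by
    have := E ξ ξ2
    rw [ξ3, Real.log_one, zero_sub, abs_neg] at this
    refine this.trans (mul_le_mul_of_nonneg_left ?_ hD)
    have a1 : ν ≤ h ξ := by have := hm.monotone ξ1; rwa [hνν] at this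
    have a2 := neg ξ ξ2
    have b1 : |ξ - xs| ≤ P := by rw [abs_le]; constructor <;> linarith
    have b2 : |h ξ - ys| ≤ P := by rw [abs_le]; constructor <;> linarith
    linarith
  refine boot hd kp h0 hP hε fun x hx hhx => ?_
  have e1 := E x hx.2
  have e2 := neg x hx.2
  have b1 : |x - xs| ≤ P := by rw [abs_le]; constructor <;> linarith [hx.1, hx.2]
  have b2 : |h x - ys| ≤ 2 * P := by
    rw [abs_le]; constructor <;> linarith [(abs_le.1 hhx).1]
  have e3 : D * (|x - xs| + |h x - ys|) ≤ D * (P + 2 * P) := by gcongr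
  have e4 := abs_sub_abs_le_abs_sub (Real.log (k x)) (Real.log (k xs))
  rw [hDD]
  nlinarith [mul_nonneg hD hP.le]

lemma ratio_pos_nonpos (H : Cls ν C κ m α β f fL fR) (H' : Cls ν C κ m α' β' g gL gR) (hν : ν ≤ 0)
    {xs ys : ℝ} (hxs : fL xs = xs) (hys : gL ys = ys) (hmul : α xs = α' ys)
    (hr : α 0 + β' 0 = β 0 + α' 0) {h k : ℝ → ℝ} (hd : ∀ x, HasDerivAt h (k x) x)
    (kp : ∀ x, 0 < k x) (h0 : h 0 = 0) (hc : ∀ x, h (f x) = g (h x))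
    {P p ε : ℝ} (hp : 0 < p) (hpP : p ≤ P) (hνP : Real.exp m * p - ν ≤ P)
    (hB : ∀ x ∈ Icc (-P) 0, |h x| ≤ 2 * P ∧ |Real.log (k x)| ≤ ε) :
    Real.exp (-(ε + 5 * C * P)) * p ≤ h p ∧ h p ≤ Real.exp (ε + 5 * C * P) * p := by
  obtain ⟨m1, m2, -⟩ := H.xL_mem hν hxs
  obtain ⟨m1', m2', -⟩ := H'.xL_mem hν hys
  have hm := strictMono_of_pos hd kp
  have em := Real.exp_pos m
  have hfp : ∀ x, 0 ≤ x → x ≤ p → f x ∈ Icc (-P) 0 := by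
    intro x hx hxp
    have e1 := H.lipFR x 0
    rw [H.R0, sub_zero, abs_of_nonneg hx, ← H.right x hx] at e1
    have e2 := H.anti.antitone hx
    rw [H.f0] at e2
    have := (abs_le.1 e1).1
    exact ⟨by nlinarith, by linarith⟩
  have hhp0 : 0 ≤ h p := by have := hm.monotone hp.le; rwa [h0] at this
  have hhp : h p ≤ 2 * P := by
    have e1 := (hB _ (hfp p hp.le le_rfl)).1
    rw [hc, H'.right _ hhp0] at e1
    have e2 := H'.expR hhp0
    rw [H'.R0] at e2
    have e3 : 1 < Real.exp κ := by simpa using H'.hκ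
    have := (abs_le.1 e1).1
    nlinarith
  obtain ⟨ξ, hξ, he⟩ := mvt_glob hd hp
  rw [h0, sub_zero, sub_zero] at he
  have k1 := k_rel H H' hν hxs hys hmul hr hd kp h0 hc ξ
  have k2 := (hB _ (hfp ξ hξ.1.le hξ.2.le)).2
  have a1 := hm hξ.1
  have a2 := hm hξ.2
  rw [h0] at a1
  have hmp : 0 ≤ Real.exp m * p := by positivity
  have k3 : C * (|ξ - xs| + |h ξ - ys|) ≤ C * (5 * P) := by
    apply mul_le_mul_of_nonneg_left _ H.hC
    rw [abs_of_nonneg (by linarith [hξ.1]), abs_of_nonneg (by linarith)]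
    linarith [hξ.2]
  have k4 : |Real.log (k ξ)| ≤ ε + 5 * C * P := by
    have := abs_sub_abs_le_abs_sub (Real.log (k ξ)) (Real.log (k (f ξ)))
    linarith
  obtain ⟨b1, b2⟩ := abs_log_bounds (kp ξ) k4
  rw [he]
  exact ⟨by gcongr, by gcongr⟩

/-- main estimate for `ν > 0` -/
lemma bound_pos (H : Cls ν C κ m α β f fL fR) (H' : Cls ν C κ m α' β' g gL gR) (hν : 0 < ν)
    {u v xR yR : ℝ} (hu : fR (fL u) = u) (hv : gR (gL v) = v)
    (hxR : fR xR = xR) (hyR : gR yR = yR) (hmulR : β xR = β' yR)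
    (hmul : α u + β (fL u) = α' v + β' (gL v))
    {h k : ℝ → ℝ} (hd : ∀ x, HasDerivAt h (k x) x)
    (kc : Continuous k)
    (kp : ∀ x, 0 < k x) (h0 : h 0 = 0)
    (hc : ∀ x, h (fR (fL x)) = gR (gL (h x))) {P : ℝ} (hP : 0 < P)
    (hνP : Real.exp m * ν ≤ (1 - Real.exp (-κ)) * P)
    (hε : 12 * C / (1 - Real.exp (-κ)) * P < Real.log 2) :
    ∀ x ∈ Icc (-P) 0, |h x| ≤ 2 * P ∧ |Real.log (k x)| ≤ 12 * C / (1 - Real.exp (-κ)) * P := by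
  obtain ⟨u1, u2, -⟩ := H.uL_mem hν hu
  obtain ⟨v1, v2, -⟩ := H'.uL_mem hν hv
  obtain ⟨r1, r2⟩ := H.Rν hν
  obtain ⟨r1', r2'⟩ := H'.Rν hν
  have hx1 := H.xR_mem hν hxR
  have hy1 := H'.xR_mem hν hyR
  have hm := strictMono_of_pos hd kp
  have ht := H.th
  have hC := H.hC
  have em : 1 ≤ Real.exp m := Real.one_le_exp (H.hκ.le.trans H.κm)
  set θ := Real.exp (-κ) with hθ
  have ht0 : 0 < θ := Real.exp_pos _
  set D := 2 * C / (1 - θ) with hDdef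
  have hD : 0 ≤ D := div_nonneg (by linarith) (by linarith)
  have hDD : 12 * C / (1 - θ) = 6 * D := by rw [hDdef]; ring
  rw [abs_of_neg u1] at u2
  rw [abs_of_neg v1] at v2
  have uP : -P ≤ u := by nlinarith
  have vP : -P ≤ v := by nlinarith
  have mP : Real.exp m * ν ≤ P := by nlinarith
  have νP : ν ≤ P := by nlinarith
  have neg : ∀ x, x ≤ 0 → h x ≤ 0 := fun x hx => by have := hm.monotone hx; rwa [h0] at this
  have E : ∀ x, |Real.log (k x) - Real.log (k u)| ≤ D * (|x - u| + |h x - v|) := by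
    intro x
    refine est (F := fun x => fR (fL x)) (l := fun x => Real.log (k x)) (h := h) (S := univ)
      (θ := θ) (D := 2 * C) ht0.le ht (by linarith) (fun y _ => mem_univ _)
      (fun y _ => ?_) (fun y _ => ?_) (fun y _ => ?_)
      (kc.continuousAt.log (kp _).ne') (mem_univ _)
    · have := H.contrF y u; rwa [hu] at this
    · rw [hc]; have := H'.contrF (h y) v; rwa [hv] at this
    · have e := deriv_rel (s := univ) uniqueDiffOn_univ (mem_univ y) hd (H.dF y) (H'.dF (h y))
        (fun z _ => hc z)
      rw [one_mul, one_mul] at e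
      rw [log_rel (kp _) (kp _) e]
      have l1 := H.lipF y u
      have l2 := H'.lipF v (h y)
      rw [abs_sub_comm v] at l2
      calc _ = |(α y + β (fL y) - (α u + β (fL u))) +
            (α' v + β' (gL v) - (α' (h y) + β' (gL (h y))))| := by rw [hmul]; ring_nf
        _ ≤ _ := abs_add_le _ _
        _ ≤ _ := by linarith
  -- normalisation
  obtain ⟨ξ, hξ, he⟩ := mvt_glob hd r1
  have hF0 : h (fR ν) = gR ν := by have := hc 0; rwa [H.L0, h0, H'.L0] at this
  rw [h0, hF0] at he
  obtain ⟨η, hη, e1⟩ := mvt_glob H.dR hν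
  obtain ⟨η', hη', e1'⟩ := mvt_glob H'.dR hν
  rw [H.R0, sub_zero] at e1
  rw [H'.R0, sub_zero] at e1'
  have bb : |β' η' - β η| ≤ 2 * C * ν := by
    have l1 := H.lipR xR η
    have l2 := H'.lipR η' yR
    have a1 : |xR - η| ≤ ν := by rw [abs_le]; constructor <;> linarith [hη.1, hη.2, hx1.1, hx1.2]
    have a2 : |η' - yR| ≤ ν := by
      rw [abs_le]; constructor <;> linarith [hη'.1, hη'.2, hy1.1, hy1.2]
    have l1' := l1.trans (mul_le_mul_of_nonneg_left a1 hC)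
    have l2' := l2.trans (mul_le_mul_of_nonneg_left a2 hC)
    calc _ = |(β' η' - β' yR) + (β xR - β η)| := by rw [hmulR]; ring_nf
      _ ≤ _ := abs_add_le _ _
      _ ≤ _ := by linarith
  have L1 := L1_lem H.hκ
  rw [← hθ] at L1
  have kξ : |Real.log (k ξ)| ≤ D * ν := by
    have hb := H.bκ η
    have hb' := H'.bκ η'
    have p1 : 0 < Real.exp (β η) - 1 := by
      linarith [Real.add_one_lt_exp (H.hκ.trans_le hb).ne', H.hκ.trans_le hb]
    have p2 : 0 < Real.exp (β' η') - 1 := by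
      linarith [Real.add_one_lt_exp (H.hκ.trans_le hb').ne', H.hκ.trans_le hb']
    have hk : k ξ = (Real.exp (β' η') - 1) / (Real.exp (β η) - 1) := by
      rw [eq_div_iff p1.ne']
      have : ν * (k ξ * (Real.exp (β η) - 1) - (Real.exp (β' η') - 1)) = 0 := by
        have h1 : fR ν = ν - Real.exp (β η) * ν := by linarith
        have h2 : gR ν = ν - Real.exp (β' η') * ν := by linarith
        rw [h1, h2] at he
        linarith
      rcases mul_eq_zero.1 this with h | h <;> linarith
    rw [hk, Real.log_div p2.ne' p1.ne', hDdef]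
    have h1θ : 0 < 1 - θ := by linarith
    have hgoal : 2 * C / (1 - θ) * ν = (2 * C * ν) / (1 - θ) := by ring
    rw [hgoal]
    rw [abs_le] at bb
    rcases le_total (β η) (β' η') with hle | hle
    · have q := L1 _ _ hb hle
      have q2 : Real.log (Real.exp (β η) - 1) ≤ Real.log (Real.exp (β' η') - 1) :=
        Real.log_le_log p1 (by linarith [Real.exp_le_exp.2 hle])
      rw [abs_of_nonneg (by linarith)]
      exact q.trans (by gcongr; linarith)
    · have q := L1 _ _ hb' hle
      have q2 : Real.log (Real.exp (β' η') - 1) ≤ Real.log (Real.exp (β η) - 1) :=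
        Real.log_le_log p2 (by linarith [Real.exp_le_exp.2 hle])
      rw [abs_of_nonpos (by linarith), neg_sub]
      exact q.trans (by gcongr; linarith)
  have L0 : |Real.log (k u)| ≤ D * (3 * P) := by
    have e2 := E ξ
    have a1 : gR ν < h ξ := by have := hm hξ.1; rwa [hF0] at this
    have a2 := neg ξ hξ.2.le
    have b1 : |ξ - u| ≤ P := by rw [abs_le]; constructor <;> linarith [hξ.1, hξ.2]
    have b2 : |h ξ - v| ≤ P := by rw [abs_le]; constructor <;> linarith
    have e3 : D * (|ξ - u| + |h ξ - v|) ≤ D * (P + P) := by gcongr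
    have e4 := abs_sub_abs_le_abs_sub (Real.log (k u)) (Real.log (k ξ))
    rw [abs_sub_comm] at e4
    have e5 : D * ν ≤ D * P := by gcongr
    linarith
  refine boot hd kp h0 hP hε fun x hx hhx => ?_
  have e1 := E x
  have e2 := neg x hx.2
  have b1 : |x - u| ≤ P := by rw [abs_le]; constructor <;> linarith [hx.1, hx.2]
  have b2 : |h x - v| ≤ 2 * P := by
    rw [abs_le]; constructor <;> linarith [(abs_le.1 hhx).1]
  have e3 : D * (|x - u| + |h x - v|) ≤ D * (P + 2 * P) := by gcongr
  have e4 := abs_sub_abs_le_abs_sub (Real.log (k x)) (Real.log (k u))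
  rw [hDD]
  linarith

end



def PdPos (f g : ℝ → ℝ) (N M : Set ℝ) : Prop :=
    ∃ xR uL uR yR vL vR : ℝ,
      0 < xR ∧ xR ∈ N ∧ f xR = xR ∧
      1 < |deriv f xR| ∧
      uL < 0 ∧ xR < uR ∧ uL ∈ N ∧ uR ∈ N ∧ uL ≠ uR ∧
      f uL = uR ∧ f uR = uL ∧
      |deriv f uL * deriv f uR| < 1 ∧
      0 < yR ∧ yR ∈ M ∧ g yR = yR ∧
      1 < |deriv g yR| ∧
      vL < 0 ∧ yR < vR ∧ vL ∈ M ∧ vR ∈ M ∧ vL ≠ vR ∧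
      g vL = vR ∧
      g vR = vL ∧
      |deriv g vL * deriv g vR| < 1 ∧
      DiffConjOn f g (basinRep f N xR) (basinRep g M yR) ∧
      DiffConjOn f g (basinAttr2 f N uL uR) (basinAttr2 g M vL vR)

section
variable {ν C κ m : ℝ} {α β : ℝ → ℝ} {f fL fR : ℝ ≃ₜ ℝ}
variable {α' β' : ℝ → ℝ} {g gL gR : ℝ ≃ₜ ℝ}

lemma Cls.tend_neg (H : Cls ν C κ m α β f fL fR) (hν : 0 < ν) {u : ℝ} (hu : fR (fL u) = u)
    {w : ℝ} (hw : w < 0) : Tendsto (fun n => f^[2 * n] w) atTop (𝓝 u) := by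
  obtain ⟨r1, -⟩ := H.Rν hν
  have hff : ∀ y, y < 0 → f (f y) = fR (fL y) := fun y hy => by
    rw [H.left _ hy.le, H.right]
    have := H.antiL hy
    rw [H.L0] at this; linarith
  have := tendsto_contr_on (F := f^[2]) (S := Iio 0) (xs := u) (Real.exp_pos (-κ)).le H.th
    (fun y hy => by
      show f (f y) < 0
      rw [hff y hy]
      have := H.monoF hy
      simp only [H.L0] at this
      linarith)
    (fun y hy => by
      show |f (f y) - u| ≤ _
      rw [hff y hy]
      have := H.contrF y u
      rwa [hu] at this) hw
  simpa only [Function.iterate_mul] using this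

lemma Cls.f_uL (H : Cls ν C κ m α β f fL fR) (hν : 0 < ν) {u : ℝ} (hu : fR (fL u) = u) :
    f u = fL u ∧ f (fL u) = u := by
  obtain ⟨u1, -, u3, -⟩ := H.uL_mem hν hu
  exact ⟨H.left _ u1.le, by rw [H.right _ (by linarith), hu]⟩

lemma Cls.basinAttr_eq (H : Cls ν C κ m α β f fL fR) (hν : 0 < ν) {u xR qm qp : ℝ}
    (hu : fR (fL u) = u) (hxR : fR xR = xR) (h1 : qm < u) (h2 : f qp ≤ qm) :
    basinAttr2 f (Ioo qm qp) u (fL u) = {x | x ≠ xR ∧ qm < x ∧ qm < f x} := by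
  obtain ⟨u1, -, u3, -⟩ := H.uL_mem hν hu
  obtain ⟨f1, f2⟩ := H.f_uL hν hu
  obtain ⟨x1, x2⟩ := H.xR_mem hν hxR
  have hfx : f xR = xR := by rw [H.right _ x1.le, hxR]
  obtain ⟨r1, -⟩ := H.Rν hν
  ext x
  constructor
  · rintro ⟨hx, hN, ht⟩
    refine ⟨?_, hx.1, (hN 1).1⟩
    rintro rfl
    simp only [Function.iterate_fixed hfx] at ht
    rcases ht with h | h
    · have := tendsto_nhds_unique tendsto_const_nhds h; linarith
    · have := tendsto_nhds_unique tendsto_const_nhds h; linarith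
  · rintro ⟨hne, hx1, hx2⟩
    have lt_qp : ∀ y, qm < f y → y < qp := fun y hy => by
      by_contra hcon
      have := H.anti.antitone (not_lt.1 hcon); linarith
    have hqm : qm < f (f qm) := by
      have hq0 : qm < 0 := h1.trans u1
      rw [H.left _ hq0.le, H.right]
      · have := H.contrF qm u
        rw [hu, abs_of_neg (by linarith : qm - u < 0)] at this
        have := (abs_le.1 this).1
        nlinarith [H.th]
      · have := H.antiL hq0
        rw [H.L0] at this; linarith
    have inv : ∀ n : ℕ, qm < f^[n] x ∧ qm < f (f^[n] x) := by
      intro n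
      induction n with
      | zero => exact ⟨hx1, hx2⟩
      | succ n ih =>
        rw [Function.iterate_succ_apply']
        refine ⟨ih.2, ?_⟩
        have := H.anti (H.anti ih.1)
        linarith
    refine ⟨⟨hx1, lt_qp x hx2⟩, fun n => ⟨(inv n).1, lt_qp _ (inv n).2⟩, ?_⟩
    have hesc : ∃ n, f^[n] x ∈ Iio 0 ∪ Ioi ν := by
      have : x ∈ {x | x ≠ xR} := hne
      rwa [← H.escape hν hxR] at this
    have hM : MapsTo f (Iio 0 ∪ Ioi ν) (Iio 0 ∪ Ioi ν) := by
      rintro y (hy | hy)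
      · right
        rw [H.left _ (le_of_lt hy)]
        have := H.antiL hy
        rwa [H.L0] at this
      · left
        rw [H.right _ (hν.trans hy).le]
        exact (H.antiR hy).trans r1
    obtain ⟨n, hn⟩ := hesc
    have hn2 := iter_mapsTo hM (by omega : n ≤ 2 * n) hn
    have shift : ∀ l, Tendsto (fun j => f^[2 * j] (f^[2 * n] x)) atTop (𝓝 l) →
        Tendsto (fun j => f^[2 * j] x) atTop (𝓝 l) := by
      intro l hl
      rw [← tendsto_add_atTop_iff_nat n]
      refine hl.congr fun j => ?_
      rw [← Function.iterate_add_apply]; congr 2; ring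
    rcases hn2 with h | h
    · left; exact shift _ (H.tend_neg hν hu h)
    · right
      apply shift
      set y := f^[2 * n] x
      have hy : fL.symm y < 0 := by
        by_contra hcon
        have := H.antiL.antitone (not_lt.1 hcon)
        simp [H.L0] at this
        exact absurd h (not_lt.2 this)
      have t := H.tend_neg hν hu hy
      have t2 := (f.continuous.tendsto u).comp t
      rw [f1] at t2
      refine t2.congr fun j => ?_
      simp only [Function.comp]
      rw [← Function.iterate_succ_apply' f, Function.iterate_succ_apply, H.left _ hy.le]
      simp

lemma Cls.basinRep_eq (H : Cls ν C κ m α β f fL fR) (hν : 0 < ν) {u xR qm qp : ℝ}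
    (hu : fR (fL u) = u) (hxR : fR xR = xR) (h1 : qm < u) (h2 : fL u < qp) :
    basinRep f (Ioo qm qp) xR = {x | ∃ n, f.symm^[n] x ∈ Ioo 0 ν} := by
  obtain ⟨u1, -, u3, -⟩ := H.uL_mem hν hu
  obtain ⟨f1, f2⟩ := H.f_uL hν hu
  obtain ⟨x1, x2⟩ := H.xR_mem hν hxR
  obtain ⟨r1, -⟩ := H.Rν hν
  have fi : ∀ n : ℕ, ∀ w, f^[n] (f.symm^[n] w) = w := fun n w =>
    Function.LeftInverse.iterate (fun z => f.apply_symm_apply z) n w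
  ext x
  constructor
  · rintro ⟨hx, s, s0, sN, sf, st⟩
    have hs : ∀ n : ℕ, s n = f.symm^[n] x := by
      intro n
      induction n with
      | zero => exact s0
      | succ n ih =>
        rw [Function.iterate_succ_apply', ← ih, Homeomorph.eq_symm_apply]
        exact sf n
    obtain ⟨n, hn⟩ := (st.eventually (Ioo_mem_nhds x1 x2)).exists
    exact ⟨n, by rwa [← hs]⟩
  · rintro ⟨n, hn⟩
    have inv : MapsTo f (Icc u (fL u)) (Icc u (fL u)) := by
      rintro y ⟨y1, y2⟩
      have a1 := H.anti.antitone y1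
      have a2 := H.anti.antitone y2
      rw [f1] at a1; rw [f2] at a2
      exact ⟨a2, a1⟩
    have santi := H.kink.symm.anti
    have inv' : MapsTo f.symm (Icc u (fL u)) (Icc u (fL u)) := by
      rintro y ⟨y1, y2⟩
      have a1 := santi.antitone y1
      have a2 := santi.antitone y2
      rw [(Homeomorph.symm_apply_eq f).2 f1.symm] at a2
      rw [(Homeomorph.symm_apply_eq f).2 f2.symm] at a1
      exact ⟨a2, a1⟩
    have hx : x ∈ Icc u (fL u) := by
      rw [← fi n x]
      exact inv.iterate n ⟨by linarith [hn.1], by linarith [hn.2]⟩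
    have sub : Icc u (fL u) ⊆ Ioo qm qp := fun y hy => ⟨h1.trans_le hy.1, hy.2.trans_lt h2⟩
    refine ⟨sub hx, fun k => f.symm^[k] x, rfl, fun k => sub (inv'.iterate k hx), fun k => ?_, ?_⟩
    · show f (f.symm^[k+1] x) = f.symm^[k] x
      rw [Function.iterate_succ_apply']; simp
    · have hleft : ∀ y, y < ν → f.symm y = fR.symm y := fun y hy => by
        have := H.kink.symm.left y
        rw [H.f0] at this
        exact this hy.le
      have := tendsto_contr_on (F := f.symm) (S := Ioo 0 ν) (xs := xR) (Real.exp_pos (-κ)).le H.th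
        (fun y hy => by
          rw [hleft y hy.2]
          constructor
          · by_contra hcon
            have := H.antiR.antitone (not_lt.1 hcon)
            simp [H.R0] at this; linarith [hy.2]
          · by_contra hcon
            have := H.antiR.antitone (not_lt.1 hcon)
            simp at this; linarith [hy.1])
        (fun y hy => by
          rw [hleft y hy.2]
          have := H.contrRs y xR
          rwa [(Homeomorph.symm_apply_eq fR).2 hxR.symm] at this) hn
      rw [← tendsto_add_atTop_iff_nat n]
      refine this.congr fun j => ?_
      rw [← Function.iterate_add_apply]

lemma Cls.deriv_pos (H : Cls ν C κ m α β f fL fR) {x : ℝ} (hx : 0 < x) :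
    deriv f x = -Real.exp (β x) := by
  rw [← (H.dR x).deriv]
  refine EventuallyEq.deriv_eq ?_
  filter_upwards [Ioi_mem_nhds hx] with y hy using H.right y (le_of_lt hy)

lemma Cls.deriv_neg (H : Cls ν C κ m α β f fL fR) {x : ℝ} (hx : x < 0) :
    deriv f x = -Real.exp (α x) := by
  rw [← (H.dL x).deriv]
  refine EventuallyEq.deriv_eq ?_
  filter_upwards [Iio_mem_nhds hx] with y hy using H.left y (le_of_lt hy)

lemma core_pos (H : Cls ν C κ m α β f fL fR) (H' : Cls ν C κ m α' β' g gL gR) (hν : 0 < ν)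
    {p qm qp u v xR yR : ℝ} (hu : fR (fL u) = u) (hv : gR (gL v) = v)
    (hxR : fR xR = xR) (hyR : gR yR = yR) (hmulR : β xR = β' yR)
    (hr : α 0 + β' 0 = β 0 + α' 0)
    {h : ℝ → ℝ} (c1 : ∀ x, x ≠ xR → h (f x) = g (h x))
    (c2 : ∀ x, x ≠ xR → ContDiffAt ℝ 1 h x ∧ 0 < deriv h x) (c3 : StrictMonoOn h {x | x ≠ xR})
    (c4 : h '' {x | x ≠ xR} = {y | y ≠ yR}) (hq : h (-p) = qm)
    (hp : 0 < p) (p1 : -p < u) (p2 : fL u < p) (p3 : f p ≤ -p) (q1 : qm < v) (q2 : gL v < qp)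
    (q3 : g qp ≤ qm) : PdPos f g (Ioo (-p) p) (Ioo qm qp) := by
  obtain ⟨u1, -, u3, -⟩ := H.uL_mem hν hu
  obtain ⟨f1, f2⟩ := H.f_uL hν hu
  obtain ⟨x1, x2⟩ := H.xR_mem hν hxR
  obtain ⟨v1, -, v3, -⟩ := H'.uL_mem hν hv
  obtain ⟨g1, g2⟩ := H'.f_uL hν hv
  obtain ⟨y1, y2⟩ := H'.xR_mem hν hyR
  have hfx : f xR = xR := by rw [H.right _ x1.le, hxR]
  have hgy : g yR = yR := by rw [H'.right _ y1.le, hyR]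
  refine ⟨xR, u, fL u, yR, v, gL v, x1, ⟨by linarith, by linarith⟩, hfx, ?_, u1, by linarith,
    ⟨p1, by linarith⟩, ⟨by linarith, p2⟩, by linarith, f1, f2, ?_, y1, ⟨by linarith, by linarith⟩,
    hgy, ?_, v1, by linarith, ⟨q1, by linarith⟩, ⟨by linarith, q2⟩, by linarith, g1, g2, ?_, ?_, ?_⟩
  · rw [H.deriv_pos x1, abs_neg, abs_of_pos (Real.exp_pos _)]
    simpa using H.hκ.trans_le (H.bκ xR)
  · rw [H.deriv_neg u1, H.deriv_pos (by linarith), neg_mul_neg, ← Real.exp_add,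
      abs_of_pos (Real.exp_pos _)]
    have := H.ab u (fL u)
    have := H.hκ
    simp; linarith
  · rw [H'.deriv_pos y1, abs_neg, abs_of_pos (Real.exp_pos _)]
    simpa using H'.hκ.trans_le (H'.bκ yR)
  · rw [H'.deriv_neg v1, H'.deriv_pos (by linarith), neg_mul_neg, ← Real.exp_add,
      abs_of_pos (Real.exp_pos _)]
    have := H'.ab v (gL v)
    have := H.hκ
    simp; linarith
  · rw [H.basinRep_eq hν hu hxR p1 p2, H'.basinRep_eq hν hv hyR q1 q2]
    obtain ⟨h, b1, b2, b3, b4⟩ := conj_rep H H' hν hxR hyR hmulR hr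
    have hop : IsOpen {x | ∃ n, f.symm^[n] x ∈ Ioo 0 ν} := by
      rw [setOf_exists]
      exact isOpen_iUnion fun n => isOpen_Ioo.preimage (f.symm.continuous.iterate n)
    refine ⟨h, ?_, fun x hx hfx => ?_⟩
    · rw [← b4]
      exact diffeo_of hop b3.injOn b2
    · have := b1 _ hfx
      rw [f.symm_apply_apply] at this
      rw [this, g.apply_symm_apply]
  · rw [H.basinAttr_eq hν hu hxR p1 p3, H'.basinAttr_eq hν hv hyR q1 q3]
    have hop : IsOpen {x | x ≠ xR ∧ -p < x ∧ -p < f x} := by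
      have : {x | x ≠ xR ∧ -p < x ∧ -p < f x} = {xR}ᶜ ∩ (Ioi (-p) ∩ f ⁻¹' (Ioi (-p))) := by
        ext x; simp
      rw [this]
      exact isOpen_compl_singleton.inter (isOpen_Ioi.inter (isOpen_Ioi.preimage f.continuous))
    have hpx : -p ≠ xR := by linarith
    have hfne : ∀ x, x ≠ xR → f x ≠ xR := fun x hx hcon => hx (f.injective (hcon.trans hfx.symm))
    refine ⟨h, ?_, fun x hx _ => c1 x hx.1⟩
    have him : h '' {x | x ≠ xR ∧ -p < x ∧ -p < f x} = {y | y ≠ yR ∧ qm < y ∧ qm < g y} := by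
      ext y
      constructor
      · rintro ⟨x, ⟨a1, a2, a3⟩, rfl⟩
        refine ⟨?_, ?_, ?_⟩
        · have : h x ∈ h '' {x | x ≠ xR} := ⟨x, a1, rfl⟩
          rw [c4] at this; exact this
        · rw [← hq]; exact c3 hpx a1 a2
        · rw [← hq, ← c1 x a1]; exact c3 hpx (hfne x a1) a3
      · rintro ⟨a1, a2, a3⟩
        have : y ∈ h '' {x | x ≠ xR} := by rw [c4]; exact a1
        obtain ⟨x, hx, rfl⟩ := this
        refine ⟨x, ⟨hx, ?_, ?_⟩, rfl⟩
        · rw [← hq] at a2; exact (c3.lt_iff_lt hpx hx).1 a2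
        · rw [← hq, ← c1 x hx] at a3; exact (c3.lt_iff_lt hpx (hfne x hx)).1 a3
    rw [← him]
    exact diffeo_of hop (c3.injOn.mono fun x hx => hx.1) (fun x hx => c2 x hx.1)

end

def QB (δ p qm qp : ℝ) : Prop := qm < 0 ∧ 0 < qp ∧
  (1 - δ) * p < |qm| ∧ |qm| < (1 + δ) * p ∧ (1 - δ) * p < |qp| ∧ |qp| < (1 + δ) * p

set_option maxHeartbeats 2000000 in
theorem core {C κ m δ : ℝ} (hC : 0 ≤ C) (hκ : 0 < κ) (hκm : κ ≤ m) (hδ : 0 < δ) (hδ1 : δ < 1) :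
    ∃ p0 > 0, ∃ c > 0, ∀ p, 0 < p → p ≤ p0 → ∀ (ν : ℝ) (α β α' β' : ℝ → ℝ)
      (f fL fR g gL gR : ℝ ≃ₜ ℝ), Cls ν C κ m α β f fL fR → Cls ν C κ m α' β' g gL gR →
      |ν| ≤ c * p → α 0 + β' 0 = β 0 + α' 0 →
      (ν ≤ 0 → ∀ xs ys, fL xs = xs → gL ys = ys → α xs = α' ys →
        ∃ qm qp, QB δ p qm qp ∧ DiffConjOn f g (Ioo (-p) p) (Ioo qm qp)) ∧
      (0 < ν → ∀ u v xR yR, fR (fL u) = u → gR (gL v) = v → fR xR = xR → gR yR = yR →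
        β xR = β' yR → α u + β (fL u) = α' v + β' (gL v) →
        ∃ qm qp, QB δ p qm qp ∧ PdPos f g (Ioo (-p) p) (Ioo qm qp)) := by
  have ht : Real.exp (-κ) < 1 := by simpa using hκ
  set θ := Real.exp (-κ) with hθ
  have ht0 : 0 < θ := Real.exp_pos _
  have h1θ : 0 < 1 - θ := by linarith
  set K := 12 * C / (1 - θ) + 5 * C with hK
  have hK1 : 0 ≤ 12 * C / (1 - θ) := by positivity
  have hK0 : 0 ≤ K := by positivity
  have em : 1 ≤ Real.exp m := Real.one_le_exp (by linarith)
  have em' : Real.exp (-m) * Real.exp m = 1 := by rw [← Real.exp_add]; simp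
  have eκ : 1 < Real.exp κ := by simpa using hκ
  obtain ⟨ε, ε0, e1, e2, e3, e4⟩ : ∃ ε : ℝ, 0 < ε ∧ ε < κ / 2 ∧ Real.exp ε < 1 + δ ∧
      1 - δ < Real.exp (-ε) ∧ ε < Real.log 2 := by
    have t1 : ∀ᶠ ε : ℝ in 𝓝[>] 0, ε < κ / 2 := nhdsWithin_le_nhds (Iio_mem_nhds (by linarith))
    have t2 : ∀ᶠ ε : ℝ in 𝓝[>] 0, Real.exp ε < 1 + δ := nhdsWithin_le_nhds
      ((Real.continuous_exp.continuousAt).eventually_lt_const (by simpa using hδ))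
    have t3 : ∀ᶠ ε : ℝ in 𝓝[>] 0, 1 - δ < Real.exp (-ε) := nhdsWithin_le_nhds
      (((Real.continuous_exp.comp continuous_neg).continuousAt).eventually_const_lt
        (by simpa using hδ))
    have t4 : ∀ᶠ ε : ℝ in 𝓝[>] 0, ε < Real.log 2 :=
      nhdsWithin_le_nhds (Iio_mem_nhds (Real.log_pos (by norm_num)))
    have t5 : ∀ᶠ ε : ℝ in 𝓝[>] 0, 0 < ε := self_mem_nhdsWithin
    obtain ⟨ε, h⟩ := (t5.and (t1.and (t2.and (t3.and t4)))).exists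
    exact ⟨ε, h⟩
  have hεκ : Real.exp ε < Real.exp κ := Real.exp_lt_exp.2 (by linarith)
  have hεθ : θ < Real.exp (-ε) := Real.exp_lt_exp.2 (by linarith)
  refine ⟨ε / ((K + 1) * (2 * Real.exp m)), by positivity,
    min ((1 - θ) * Real.exp (-m) * θ / 2) (Real.exp κ - Real.exp ε),
    lt_min (by positivity) (by linarith), ?_⟩
  intro p hp hpp ν α β α' β' f fL fR g gL gR H H' hνc hr
  set P := 2 * Real.exp m * p with hP
  have hP0 : 0 < P := by positivity
  have hpP : p ≤ P := by nlinarith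
  have hKP : K * P ≤ ε := by
    rw [le_div_iff₀ (by positivity)] at hpp
    nlinarith
  have hν1 : |ν| ≤ (1 - θ) * Real.exp (-m) * θ / 2 * p :=
    hνc.trans (mul_le_mul_of_nonneg_right (min_le_left _ _) hp.le)
  have hν2 : |ν| ≤ (Real.exp κ - Real.exp ε) * p :=
    hνc.trans (mul_le_mul_of_nonneg_right (min_le_right _ _) hp.le)
  have hν3 : Real.exp m * |ν| ≤ (1 - θ) * (θ / 2 * p) := by
    calc _ ≤ Real.exp m * ((1 - θ) * Real.exp (-m) * θ / 2 * p) := by gcongr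
      _ = (Real.exp (-m) * Real.exp m) * ((1 - θ) * (θ / 2 * p)) := by ring
      _ = _ := by rw [em', one_mul]
  have hν4 : |ν| ≤ (1 - θ) * (θ / 2 * p) := by nlinarith [abs_nonneg ν]
  have hθp : θ / 2 * p < p / 2 := by nlinarith
  have hν5 : |ν| < p / 2 := by nlinarith [mul_pos ht0 hp]
  have hε12 : 12 * C / (1 - θ) * P ≤ ε := by
    have : 0 ≤ 5 * C * P := by positivity
    rw [hK] at hKP; linarith
  have hε5 : 12 * C / (1 - θ) * P + 5 * C * P ≤ ε := by rw [hK] at hKP; linarith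
  have wk : ∀ {a : ℝ} {y : ℝ}, a ≤ ε → Real.exp (-a) * p ≤ y → y ≤ Real.exp a * p →
      Real.exp (-ε) * p ≤ y ∧ y ≤ Real.exp ε * p := by
    intro a y ha h1 h2
    constructor
    · refine le_trans ?_ h1; gcongr
    · refine h2.trans ?_; gcongr
  have fin : ∀ {y : ℝ}, Real.exp (-ε) * p ≤ y → y ≤ Real.exp ε * p →
      (1 - δ) * p < y ∧ y < (1 + δ) * p := fun h1 h2 =>
    ⟨lt_of_lt_of_le (by gcongr) h1, lt_of_le_of_lt h2 (by gcongr)⟩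
  have expp : 0 < Real.exp (-ε) * p := by positivity
  constructor
  · intro hν xs ys hxs hys hmul
    rw [abs_of_nonpos hν] at hν5
    obtain ⟨h, k, a1, a2, a3, a4, a5, a6, a7⟩ := conj_nonpos H H' hν hxs hys hmul hr
    have hB := bound_nonpos H H' hν hxs hys hmul hr a1 a2 a3 a4 a5 a6 a7 hP0
      (by linarith) (lt_of_le_of_lt hε12 e4)
    rw [← hθ] at hB
    have hm := strictMono_of_pos a1 a3
    obtain ⟨q1, q2⟩ := ratio_neg a1 a3 a4 (fun x hx => (hB x hx).2) hp hpP
    obtain ⟨r1, r2⟩ := ratio_pos_nonpos H H' hν hxs hys hmul hr a1 a3 a4 a6 hp hpP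
      (by rw [hP]; nlinarith) hB
    obtain ⟨q1, q2⟩ := wk hε12 q1 q2
    obtain ⟨r1, r2⟩ := wk hε5 r1 r2
    refine ⟨h (-p), h p, ?_, ?_⟩
    · have b1 : h (-p) < 0 := by linarith
      have b2 : 0 < h p := by linarith
      rw [QB, abs_of_neg b1, abs_of_pos b2]
      exact ⟨b1, b2, (fin q1 q2).1, (fin q1 q2).2, (fin r1 r2).1, (fin r1 r2).2⟩
    · refine ⟨h, ?_, fun x _ _ => a6 x⟩
      have c0 := contDiff_one_of a1 a2
      have him : h '' Ioo (-p) p = Ioo (h (-p)) (h p) := by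
        apply Subset.antisymm
        · rintro _ ⟨x, hx, rfl⟩
          exact ⟨hm hx.1, hm hx.2⟩
        · exact intermediate_value_Ioo (by linarith) c0.continuous.continuousOn
      rw [← him]
      exact diffeo_of isOpen_Ioo hm.injective.injOn
        (fun x _ => ⟨c0.contDiffAt, by rw [(a1 x).deriv]; exact a3 x⟩)
  · intro hν u v xR yR hu hv hxR hyR hmulR hmul
    rw [abs_of_pos hν] at hν2 hν3 hν4 hν5
    obtain ⟨h0, k0, h, a1, a2, a3, a4, a5, a6, a7, c1, c2, c3, c4⟩ :=
      conj_attr H H' hν hu hv hxR hyR hmul hr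
    have hB := bound_pos H H' hν hu hv hxR hyR hmulR hmul a1 a2 a3 a4 a6 hP0
      (by rw [← hθ]; refine hν3.trans ?_; gcongr; linarith) (lt_of_le_of_lt hε12 e4)
    rw [← hθ] at hB
    obtain ⟨q1, q2⟩ := ratio_neg a1 a3 a4 (fun x hx => (hB x hx).2) hp hpP
    obtain ⟨q1, q2⟩ := wk hε12 q1 q2
    have hb : ∀ {α β : ℝ → ℝ} {f fL fR : ℝ ≃ₜ ℝ} {u : ℝ} (_ : Cls ν C κ m α β f fL fR)
        (_ : fR (fL u) = u), -(θ / 2 * p) ≤ u ∧ fL u < p := by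
      intro α β f fL fR u H hu
      obtain ⟨u1, u2, -⟩ := H.uL_mem hν hu
      rw [← hθ, abs_of_neg u1] at u2
      have u4 : -(θ / 2 * p) ≤ u := by nlinarith
      refine ⟨u4, ?_⟩
      have := H.contrL u 0
      rw [H.L0, sub_zero, abs_of_neg u1, ← hθ] at this
      have := (abs_le.1 this).2
      nlinarith
    have hgp : ∀ {α β : ℝ → ℝ} {f fL fR : ℝ ≃ₜ ℝ} (_ : Cls ν C κ m α β f fL fR),
        f p ≤ -(Real.exp ε * p) := by
      intro α β f fL fR H
      have := H.expR hp.le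
      rw [H.R0, ← H.right _ hp.le] at this
      linarith
    have e1ε : 1 ≤ Real.exp ε := Real.one_le_exp ε0.le
    obtain ⟨u1, u2⟩ := hb H hu
    obtain ⟨v1, v2⟩ := hb H' hv
    refine ⟨h0 (-p), p, ?_, core_pos H H' hν hu hv hxR hyR hmulR hr c1 c2 c3 c4 (a7 _ (by linarith))
      hp (by linarith) u2 ?_ ?_ v2 ?_⟩
    · have b1 : h0 (-p) < 0 := by linarith
      rw [QB, abs_of_neg b1, abs_of_pos hp]
      exact ⟨b1, hp, (fin q1 q2).1, (fin q1 q2).2, by nlinarith, by nlinarith⟩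
    · have := hgp H; nlinarith
    · nlinarith
    · have := hgp H'; linarith



lemma DiffConjOn.congr' {f f' g g' : ℝ → ℝ} {U V : Set ℝ} (hf : EqOn f f' U) (hg : EqOn g g' V)
    (h : DiffConjOn f g U V) : DiffConjOn f' g' U V := by
  obtain ⟨h, hd, hc⟩ := h
  refine ⟨h, hd, fun x hx hfx => ?_⟩
  rw [← hf hx] at hfx ⊢
  rw [← hg (hd.1.mapsTo hx)]
  exact hc x hx hfx

lemma basinRep_congr {f f' : ℝ → ℝ} {N : Set ℝ} (hf : EqOn f f' N) (p : ℝ) :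
    basinRep f N p = basinRep f' N p := by
  ext x
  constructor
  · rintro ⟨hx, u, h0, h1, h2, h3⟩
    exact ⟨hx, u, h0, h1, fun n => by rw [← hf (h1 _), h2], h3⟩
  · rintro ⟨hx, u, h0, h1, h2, h3⟩
    exact ⟨hx, u, h0, h1, fun n => by rw [hf (h1 _), h2], h3⟩

lemma basinAttr2_sub {f f' : ℝ → ℝ} {N : Set ℝ} (hf : EqOn f f' N) (p q : ℝ) :
    basinAttr2 f N p q ⊆ basinAttr2 f' N p q := by
  rintro x ⟨hx, h1, h2⟩
  have : ∀ n : ℕ, f'^[n] x = f^[n] x := by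
    intro n
    induction n with
    | zero => rfl
    | succ n ih => rw [Function.iterate_succ_apply', Function.iterate_succ_apply', ih, hf (h1 n)]
  refine ⟨hx, fun n => by rw [this]; exact h1 n, ?_⟩
  simpa only [this] using h2

lemma basinAttr2_congr {f f' : ℝ → ℝ} {N : Set ℝ} (hf : EqOn f f' N) (p q : ℝ) :
    basinAttr2 f N p q = basinAttr2 f' N p q :=
  (basinAttr2_sub hf p q).antisymm (basinAttr2_sub hf.symm p q)

lemma deriv_congr_on {f f' : ℝ → ℝ} {N : Set ℝ} (hN : IsOpen N) (hf : EqOn f f' N) {x : ℝ}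
    (hx : x ∈ N) : deriv f x = deriv f' x :=
  EventuallyEq.deriv_eq (by filter_upwards [hN.mem_nhds hx] with y hy using hf hy)

lemma PdPos.congr {f f' g g' : ℝ → ℝ} {N M : Set ℝ} (hN : IsOpen N) (hM : IsOpen M)
    (hf : EqOn f f' N) (hg : EqOn g g' M) (h : PdPos f g N M) : PdPos f' g' N M := by
  obtain ⟨xR, uL, uR, yR, vL, vR, a1, a2, a3, a4, a5, a6, a7, a8, a9, a10, a11, a12, b1, b2, b3,
    b4, b5, b6, b7, b8, b9, b10, b11, b12, c1, c2⟩ := h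
  refine ⟨xR, uL, uR, yR, vL, vR, a1, a2, hf a2 ▸ a3, ?_, a5, a6, a7, a8, a9, hf a7 ▸ a10,
    hf a8 ▸ a11, ?_, b1, b2, hg b2 ▸ b3, ?_, b5, b6, b7, b8, b9, hg b7 ▸ b10, hg b8 ▸ b11, ?_,
    ?_, ?_⟩
  · rwa [← deriv_congr_on hN hf a2]
  · rwa [← deriv_congr_on hN hf a7, ← deriv_congr_on hN hf a8]
  · rwa [← deriv_congr_on hM hg b2]
  · rwa [← deriv_congr_on hM hg b7, ← deriv_congr_on hM hg b8]
  · rw [← basinRep_congr hf, ← basinRep_congr hg]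
    exact c1.congr' (hf.mono fun x hx => hx.1) (hg.mono fun x hx => hx.1)
  · rw [← basinAttr2_congr hf, ← basinAttr2_congr hg]
    exact c2.congr' (hf.mono fun x hx => hx.1) (hg.mono fun x hx => hx.1)



lemma log_lip {a x y : ℝ} (ha : 0 < a) (hx : a ≤ x) (hy : a ≤ y) :
    |Real.log x - Real.log y| ≤ |x - y| / a := by
  have key : ∀ {x y : ℝ}, a ≤ x → a ≤ y → Real.log x - Real.log y ≤ |x - y| / a := by
    intro x y hx hy
    have x0 : 0 < x := ha.trans_le hx
    have y0 : 0 < y := ha.trans_le hy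
    rw [← Real.log_div x0.ne' y0.ne']
    have h1 := Real.log_le_sub_one_of_pos (div_pos x0 y0)
    have h2 : x / y - 1 = (x - y) / y := by field_simp
    rw [h2] at h1
    refine h1.trans ?_
    calc (x - y) / y ≤ |x - y| / y := by gcongr; exact le_abs_self _
      _ ≤ |x - y| / a := by gcongr
  rw [abs_le]
  constructor
  · have := key hy hx
    rw [abs_sub_comm] at this; linarith
  · exact key hx hy

lemma ext1 {F D : ℝ → ℝ} {r L a b : ℝ} (hr : 0 < r) (ha : 0 < a)
    (hF : ∀ x ∈ Icc (-r) r, HasDerivAt F (D x) x)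
    (hD : ∀ x ∈ Icc (-r) r, -b ≤ D x ∧ D x ≤ -a)
    (hL : ∀ x ∈ Icc (-r) r, ∀ y ∈ Icc (-r) r, |D x - D y| ≤ L * |x - y|) :
    ∃ G α : ℝ → ℝ, (∀ x ∈ Icc (-r) r, G x = F x) ∧ (∀ x ∈ Icc (-r) r, α x = Real.log (-D x)) ∧
      (∀ x, HasDerivAt G (-Real.exp (α x)) x) ∧ (∀ x y, |α x - α y| ≤ L / a * |x - y|) ∧
      ∀ x, Real.log a ≤ α x ∧ α x ≤ Real.log b := by
  have hrr : -r ≤ r := by linarith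
  have L0 : 0 ≤ L := by
    have := (abs_nonneg _).trans (hL r ⟨hrr, le_rfl⟩ (-r) ⟨le_rfl, hrr⟩)
    rw [abs_of_pos (by linarith : 0 < r - -r)] at this
    by_contra hcon
    nlinarith
  set cl : ℝ → ℝ := fun x => (projIcc (-r) r hrr x : ℝ) with hcl
  have clm : ∀ x, cl x ∈ Icc (-r) r := fun x => (projIcc (-r) r hrr x).2
  have cle : ∀ x ∈ Icc (-r) r, cl x = x := fun x hx => by simp [hcl, projIcc_of_mem hrr hx]
  have cll : ∀ x y, |cl x - cl y| ≤ |x - y| := fun x y => by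
    have := abs_projIcc_sub_projIcc (c := x) (d := y) hrr
    exact this
  set α : ℝ → ℝ := fun x => Real.log (-D (cl x)) with hα
  have hpos : ∀ x, a ≤ -D (cl x) := fun x => by linarith [(hD _ (clm x)).2]
  have lip : ∀ x y, |α x - α y| ≤ L / a * |x - y| := by
    intro x y
    refine (log_lip ha (hpos x) (hpos y)).trans ?_
    rw [div_mul_eq_mul_div]
    gcongr
    rw [neg_sub_neg, abs_sub_comm]
    refine (hL _ (clm x) _ (clm y)).trans ?_
    exact mul_le_mul_of_nonneg_left (cll x y) L0
  have hαc : Continuous α := lip_cont lip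
  have hec : Continuous fun x => -Real.exp (α x) := (Real.continuous_exp.comp hαc).neg
  have heα : ∀ x ∈ Icc (-r) r, -Real.exp (α x) = D x := fun x hx => by
    simp only [hα]
    rw [Real.exp_log (ha.trans_le (hpos x)), cle x hx, neg_neg]
  set G : ℝ → ℝ := fun x => F 0 + ∫ s in (0:ℝ)..x, -Real.exp (α s) with hG
  have dG : ∀ x, HasDerivAt G (-Real.exp (α x)) x := fun x =>
    (intervalIntegral.integral_hasDerivAt_right (hec.intervalIntegrable _ _)
      (hec.stronglyMeasurableAtFilter _ _) hec.continuousAt).const_add _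
  refine ⟨G, α, ?_, fun x hx => by simp only [hα]; rw [cle x hx], dG, lip, fun x => ⟨?_, ?_⟩⟩
  · intro x hx
    have hsub : uIcc 0 x ⊆ Icc (-r) r := by
      apply uIcc_subset_Icc _ hx
      constructor <;> linarith
    have := intervalIntegral.integral_eq_sub_of_hasDerivAt (a := 0) (b := x) (f := F)
      (f' := fun s => -Real.exp (α s)) (fun s hs => by
        rw [heα s (hsub hs)]; exact hF s (hsub hs)) (hec.intervalIntegrable _ _)
    simp only [hG]
    rw [this]; ring
  · exact Real.log_le_log ha (hpos x)
  · exact Real.log_le_log (ha.trans_le (hpos x)) (by linarith [(hD _ (clm x)).1])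

structure Loc (r L aL bL aR bR ν : ℝ) (FL FR DL DR : ℝ → ℝ) : Prop where
  L0 : FL 0 = ν
  R0 : FR 0 = ν
  dL : ∀ x ∈ Icc (-r) r, HasDerivAt FL (DL x) x
  dR : ∀ x ∈ Icc (-r) r, HasDerivAt FR (DR x) x
  bdL : ∀ x ∈ Icc (-r) r, -bL ≤ DL x ∧ DL x ≤ -aL
  bdR : ∀ x ∈ Icc (-r) r, -bR ≤ DR x ∧ DR x ≤ -aR
  lipL : ∀ x ∈ Icc (-r) r, ∀ y ∈ Icc (-r) r, |DL x - DL y| ≤ L * |x - y|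
  lipR : ∀ x ∈ Icc (-r) r, ∀ y ∈ Icc (-r) r, |DR x - DR y| ≤ L * |x - y|

lemma Loc.toCls {r L aL bL aR bR ν : ℝ} {FL FR DL DR : ℝ → ℝ} (hr : 0 < r) (hL : 0 ≤ L)
    (haL : 0 < aL) (habL : aL ≤ bL) (haR : 1 < aR) (habR : aR ≤ bR) (hb : bL * bR < 1)
    {C κ m : ℝ} (hC : C = L / aL + L / aR)
    (hκ : κ = min (Real.log aR) (-Real.log (bL * bR)))
    (hm : m = max (-Real.log aL) (Real.log bR))
    (H : Loc r L aL bL aR bR ν FL FR DL DR) :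
    ∃ α β : ℝ → ℝ, ∃ f fL fR : ℝ ≃ₜ ℝ, Cls ν C κ m α β f fL fR ∧
      (∀ x ∈ Icc (-r) r, fL x = FL x) ∧ (∀ x ∈ Icc (-r) r, fR x = FR x) ∧
      (∀ x ∈ Icc (-r) r, α x = Real.log (-DL x)) ∧ (∀ x ∈ Icc (-r) r, β x = Real.log (-DR x)) := by
  have haR0 : 0 < aR := by linarith
  have h0 : (0:ℝ) ∈ Icc (-r) r := by constructor <;> linarith
  obtain ⟨JL, α, l1, l2, l3, l4, l5⟩ := ext1 hr haL H.dL H.bdL H.lipL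
  obtain ⟨JR, β, r1, r2, r3, r4, r5⟩ := ext1 hr haR0 H.dR H.bdR H.lipR
  have e1 : 0 ≤ L / aL := by positivity
  have e2 : 0 ≤ L / aR := by positivity
  have bL0 : 0 < bL := by linarith
  have bR0 : 0 < bR := by linarith
  have lg : Real.log (bL * bR) = Real.log bL + Real.log bR := Real.log_mul bL0.ne' bR0.ne'
  have lb : 0 ≤ Real.log bR := Real.log_nonneg (by linarith)
  have hκ1 : κ ≤ Real.log aR := hκ ▸ min_le_left _ _
  have hκ2 : κ ≤ -Real.log (bL * bR) := hκ ▸ min_le_right _ _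
  have hm1 : -Real.log aL ≤ m := hm ▸ le_max_left _ _
  have hm2 : Real.log bR ≤ m := hm ▸ le_max_right _ _
  have κ0 : 0 < κ := by
    rw [hκ]; exact lt_min (Real.log_pos haR) (by
      have := Real.log_neg (by positivity) hb; linarith)
  rw [lg] at hκ2
  obtain ⟨f, fL, fR, a1, a2, hcls⟩ := Cls.exists (C := C) (κ := κ) (m := m) (ν := ν)
    (by rw [l1 0 h0]; exact H.L0) (by rw [r1 0 h0]; exact H.R0) l3 r3
    (fun x y => (l4 x y).trans (by gcongr; linarith))
    (fun x y => (r4 x y).trans (by gcongr; linarith)) (by linarith) κ0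
    (fun x => by linarith [(l5 x).2]) (fun x => by linarith [(r5 x).1])
    (fun x y => by linarith [(l5 x).2, (r5 y).2]) (fun x => by linarith [(l5 x).1])
    (fun x => by linarith [(r5 x).2])
  exact ⟨α, β, f, fL, fR, hcls, fun x hx => by rw [a1, l1 x hx], fun x hx => by rw [a2, r1 x hx],
    l2, r2⟩

noncomputable def glueLR (FL FR : ℝ → ℝ) : ℝ → ℝ := fun x => if x ≤ 0 then FL x else FR x

theorem core_loc {r L aL bL aR bR δ : ℝ} (hr : 0 < r) (hL : 0 ≤ L)
    (haL : 0 < aL) (habL : aL ≤ bL) (haR : 1 < aR) (habR : aR ≤ bR) (hb : bL * bR < 1)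
    (hδ : 0 < δ) (hδ1 : δ < 1) :
    ∃ p0 > 0, ∃ c > 0, ∀ p, 0 < p → p ≤ p0 → ∀ (ν : ℝ) (FL FR DL DR JL JR EL ER : ℝ → ℝ),
      Loc r L aL bL aR bR ν FL FR DL DR → Loc r L aL bL aR bR ν JL JR EL ER →
      |ν| ≤ c * p → DL 0 * ER 0 = DR 0 * EL 0 →
      (ν ≤ 0 → ∀ xs ∈ Icc (-r) r, ∀ ys ∈ Icc (-r) r, FL xs = xs → JL ys = ys → DL xs = EL ys →
        ∃ qm qp, QB δ p qm qp ∧ DiffConjOn (glueLR FL FR) (glueLR JL JR) (Ioo (-p) p) (Ioo qm qp)) ∧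
      (0 < ν → ∀ u ∈ Icc (-r) r, ∀ v ∈ Icc (-r) r, ∀ xR ∈ Icc (-r) r, ∀ yR ∈ Icc (-r) r,
        FL u ∈ Icc (-r) r → JL v ∈ Icc (-r) r →
        FR (FL u) = u → JR (JL v) = v → FR xR = xR → JR yR = yR →
        DR xR = ER yR → DL u * DR (FL u) = EL v * ER (JL v) →
        ∃ qm qp, QB δ p qm qp ∧ PdPos (glueLR FL FR) (glueLR JL JR) (Ioo (-p) p) (Ioo qm qp)) := by
  have haR0 : 0 < aR := by linarith
  have h0 : (0:ℝ) ∈ Icc (-r) r := by constructor <;> linarith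
  have bL0 : 0 < bL := by linarith
  have bR0 : 0 < bR := by linarith
  set C := L / aL + L / aR with hC
  set κ := min (Real.log aR) (-Real.log (bL * bR)) with hκ
  set m := max (-Real.log aL) (Real.log bR) with hm
  have κ0 : 0 < κ := by
    rw [hκ]; exact lt_min (Real.log_pos haR) (by
      have := Real.log_neg (by positivity) hb; linarith)
  have κm : κ ≤ m := (min_le_left _ _).trans ((Real.log_le_log haR0 habR).trans (le_max_right _ _))
  obtain ⟨p0, hp0, c, hc, hcore⟩ := core (C := C) (by positivity) κ0 κm hδ hδ1
  refine ⟨min p0 (r / 2), lt_min hp0 (by linarith), c, hc, ?_⟩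
  intro p hp hpp ν FL FR DL DR JL JR EL ER H H' hν hmat
  have hp1 := hpp.trans (min_le_left _ _)
  have hp2 := hpp.trans (min_le_right _ _)
  obtain ⟨α, β, f, fL, fR, K, k1, k2, k3, k4⟩ := H.toCls hr hL haL habL haR habR hb hC hκ hm
  obtain ⟨α', β', g, gL, gR, K', k1', k2', k3', k4'⟩ :=
    H'.toCls hr hL haL habL haR habR hb hC hκ hm
  have eqf : EqOn f (glueLR FL FR) (Icc (-r) r) := by
    intro x hx
    unfold glueLR
    split_ifs with h
    · rw [K.left x h, k1 x hx]
    · rw [K.right x (not_le.1 h).le, k2 x hx]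
  have eqg : EqOn g (glueLR JL JR) (Icc (-r) r) := by
    intro x hx
    unfold glueLR
    split_ifs with h
    · rw [K'.left x h, k1' x hx]
    · rw [K'.right x (not_le.1 h).le, k2' x hx]
  have sN : Ioo (-p) p ⊆ Icc (-r) r := fun x hx => ⟨by linarith [hx.1], by linarith [hx.2]⟩
  have sM : ∀ {qm qp}, QB δ p qm qp → Ioo qm qp ⊆ Icc (-r) r := by
    rintro qm qp ⟨q1, q2, -, q4, -, q6⟩ x hx
    rw [abs_of_neg q1] at q4
    rw [abs_of_pos q2] at q6
    constructor
    · nlinarith [hx.1]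
    · nlinarith [hx.2]
  have nL : ∀ x ∈ Icc (-r) r, -DL x ≠ 0 := fun x hx => by
    have := (H.bdL x hx).2; apply ne_of_gt; linarith
  have nR : ∀ x ∈ Icc (-r) r, -DR x ≠ 0 := fun x hx => by
    have := (H.bdR x hx).2; apply ne_of_gt; linarith
  have nL' : ∀ x ∈ Icc (-r) r, -EL x ≠ 0 := fun x hx => by
    have := (H'.bdL x hx).2; apply ne_of_gt; linarith
  have nR' : ∀ x ∈ Icc (-r) r, -ER x ≠ 0 := fun x hx => by
    have := (H'.bdR x hx).2; apply ne_of_gt; linarith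
  have hr0 : α 0 + β' 0 = β 0 + α' 0 := by
    rw [k3 0 h0, k4' 0 h0, k4 0 h0, k3' 0 h0, ← Real.log_mul (nL 0 h0) (nR' 0 h0),
      ← Real.log_mul (nR 0 h0) (nL' 0 h0), neg_mul_neg, neg_mul_neg, hmat]
  obtain ⟨c1, c2⟩ := hcore p hp hp1 ν α β α' β' f fL fR g gL gR K K' hν hr0
  refine ⟨fun hn xs hxs ys hys e1 e2 e3 => ?_, fun hn u hu v hv xR hxR yR hyR hFu hGv e1 e2 e3 e4 e5 e6 => ?_⟩
  · obtain ⟨qm, qp, q, hq⟩ := c1 hn xs ys (by rw [k1 _ hxs, e1]) (by rw [k1' _ hys, e2])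
      (by rw [k3 _ hxs, k3' _ hys, e3])
    exact ⟨qm, qp, q, hq.congr' (eqf.mono sN) (eqg.mono (sM q))⟩
  · have i1 : fL u = FL u := k1 _ hu
    have i2 : gL v = JL v := k1' _ hv
    obtain ⟨qm, qp, q, hq⟩ := c2 hn u v xR yR (by rw [i1, k2 _ hFu, e1])
      (by rw [i2, k2' _ hGv, e2]) (by rw [k2 _ hxR, e3]) (by rw [k2' _ hyR, e4])
      (by rw [k4 _ hxR, k4' _ hyR, e5])
      (by rw [i1, i2, k3 _ hu, k4 _ hFu, k3' _ hv, k4' _ hGv, ← Real.log_mul (nL _ hu) (nR _ hFu),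
            ← Real.log_mul (nL' _ hv) (nR' _ hGv), neg_mul_neg, neg_mul_neg, e6])
    exact ⟨qm, qp, q, hq.congr isOpen_Ioo isOpen_Ioo (eqf.mono sN) (eqg.mono (sM q))⟩



/-- regularity of one branch near the origin -/
structure Reg (φ D : ℝ → ℝ → ℝ) (a : ℝ) : Prop where
  reg : ∃ ε > 0, ∃ K : ℝ, 0 ≤ K ∧ ∀ μ, |μ| < ε → (∀ x, |x| < ε → HasDerivAt (fun x => φ x μ) (D x μ) x) ∧
    ∀ x y, |x| < ε → |y| < ε → |D x μ - D y μ| ≤ K * |x - y|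
  bd : ∀ η > 0, ∃ ε > 0, ∀ x μ, |x| < ε → |μ| < ε → |D x μ - a| < η

theorem asm {φL φR DL DR : ℝ → ℝ → ℝ} {aL aR : ℝ} (hR : aR < -1) (hLR : aL * aR < 1)
    (hLhigh : aL < 0) (HL : Reg φL DL aL) (HR : Reg φR DR aR)
    (hcont : ∀ᶠ μ in 𝓝 (0:ℝ), φL 0 μ = φR 0 μ)
    (hν : Tendsto (fun μ => φL 0 μ) (𝓝 0) (𝓝 0))
    (hsgn : ∀ᶠ μ in 𝓝 (0:ℝ), (φL 0 μ ≤ 0 ↔ μ ≤ 0))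
    {sL sR t xL yL xR yR u v : ℝ → ℝ} {T : ℝ}
    (hsL : Tendsto sL (𝓝 0) (𝓝 aL)) (hsR : Tendsto sR (𝓝 0) (𝓝 aR)) (ht : Tendsto t (𝓝 0) (𝓝 T))
    (hmat : ∀ᶠ μ in 𝓝 (0:ℝ), DL 0 μ * sR μ = DR 0 μ * sL μ)
    (hxL : Tendsto xL (𝓝 0) (𝓝 0)) (hyL : Tendsto yL (𝓝 0) (𝓝 0))
    (hxR : Tendsto xR (𝓝 0) (𝓝 0)) (hyR : Tendsto yR (𝓝 0) (𝓝 0))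
    (hu : Tendsto u (𝓝 0) (𝓝 0)) (hv : Tendsto v (𝓝 0) (𝓝 0))
    (hFu : Tendsto (fun μ => φL (u μ) μ) (𝓝 0) (𝓝 0))
    (hneg : ∀ᶠ μ in 𝓝 (0:ℝ), μ ≤ 0 → φL (xL μ) μ = xL μ ∧
      φL 0 μ + sL μ * yL μ + t μ * yL μ ^ 2 = yL μ ∧ DL (xL μ) μ = sL μ + 2 * t μ * yL μ)
    (hpos : ∀ᶠ μ in 𝓝 (0:ℝ), 0 < μ → φR (φL (u μ) μ) μ = u μ ∧
      φL 0 μ + sR μ * (φL 0 μ + sL μ * v μ + t μ * v μ ^ 2) = v μ ∧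
      φR (xR μ) μ = xR μ ∧ φL 0 μ + sR μ * yR μ = yR μ ∧ DR (xR μ) μ = sR μ ∧
      DL (u μ) μ * DR (φL (u μ) μ) μ = (sL μ + 2 * t μ * v μ) * sR μ)
    {δ ρ : ℝ} (hδ : 0 < δ) (hδ1 : δ < 1) (hρ : 0 < ρ) :
    ∃ p, 0 < p ∧ p ≤ ρ ∧ ∀ᶠ μ in 𝓝 (0:ℝ), ∃ qm qp, QB δ p qm qp ∧
      (μ ≤ 0 → DiffConjOn (pwFam φL φR μ) (enf (φL 0 μ) (sL μ) (sR μ) (t μ))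
        (Ioo (-p) p) (Ioo qm qp)) ∧
      (0 < μ → PdPos (pwFam φL φR μ) (enf (φL 0 μ) (sL μ) (sR μ) (t μ))
        (Ioo (-p) p) (Ioo qm qp)) := by
  obtain ⟨η, η0, n1, n2, n3⟩ : ∃ η : ℝ, 0 < η ∧ η < -aL ∧ η < -aR - 1 ∧ (-aL + η) * (-aR + η) < 1 := by
    have t1 : ∀ᶠ ε : ℝ in 𝓝[>] 0, ε < -aL := nhdsWithin_le_nhds (Iio_mem_nhds (by linarith))
    have t2 : ∀ᶠ ε : ℝ in 𝓝[>] 0, ε < -aR - 1 := nhdsWithin_le_nhds (Iio_mem_nhds (by linarith))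
    have t3 : ∀ᶠ ε : ℝ in 𝓝[>] 0, (-aL + ε) * (-aR + ε) < 1 := nhdsWithin_le_nhds
      ((by fun_prop : Continuous fun ε : ℝ => (-aL + ε) * (-aR + ε)).continuousAt.eventually_lt_const
        (by simpa using hLR))
    have t5 : ∀ᶠ ε : ℝ in 𝓝[>] 0, 0 < ε := self_mem_nhdsWithin
    obtain ⟨ε, h⟩ := (t5.and (t1.and (t2.and t3))).exists
    exact ⟨ε, h⟩
  obtain ⟨ε1, ε10, KL, KL0, hKL⟩ := HL.reg
  obtain ⟨ε2, ε20, KR, KR0, hKR⟩ := HR.reg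
  obtain ⟨ε3, ε30, hBL⟩ := HL.bd η η0
  obtain ⟨ε4, ε40, hBR⟩ := HR.bd η η0
  set τ := |T| + 1 with hτ
  have τ0 : 0 < τ := by positivity
  obtain ⟨r, r0, r1, r2, r3, r4, r5⟩ : ∃ r : ℝ, 0 < r ∧ r < ε1 ∧ r < ε2 ∧ r < ε3 ∧ r < ε4 ∧
      2 * τ * r < η / 2 := by
    have t1 : ∀ {e : ℝ}, 0 < e → ∀ᶠ ε : ℝ in 𝓝[>] 0, ε < e :=
      fun he => nhdsWithin_le_nhds (Iio_mem_nhds he)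
    have t3 : ∀ᶠ ε : ℝ in 𝓝[>] 0, 2 * τ * ε < η / 2 := nhdsWithin_le_nhds
      ((by fun_prop : Continuous fun ε : ℝ => 2 * τ * ε).continuousAt.eventually_lt_const
        (by simpa using η0))
    have t5 : ∀ᶠ ε : ℝ in 𝓝[>] 0, 0 < ε := self_mem_nhdsWithin
    obtain ⟨ε, h⟩ := (t5.and ((t1 ε10).and ((t1 ε20).and ((t1 ε30).and ((t1 ε40).and t3))))).exists
    exact ⟨ε, h⟩
  set L := KL + KR + 2 * τ with hLdef
  obtain ⟨p0, p00, c, c0, hmain⟩ := core_loc (r := r) (L := L) (aL := -aL - η) (bL := -aL + η)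
    (aR := -aR - η) (bR := -aR + η) (δ := δ) r0 (by positivity) (by linarith) (by linarith)
    (by linarith) (by linarith) n3 hδ hδ1
  refine ⟨min p0 ρ, lt_min p00 hρ, min_le_right _ _, ?_⟩
  have hp : 0 < min p0 ρ := lt_min p00 hρ
  set p := min p0 ρ with hpdef
  have small : ∀ {z : ℝ → ℝ} {e l : ℝ}, Tendsto z (𝓝 0) (𝓝 l) → 0 < e →
      ∀ᶠ μ in 𝓝 (0:ℝ), |z μ - l| < e := fun hz he => by
    simpa [Real.dist_eq] using hz.eventually (Metric.ball_mem_nhds _ he)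
  have mem : ∀ {z : ℝ → ℝ}, Tendsto z (𝓝 0) (𝓝 0) → ∀ᶠ μ in 𝓝 (0:ℝ), z μ ∈ Icc (-r) r :=
    fun hz => by
      filter_upwards [small hz r0] with μ h
      rw [sub_zero] at h
      exact abs_le.1 h.le
  have hJv : Tendsto (fun μ => φL 0 μ + sL μ * v μ + t μ * v μ ^ 2) (𝓝 0) (𝓝 0) := by
    have := (hν.add (hsL.mul hv)).add (ht.mul (hv.pow 2))
    simpa using this
  have hid : Tendsto (fun μ : ℝ => μ) (𝓝 0) (𝓝 0) := tendsto_id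
  filter_upwards [hcont, hsgn, hmat, hneg, hpos, small hν (by positivity : 0 < c * p),
    small hsL (by positivity : 0 < η / 2), small hsR η0, small ht one_pos, mem hxL, mem hyL, mem hxR,
    mem hyR, mem hu, mem hv, mem hFu, mem hJv, small hid ε10, small hid ε20, small hid ε30,
    small hid ε40] with μ b1 b2 b3 b4 b5 b6 b7 b8 b9 m1 m2 m3 m4 m5 m6 m7 m8 d1 d2 d3 d4
  rw [sub_zero] at d1 d2 d3 d4 b6
  have lt_of : ∀ {x e : ℝ}, x ∈ Icc (-r) r → r < e → |x| < e := fun hx he =>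
    (abs_le.2 hx).trans_lt he
  have tb : |t μ| ≤ τ := by
    have := abs_sub_abs_le_abs_sub (t μ) T
    rw [hτ]; linarith
  have Hf : Loc r L (-aL - η) (-aL + η) (-aR - η) (-aR + η) (φL 0 μ) (fun x => φL x μ)
      (fun x => φR x μ) (fun x => DL x μ) (fun x => DR x μ) := by
    refine ⟨rfl, b1.symm, fun x hx => (hKL μ d1).1 x (lt_of hx r1),
      fun x hx => (hKR μ d2).1 x (lt_of hx r2), fun x hx => ?_, fun x hx => ?_,
      fun x hx y hy => ?_, fun x hx y hy => ?_⟩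
    · have := abs_lt.1 (hBL x μ (lt_of hx r3) d3)
      constructor <;> linarith [this.1, this.2]
    · have := abs_lt.1 (hBR x μ (lt_of hx r4) d4)
      constructor <;> linarith [this.1, this.2]
    · refine ((hKL μ d1).2 x y (lt_of hx r1) (lt_of hy r1)).trans ?_
      gcongr; linarith
    · refine ((hKR μ d2).2 x y (lt_of hx r2) (lt_of hy r2)).trans ?_
      gcongr; linarith
  have Hg : Loc r L (-aL - η) (-aL + η) (-aR - η) (-aR + η) (φL 0 μ)
      (fun y => φL 0 μ + sL μ * y + t μ * y ^ 2)
      (fun y => φL 0 μ + sR μ * y) (fun y => sL μ + 2 * t μ * y) (fun _ => sR μ) := by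
    refine ⟨by simp, by simp, fun x hx => ?_, fun x hx => ?_, fun x hx => ?_, fun x hx => ?_,
      fun x hx y hy => ?_, fun x hx y hy => ?_⟩
    · have := (((hasDerivAt_id x).const_mul (sL μ)).const_add (φL 0 μ)).add
        (((hasDerivAt_id x).pow 2).const_mul (t μ))
      refine (this.congr_deriv ?_).congr_of_eventuallyEq (Eventually.of_forall fun y => ?_)
      · simp; ring
      · simp
    · have := ((hasDerivAt_id x).const_mul (sR μ)).const_add (φL 0 μ)
      simpa using this
    · have h1 : |2 * t μ * x| ≤ 2 * τ * r := by
        rw [abs_mul, abs_mul, abs_two]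
        have := abs_le.2 hx
        gcongr
      have h1 := abs_le.1 h1
      have := abs_lt.1 b7
      constructor <;> linarith [this.1, this.2, h1.1, h1.2]
    · have := abs_lt.1 b8
      constructor <;> linarith [this.1, this.2]
    · have : sL μ + 2 * t μ * x - (sL μ + 2 * t μ * y) = 2 * t μ * (x - y) := by ring
      rw [this, abs_mul, abs_mul, abs_two]
      gcongr
      linarith
    · simp; positivity
  obtain ⟨c1, c2⟩ := hmain p hp (min_le_left _ _) (φL 0 μ) _ _ _ _ _ _ _ _ Hf Hg b6.le
    (by simpa using b3)
  rcases le_or_gt μ 0 with h | h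
  · obtain ⟨e1, e2, e3⟩ := b4 h
    obtain ⟨qm, qp, q, hq⟩ := c1 (b2.2 h) (xL μ) m1 (yL μ) m2 e1 e2 e3
    exact ⟨qm, qp, q, fun _ => hq, fun h' => absurd h (not_le.2 h')⟩
  · obtain ⟨e1, e2, e3, e4, e5, e6⟩ := b5 h
    obtain ⟨qm, qp, q, hq⟩ := c2 (by
      by_contra hcon
      exact absurd (b2.1 (not_lt.1 hcon)) (not_le.2 h)) (u μ) m5 (v μ) m6 (xR μ) m3 (yR μ) m4 m7 m8
      e1 e2 e3 e4 e5 e6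
    exact ⟨qm, qp, q, fun h' => absurd h (not_lt.2 h'), fun _ => hq⟩



lemma ift {Ψ : ℝ × ℝ → ℝ} (h : ContDiffAt ℝ 1 Ψ (0, 0)) (h0 : Ψ (0, 0) = 0) {d : ℝ}
    (hd : HasDerivAt (fun x => Ψ (0, x)) d 0) (hne : d ≠ 0) :
    ∃ ξ : ℝ → ℝ, ContDiffAt ℝ 1 ξ 0 ∧ ξ 0 = 0 ∧ ∀ᶠ μ in 𝓝 (0:ℝ), Ψ (μ, ξ μ) = 0 := by
  have hF := (h.differentiableAt one_ne_zero).hasFDerivAt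
  have h1 : (fderiv ℝ Ψ (0, 0) ∘L .inr ℝ ℝ ℝ) 1 = d := by
    have hc : HasDerivAt (fun x : ℝ => ((0:ℝ), x)) (0, 1) 0 :=
      (hasDerivAt_const _ _).prodMk (hasDerivAt_id _)
    have := hF.comp_hasDerivAt (0:ℝ) hc
    exact this.unique hd
  have hinv : (fderiv ℝ Ψ (0, 0) ∘L .inr ℝ ℝ ℝ).IsInvertible := by
    refine ⟨ContinuousLinearEquiv.unitsEquivAut ℝ (Units.mk0 d hne), ?_⟩
    ext
    rw [h1]
    simp
  refine ⟨h.implicitFunction one_ne_zero hinv, h.contDiffAt_implicitFunction one_ne_zero hinv,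
    h.implicitFunction_apply_self one_ne_zero hinv, ?_⟩
  have := h.eventually_apply_implicitFunction one_ne_zero hinv
  rw [h0] at this
  exact this

lemma box {P : ℝ × ℝ → Prop} (h : ∀ᶠ p in 𝓝 ((0:ℝ), (0:ℝ)), P p) :
    ∃ ε > 0, ∀ x μ, |x| < ε → |μ| < ε → P (x, μ) := by
  obtain ⟨ε, h0, hε⟩ := Metric.eventually_nhds_iff.1 h
  refine ⟨ε, h0, fun x μ hx hμ => hε ?_⟩
  rw [Prod.dist_eq]
  simpa [Real.dist_eq] using ⟨hx, hμ⟩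

/-- the partial derivative -/
lemma partial_reg {φ : ℝ → ℝ → ℝ} {a : ℝ}
    (h : ContDiffAt ℝ 3 (fun p : ℝ × ℝ => φ p.1 p.2) (0, 0)) (ha : deriv (fun x => φ x 0) 0 = a) :
    ∃ D : ℝ → ℝ → ℝ, ContDiffAt ℝ 1 (fun p : ℝ × ℝ => D p.1 p.2) (0, 0) ∧ D 0 0 = a ∧
      Reg φ D a ∧ HasDerivAt (fun x => φ x 0) a 0 := by
  set Φ := fun p : ℝ × ℝ => φ p.1 p.2
  have hD : ContDiffAt ℝ 1 (fun p : ℝ × ℝ => fderiv ℝ Φ p (1, 0)) (0, 0) :=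
    (h.fderiv_right (m := 1) (by norm_num)).clm_apply contDiffAt_const
  have hev : ∀ᶠ p in 𝓝 ((0:ℝ), (0:ℝ)), HasDerivAt (fun x => φ x p.2) (fderiv ℝ Φ p (1, 0)) p.1 := by
    filter_upwards [h.eventually (by simp)] with p hp
    have hF := (hp.differentiableAt (by simp)).hasFDerivAt
    have hc : HasDerivAt (fun x : ℝ => (x, p.2)) (1, 0) p.1 :=
      (hasDerivAt_id _).prodMk (hasDerivAt_const _ _)
    exact hF.comp_hasDerivAt p.1 (f := fun x : ℝ => (x, p.2)) hc
  have h00 : HasDerivAt (fun x => φ x 0) (fderiv ℝ Φ (0, 0) (1, 0)) 0 := hev.self_of_nhds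
  have hDa : fderiv ℝ Φ (0, 0) (1, 0) = a := by rw [← ha, h00.deriv]
  refine ⟨fun x μ => fderiv ℝ Φ (x, μ) (1, 0), hD, hDa, ⟨?_, ?_⟩, hDa ▸ h00⟩
  · obtain ⟨K, s, hs, hK⟩ := hD.exists_lipschitzOnWith
    obtain ⟨ε, ε0, hε⟩ := box (hev.and hs)
    refine ⟨ε, ε0, K, K.2, fun μ hμ => ⟨fun x hx => (hε x μ hx hμ).1, fun x y hx hy => ?_⟩⟩
    have := hK.dist_le_mul _ (hε x μ hx hμ).2 _ (hε y μ hy hμ).2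
    rw [Prod.dist_eq] at this
    simpa [Real.dist_eq] using this
  · intro η hη
    have : ∀ᶠ p in 𝓝 ((0:ℝ), (0:ℝ)), |fderiv ℝ Φ p (1, 0) - a| < η := by
      have := hD.continuousAt.eventually (Metric.ball_mem_nhds _ hη)
      simp only [hDa] at this
      simpa [Real.dist_eq] using this
    exact box this

lemma cd_evc {A : ℝ → ℝ} (h : ContDiffAt ℝ 1 A 0) : ∀ᶠ μ in 𝓝 (0:ℝ), ContinuousAt A μ := by
  filter_upwards [h.eventually (by simp)] with μ hμ using hμ.continuousAt

lemma glue_evc {A B : ℝ → ℝ} (hA : ∀ᶠ μ in 𝓝 (0:ℝ), ContinuousAt A μ)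
    (hB : ∀ᶠ μ in 𝓝 (0:ℝ), ContinuousAt B μ) (h0 : A 0 = B 0) :
    ∀ᶠ μ in 𝓝 (0:ℝ), ContinuousAt (fun μ => if μ ≤ 0 then A μ else B μ) μ := by
  filter_upwards [hA, hB] with μ ha hb
  rcases lt_trichotomy μ 0 with h | h | h
  · refine ha.congr ?_
    filter_upwards [Iio_mem_nhds h] with y hy
    rw [if_pos (le_of_lt hy)]
  · subst h
    rw [continuousAt_iff_continuous_left_right]
    constructor
    · refine ha.continuousWithinAt.congr (fun y hy => ?_) (by simp)
      exact if_pos hy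
    · refine hb.continuousWithinAt.congr (fun y hy => ?_) (by simp [h0])
      split_ifs with h
      · rw [le_antisymm h hy, h0]
      · rfl
  · refine hb.congr ?_
    filter_upwards [Ioi_mem_nhds h] with y hy
    rw [if_neg (not_le.2 hy)]

lemma glue_bigO {A B : ℝ → ℝ} {a : ℝ} (hA : ContDiffAt ℝ 1 A 0) (hB : ContDiffAt ℝ 1 B 0)
    (hA0 : A 0 = a) (hB0 : B 0 = a) :
    (fun μ => (if μ ≤ 0 then A μ else B μ) - a) =O[𝓝 (0:ℝ)] (fun μ => μ) := by
  have h1 := (hA.differentiableAt one_ne_zero).isBigO_sub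
  have h2 := (hB.differentiableAt one_ne_zero).isBigO_sub
  rw [hA0] at h1; rw [hB0] at h2
  simp only [sub_zero] at h1 h2
  refine Asymptotics.IsBigO.trans (Asymptotics.IsBigO.of_bound 1 (Eventually.of_forall fun μ => ?_))
    (h1.norm_left.add h2.norm_left)
  simp only [one_mul, Real.norm_eq_abs]
  rw [abs_of_nonneg (by positivity : 0 ≤ |A μ - a| + |B μ - a|)]
  split_ifs
  · linarith [abs_nonneg (B μ - a)]
  · linarith [abs_nonneg (A μ - a)]

lemma dslope_evc {A : ℝ → ℝ} (h : ContDiffAt ℝ 1 A 0) :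
    ∀ᶠ μ in 𝓝 (0:ℝ), ContinuousAt (dslope A 0) μ := by
  filter_upwards [cd_evc h] with μ hμ
  by_cases h0 : μ = 0
  · subst h0
    exact continuousAt_dslope_same.2 (h.differentiableAt one_ne_zero)
  · exact (continuousAt_dslope_of_ne h0).2 hμ



lemma comp2 {D : ℝ → ℝ → ℝ} {n : ℕ∞} (h : ContDiffAt ℝ n (fun p : ℝ × ℝ => D p.1 p.2) (0, 0))
    {ξ : ℝ → ℝ} (hξ : ContDiffAt ℝ n ξ 0) (h0 : ξ 0 = 0) :
    ContDiffAt ℝ n (fun μ => D (ξ μ) μ) 0 := by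
  have h' : ContDiffAt ℝ n (fun p : ℝ × ℝ => D p.1 p.2) ((fun μ : ℝ => (ξ μ, μ)) 0) := by
    simpa [h0] using h
  exact ContDiffAt.comp (0:ℝ) (f := fun μ : ℝ => (ξ μ, μ)) h' (hξ.prodMk contDiffAt_id)

theorem params {φL φR DL DR : ℝ → ℝ → ℝ} {aL aR β : ℝ} (hR : aR < -1) (hLR : aL * aR < 1)
    (hLhigh : aL < 0) (hβ : 0 < β)
    (cL : ContDiffAt ℝ 1 (fun p : ℝ × ℝ => φL p.1 p.2) (0, 0))
    (cR : ContDiffAt ℝ 1 (fun p : ℝ × ℝ => φR p.1 p.2) (0, 0))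
    (kL : ContDiffAt ℝ 1 (fun p : ℝ × ℝ => DL p.1 p.2) (0, 0))
    (kR : ContDiffAt ℝ 1 (fun p : ℝ × ℝ => DR p.1 p.2) (0, 0))
    (DL0 : DL 0 0 = aL) (DR0 : DR 0 0 = aR)
    (dL : HasDerivAt (fun x => φL x 0) aL 0) (dR : HasDerivAt (fun x => φR x 0) aR 0)
    (h00 : φL 0 0 = 0) (h00' : φR 0 0 = 0)
    (hβL : HasDerivAt (fun μ => φL 0 μ) β 0) :
    ∃ sL sR t xL yL xR yR u v : ℝ → ℝ,
      ((∀ᶠ μ in 𝓝 (0:ℝ), ContinuousAt sL μ) ∧ (∀ᶠ μ in 𝓝 (0:ℝ), ContinuousAt sR μ) ∧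
      (∀ᶠ μ in 𝓝 (0:ℝ), ContinuousAt t μ) ∧ sL 0 = aL ∧ sR 0 = aR ∧
      (fun μ => sL μ - aL) =O[nhds (0:ℝ)] (fun μ => μ) ∧
      (fun μ => sR μ - aR) =O[nhds (0:ℝ)] (fun μ => μ)) ∧
      (∀ᶠ μ in 𝓝 (0:ℝ), DL 0 μ * sR μ = DR 0 μ * sL μ) ∧
      Tendsto xL (𝓝 0) (𝓝 0) ∧ Tendsto yL (𝓝 0) (𝓝 0) ∧
      Tendsto xR (𝓝 0) (𝓝 0) ∧ Tendsto yR (𝓝 0) (𝓝 0) ∧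
      Tendsto u (𝓝 0) (𝓝 0) ∧ Tendsto v (𝓝 0) (𝓝 0) ∧
      Tendsto (fun μ => φL (u μ) μ) (𝓝 0) (𝓝 0) ∧
      (∀ᶠ μ in 𝓝 (0:ℝ), μ ≤ 0 → φL (xL μ) μ = xL μ ∧
        φL 0 μ + sL μ * yL μ + t μ * yL μ ^ 2 = yL μ ∧ DL (xL μ) μ = sL μ + 2 * t μ * yL μ) ∧
      (∀ᶠ μ in 𝓝 (0:ℝ), 0 < μ → φR (φL (u μ) μ) μ = u μ ∧
        φL 0 μ + sR μ * (φL 0 μ + sL μ * v μ + t μ * v μ ^ 2) = v μ ∧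
        φR (xR μ) μ = xR μ ∧ φL 0 μ + sR μ * yR μ = yR μ ∧ DR (xR μ) μ = sR μ ∧
        DL (u μ) μ * DR (φL (u μ) μ) μ = (sL μ + 2 * t μ * v μ) * sR μ) := by
  have sw : ContDiffAt ℝ 1 (fun p : ℝ × ℝ => (p.2, p.1)) (0, 0) :=
    contDiffAt_snd.prodMk contDiffAt_fst
  have cL' : ContDiffAt ℝ 1 (fun p : ℝ × ℝ => φL p.2 p.1) (0, 0) :=
    ContDiffAt.comp ((0:ℝ), (0:ℝ)) (f := fun p : ℝ × ℝ => (p.2, p.1)) cL sw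
  have cR' : ContDiffAt ℝ 1 (fun p : ℝ × ℝ => φR p.2 p.1) (0, 0) :=
    ContDiffAt.comp ((0:ℝ), (0:ℝ)) (f := fun p : ℝ × ℝ => (p.2, p.1)) cR sw
  have cRL : ContDiffAt ℝ 1 (fun p : ℝ × ℝ => φR (φL p.2 p.1) p.1) (0, 0) := by
    refine ContDiffAt.comp ((0:ℝ), (0:ℝ)) (g := fun p : ℝ × ℝ => φR p.1 p.2)
      (f := fun p : ℝ × ℝ => (φL p.2 p.1, p.1)) ?_ (cL'.prodMk contDiffAt_fst)
    simpa [h00] using cR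
  obtain ⟨xL, cxL, xL0, exL⟩ := ift (Ψ := fun p => φL p.2 p.1 - p.2) (cL'.sub contDiffAt_snd)
    (by simp [h00]) (d := aL - 1) (dL.sub (hasDerivAt_id _)) (by linarith)
  obtain ⟨xR, cxR, xR0, exR⟩ := ift (Ψ := fun p => φR p.2 p.1 - p.2) (cR'.sub contDiffAt_snd)
    (by simp [h00']) (d := aR - 1) (dR.sub (hasDerivAt_id _)) (by linarith)
  obtain ⟨u, cu, u0, eu⟩ := ift (Ψ := fun p => φR (φL p.2 p.1) p.1 - p.2) (cRL.sub contDiffAt_snd)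
    (by simp [h00, h00']) (d := aR * aL - 1) (by
      refine HasDerivAt.sub ?_ (hasDerivAt_id _)
      have dR' : HasDerivAt (fun x => φR x 0) aR (φL 0 0) := by rwa [h00]
      exact HasDerivAt.comp (0:ℝ) (h₂ := fun x => φR x 0) (h := fun x => φL x 0) dR' dL)
      (by intro h; nlinarith)
  -- basic smooth functions
  set ν : ℝ → ℝ := fun μ => φL 0 μ with hν
  have cν : ContDiffAt ℝ 1 ν 0 := comp2 (n := 1) cL contDiffAt_const rfl
  have ν0 : ν 0 = 0 := h00
  have cDL0 : ContDiffAt ℝ 1 (fun μ => DL 0 μ) 0 := comp2 (n := 1) kL contDiffAt_const rfl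
  have cDR0 : ContDiffAt ℝ 1 (fun μ => DR 0 μ) 0 := comp2 (n := 1) kR contDiffAt_const rfl
  have aL0 : aL ≠ 0 := by linarith
  have aR0 : aR ≠ 0 := by linarith
  have cw : ContDiffAt ℝ 1 (fun μ => φL (u μ) μ) 0 := comp2 (n := 1) cL cu u0
  have w0 : φL (u 0) 0 = 0 := by rw [u0, h00]
  -- the positive side
  set sRp : ℝ → ℝ := fun μ => DR (xR μ) μ with hsRp
  have csRp : ContDiffAt ℝ 1 sRp 0 := comp2 (n := 1) kR cxR xR0
  have sRp0 : sRp 0 = aR := by simp [hsRp, xR0, DR0]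
  set sLp : ℝ → ℝ := fun μ => sRp μ * DL 0 μ / DR 0 μ with hsLp
  have csLp : ContDiffAt ℝ 1 sLp 0 := (csRp.mul cDL0).div cDR0 (by rw [DR0]; exact aR0)
  have sLp0 : sLp 0 = aL := by simp only [hsLp]; rw [sRp0, DL0, DR0]; field_simp
  set σ : ℝ → ℝ := fun μ => DL (u μ) μ * DR (φL (u μ) μ) μ / sRp μ with hσ
  have cσ : ContDiffAt ℝ 1 σ 0 :=
    ((comp2 (n := 1) kL cu u0).mul (comp2 (n := 1) kR cw w0)).div csRp (by rw [sRp0]; exact aR0)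
  have σ0 : σ 0 = aL := by simp only [hσ]; rw [sRp0, w0, u0, DL0, DR0]; field_simp
  set k : ℝ → ℝ := fun μ => (1 + sRp μ) / (1 - sRp μ * (sLp μ + σ μ) / 2) with hk
  have kden : 1 - sRp 0 * (sLp 0 + σ 0) / 2 ≠ 0 := by
    rw [sRp0, sLp0, σ0]; intro h; nlinarith
  have ck : ContDiffAt ℝ 1 k 0 := (contDiffAt_const.add csRp).div
    (contDiffAt_const.sub ((csRp.mul (csLp.add cσ)).div_const 2)) kden
  have k0 : k 0 ≠ 0 := div_ne_zero (by rw [sRp0]; intro h; linarith) kden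
  set v : ℝ → ℝ := fun μ => ν μ * k μ with hv
  have cv : ContDiffAt ℝ 1 v 0 := cν.mul ck
  have v0 : v 0 = 0 := by simp [hv, ν0]
  have dv : deriv v 0 ≠ 0 := by
    have := hβL.mul (ck.differentiableAt one_ne_zero).hasDerivAt
    have h2 : deriv v 0 = β * k 0 + ν 0 * deriv k 0 := this.deriv
    rw [h2, ν0, zero_mul, add_zero]
    exact mul_ne_zero hβ.ne' k0
  set tp : ℝ → ℝ := fun μ => dslope (fun μ => σ μ - sLp μ) 0 μ / (2 * dslope v 0 μ) with htp
  have dv0 : dslope v 0 0 ≠ 0 := by rwa [dslope_same]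
  have vne : ∀ᶠ μ in 𝓝 (0:ℝ), dslope v 0 μ ≠ 0 :=
    (dslope_evc cv).self_of_nhds.eventually_ne dv0
  have ctp : ∀ᶠ μ in 𝓝 (0:ℝ), ContinuousAt tp μ := by
    filter_upwards [dslope_evc (cσ.sub csLp), dslope_evc cv, vne] with μ h1 h2 h3
    exact h1.div (continuousAt_const.mul h2) (mul_ne_zero two_ne_zero h3)
  set T := tp 0 with hT
  -- the negative side
  set m : ℝ → ℝ := fun μ => DL (xL μ) μ with hm
  have cm : ContDiffAt ℝ 1 m 0 := comp2 (n := 1) kL cxL xL0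
  have m0 : m 0 = aL := by simp [hm, xL0, DL0]
  set e : ℝ := 2 * T / (1 - aL) with he
  have eT : e * (1 - aL) = 2 * T := by
    rw [he]; exact div_mul_cancel₀ _ (by linarith)
  set q : ℝ → ℝ := fun μ => 1 - m μ + e * ν μ / 2 with hq
  have cq : ContDiffAt ℝ 1 q 0 :=
    (contDiffAt_const.sub cm).add ((contDiffAt_const.mul cν).div_const 2)
  have q0 : q 0 = 1 - aL := by simp [hq, m0, ν0]
  have q0' : q 0 ≠ 0 := by rw [q0]; linarith
  set sLm : ℝ → ℝ := fun μ => m μ - e * ν μ with hsLm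
  have csLm : ContDiffAt ℝ 1 sLm 0 := cm.sub (contDiffAt_const.mul cν)
  have sLm0 : sLm 0 = aL := by simp [hsLm, m0, ν0]
  set tm : ℝ → ℝ := fun μ => e * q μ / 2 with htm
  have ctm : ContDiffAt ℝ 1 tm 0 := (contDiffAt_const.mul cq).div_const 2
  have tm0 : tm 0 = T := by simp only [htm]; rw [q0]; linarith
  set yL : ℝ → ℝ := fun μ => ν μ / q μ with hyL
  have cyL : ContDiffAt ℝ 1 yL 0 := cν.div cq q0'
  have yL0 : yL 0 = 0 := by simp [hyL, ν0]
  set sRm : ℝ → ℝ := fun μ => sLm μ * DR 0 μ / DL 0 μ with hsRm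
  have csRm : ContDiffAt ℝ 1 sRm 0 := (csLm.mul cDR0).div cDL0 (by rw [DL0]; exact aL0)
  have sRm0 : sRm 0 = aR := by simp only [hsRm]; rw [sLm0, DL0, DR0]; field_simp
  set yR : ℝ → ℝ := fun μ => ν μ / (1 - sRp μ) with hyR
  have yRd : 1 - sRp 0 ≠ 0 := by rw [sRp0]; linarith
  have cyR : ContDiffAt ℝ 1 yR 0 := cν.div (contDiffAt_const.sub csRp) yRd
  have yR0 : yR 0 = 0 := by simp [hyR, ν0]
  have td : ∀ {z : ℝ → ℝ}, ContDiffAt ℝ 1 z 0 → z 0 = 0 → Tendsto z (𝓝 0) (𝓝 0) := by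
    intro z hz h0
    have := hz.continuousAt.tendsto
    rwa [h0] at this
  have nz : ∀ {z : ℝ → ℝ}, ContDiffAt ℝ 1 z 0 → z 0 ≠ 0 → ∀ᶠ μ in 𝓝 (0:ℝ), z μ ≠ 0 :=
    fun hz h0 => hz.continuousAt.eventually_ne h0
  have nDL := nz cDL0 (by rw [DL0]; exact aL0)
  have nDR := nz cDR0 (by rw [DR0]; exact aR0)
  refine ⟨fun μ => if μ ≤ 0 then sLm μ else sLp μ, fun μ => if μ ≤ 0 then sRm μ else sRp μ,
    fun μ => if μ ≤ 0 then tm μ else tp μ, xL, yL, xR, yR, u, v,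
    ⟨glue_evc (cd_evc csLm) (cd_evc csLp) (sLm0.trans sLp0.symm),
      glue_evc (cd_evc csRm) (cd_evc csRp) (sRm0.trans sRp0.symm),
      glue_evc (cd_evc ctm) ctp tm0, by simp [sLm0], by simp [sRm0],
      glue_bigO csLm csLp sLm0 sLp0, glue_bigO csRm csRp sRm0 sRp0⟩, ?_, td cxL xL0, td cyL yL0,
      td cxR xR0, td cyR yR0, td cu u0, td cv v0, td cw w0, ?_, ?_⟩
  · filter_upwards [nDL, nDR] with μ h1 h2
    split_ifs
    · simp only [hsRm]; field_simp
    · simp only [hsLp]; field_simp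
  · filter_upwards [exL, nz cq q0'] with μ h1 h2 hμ
    simp only [if_pos hμ]
    have hy : q μ * yL μ = ν μ := by simp only [hyL]; field_simp
    refine ⟨by linarith, ?_, ?_⟩
    · have e1 : sLm μ = 1 - q μ - e * ν μ / 2 := by simp only [hsLm, hq]; ring
      have e2 : tm μ * yL μ ^ 2 = e * (q μ * yL μ) * yL μ / 2 := by simp only [htm]; ring
      rw [e1, e2, hy]
      linear_combination -hy
    · have e2 : 2 * tm μ * yL μ = e * (q μ * yL μ) := by simp only [htm]; ring
      rw [e2, hy]
      simp only [hsLm, hm]; ring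
  · filter_upwards [exR, eu, vne, nz csRp (by rw [sRp0]; exact aR0),
      nz (contDiffAt_const.sub csRp) yRd,
      nz (contDiffAt_const.sub ((csRp.mul (csLp.add cσ)).div_const 2)) kden] with μ h1 h2 h3 h4 h5 h6 hμ
    simp only [if_neg (not_le.2 hμ)]
    have s1 : μ * dslope v 0 μ = v μ := by
      have := sub_smul_dslope v 0 μ
      rwa [v0, sub_zero, sub_zero, smul_eq_mul] at this
    have s2 : μ * dslope (fun μ => σ μ - sLp μ) 0 μ = σ μ - sLp μ := by
      have := sub_smul_dslope (fun μ => σ μ - sLp μ) 0 μ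
      rwa [σ0, sLp0, sub_self, sub_zero, sub_zero, smul_eq_mul] at this
    have s3 : 2 * tp μ * v μ = σ μ - sLp μ := by
      rw [← s1, ← s2]; simp only [htp]; field_simp
    have s4 : (1 - sRp μ * (sLp μ + σ μ) / 2) * v μ = ν μ * (1 + sRp μ) := by
      simp only [hv, hk]
      rw [mul_left_comm, mul_div_cancel₀ _ h6]
    have s5 : σ μ * sRp μ = DL (u μ) μ * DR (φL (u μ) μ) μ := by simp only [hσ]; field_simp
    refine ⟨by linarith, ?_, by linarith, ?_, rfl, ?_⟩
    · have : tp μ * v μ ^ 2 = (σ μ - sLp μ) * v μ / 2 := by rw [← s3]; ring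
      rw [this]
      linear_combination -s4
    · simp only [hyR]; field_simp; ring
    · rw [s3, ← s5]; ring



/-- Theorem 2.3 (period-doubling-like border-collision bifurcations).
Here `Ω = (ω₁, ω₂)` and `I = (ι₁, ι₂)` are the open intervals containing `0` on which the
piecewise-`C³` family is defined, `aL, aR` are the one-sided slopes at the bifurcation,
and `β` is the common `μ`-derivative at the origin. -/
theorem stmt2 (ω₁ ω₂ ι₁ ι₂ aL aR β : ℝ) (fL fR : ℝ → ℝ → ℝ)
    (hω₁ : ω₁ < 0) (hω₂ : 0 < ω₂) (hι₁ : ι₁ < 0) (hι₂ : 0 < ι₂)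
    (hfL : ContDiffOn ℝ 3 (fun p : ℝ × ℝ => fL p.1 p.2) (Set.Ioo ω₁ ω₂ ×ˢ Set.Ioo ι₁ ι₂))
    (hfR : ContDiffOn ℝ 3 (fun p : ℝ × ℝ => fR p.1 p.2) (Set.Ioo ω₁ ω₂ ×ˢ Set.Ioo ι₁ ι₂))
    (hcont : ∀ μ ∈ Set.Ioo ι₁ ι₂, fL 0 μ = fR 0 μ)
    (hbcb : fL 0 0 = 0)
    (haL : deriv (fun x => fL x 0) 0 = aL)
    (haR : deriv (fun x => fR x 0) 0 = aR)
    (hβL : deriv (fun μ => fL 0 μ) 0 = β)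
    (hβR : deriv (fun μ => fR 0 μ) 0 = β)
    (hβ : 0 < β)
    (hR : aR < -1) (hLlow : 1 / aR < aL) (hLhigh : aL < 0) :
    ∃ μ₀ > 0, Set.Ioo (-μ₀) μ₀ ⊆ Set.Ioo ι₁ ι₂ ∧
      ∃ sL sR t : ℝ → ℝ,
        ContinuousOn sL (Set.Ioo (-μ₀) μ₀) ∧ ContinuousOn sR (Set.Ioo (-μ₀) μ₀) ∧
        ContinuousOn t (Set.Ioo (-μ₀) μ₀) ∧
        (fun μ => sL μ - aL) =O[nhds (0:ℝ)] (fun μ => μ) ∧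
        (fun μ => sR μ - aR) =O[nhds (0:ℝ)] (fun μ => μ) ∧
        (∃ N : Set ℝ, IsOpen N ∧ (0:ℝ) ∈ N ∧ N ⊆ Set.Ioo ω₁ ω₂ ∧
          ∃ M : ℝ → Set ℝ, PdConclusion fL fR μ₀ sL sR t N M) ∧
        -- Moreover, the neighbourhoods can be chosen almost symmetric
        (∀ δ > 0, ∃ μ₁ > 0, μ₁ ≤ μ₀ ∧
          ∃ p > 0, Set.Ioo (-p) p ⊆ Set.Ioo ω₁ ω₂ ∧
            ∃ qm qp : ℝ → ℝ,
              PdConclusion fL fR μ₁ sL sR t (Set.Ioo (-p) p)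
                (fun μ => Set.Ioo (qm μ) (qp μ)) ∧
              ∀ μ ∈ Set.Ioo (-μ₁) μ₁,
                qm μ < 0 ∧ 0 < qp μ ∧
                (1 - δ) * p < |qm μ| ∧ |qm μ| < (1 + δ) * p ∧
                (1 - δ) * p < |qp μ| ∧ |qp μ| < (1 + δ) * p) := by
  have hI : Ioo ι₁ ι₂ ∈ 𝓝 (0:ℝ) := Ioo_mem_nhds hι₁ hι₂
  have hΩ : Ioo ω₁ ω₂ ×ˢ Ioo ι₁ ι₂ ∈ 𝓝 ((0:ℝ), (0:ℝ)) := prod_mem_nhds (Ioo_mem_nhds hω₁ hω₂) hI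
  have cL := hfL.contDiffAt hΩ
  have cR := hfR.contDiffAt hΩ
  have hLR : aL * aR < 1 := by
    rw [div_lt_iff_of_neg (by linarith)] at hLlow
    exact hLlow
  obtain ⟨DL, kL, DL0, RL, dL⟩ := partial_reg cL haL
  obtain ⟨DR, kR, DR0, RR, dR⟩ := partial_reg cR haR
  have cL1 := cL.of_le (m := 1) (by norm_num)
  have cR1 := cR.of_le (m := 1) (by norm_num)
  have h00' : fR 0 0 = 0 := by rw [← hcont 0 (mem_of_mem_nhds hI), hbcb]
  have cν : ContDiffAt ℝ 1 (fun μ => fL 0 μ) 0 := comp2 (n := 1) cL1 contDiffAt_const rfl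
  have dν : HasDerivAt (fun μ => fL 0 μ) β 0 := by
    rw [← hβL]; exact (cν.differentiableAt one_ne_zero).hasDerivAt
  have hν : Tendsto (fun μ => fL 0 μ) (𝓝 0) (𝓝 0) := by
    have := cν.continuousAt.tendsto
    rwa [hbcb] at this
  have hsgn : ∀ᶠ μ in 𝓝 (0:ℝ), (fL 0 μ ≤ 0 ↔ μ ≤ 0) := by
    have h1 : ∀ᶠ μ in 𝓝 (0:ℝ), 0 < dslope (fun μ => fL 0 μ) 0 μ :=
      (dslope_evc cν).self_of_nhds.eventually_const_lt (by rw [dslope_same, hβL]; exact hβ)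
    filter_upwards [h1] with μ h
    have := sub_smul_dslope (fun μ => fL 0 μ) 0 μ
    rw [sub_zero, smul_eq_mul, hbcb, sub_zero] at this
    rw [← this]
    constructor
    · intro h'; by_contra hc; push Not at hc; nlinarith [mul_pos hc h]
    · intro h'; nlinarith
  obtain ⟨sL, sR, t, xL, yL, xR, yR, u, v, ⟨g1, g2, g3, g4, g5, g6, g7⟩, hmat, i1, i2, i3, i4, i5,
    i6, i7, i8, i9⟩ := params hR hLR hLhigh hβ cL1 cR1 kL kR DL0 DR0 dL dR hbcb h00' dν
  have tsL := g1.self_of_nhds.tendsto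
  have tsR := g2.self_of_nhds.tendsto
  have tt := g3.self_of_nhds.tendsto
  rw [g4] at tsL
  rw [g5] at tsR
  have hcont' : ∀ᶠ μ in 𝓝 (0:ℝ), fL 0 μ = fR 0 μ := by filter_upwards [hI] with μ hμ using hcont μ hμ
  have key : ∀ δ > 0, ∀ ρ > 0, ∃ μ₁ > 0, μ₁ ≤ ρ ∧
      ∃ p > 0, Set.Ioo (-p) p ⊆ Set.Ioo ω₁ ω₂ ∧
        ∃ qm qp : ℝ → ℝ,
          PdConclusion fL fR μ₁ sL sR t (Set.Ioo (-p) p) (fun μ => Set.Ioo (qm μ) (qp μ)) ∧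
          ∀ μ ∈ Set.Ioo (-μ₁) μ₁,
            qm μ < 0 ∧ 0 < qp μ ∧
            (1 - δ) * p < |qm μ| ∧ |qm μ| < (1 + δ) * p ∧
            (1 - δ) * p < |qp μ| ∧ |qp μ| < (1 + δ) * p := by
    intro δ hδ ρ hρ
    obtain ⟨p, hp, hpρ, hev⟩ := asm hR hLR hLhigh RL RR hcont' hν hsgn tsL tsR tt hmat i1 i2 i3 i4 i5
      i6 i7 i8 i9 (δ := min δ (1 / 2)) (ρ := min (-ω₁) ω₂) (by positivity)
      (lt_of_le_of_lt (min_le_right _ _) (by norm_num)) (lt_min (by linarith) hω₂)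
    obtain ⟨ε, ε0, hε⟩ := Metric.eventually_nhds_iff.1 hev
    have hmem : ∀ μ ∈ Ioo (-(min ε ρ)) (min ε ρ), dist μ 0 < ε := by
      intro μ hμ
      rw [Real.dist_eq, sub_zero, abs_lt]
      exact ⟨by linarith [hμ.1, min_le_left ε ρ], hμ.2.trans_le (min_le_left _ _)⟩
    choose! qm qp hq1 hq2 hq3 using (fun μ (h : dist μ 0 < ε) => hε h)
    refine ⟨min ε ρ, lt_min ε0 hρ, min_le_right _ _, p, hp, ?_, qm, qp, ⟨?_, ?_, ?_⟩, ?_⟩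
    · have h1 := hpρ.trans (min_le_left _ _)
      have h2 := hpρ.trans (min_le_right _ _)
      exact Ioo_subset_Ioo (by linarith) h2
    · intro μ hμ
      obtain ⟨a1, a2, -⟩ := hq1 μ (hmem μ hμ)
      exact ⟨isOpen_Ioo, a1, a2⟩
    · intro μ hμ
      exact hq2 μ (hmem μ ⟨hμ.1, hμ.2.trans_lt (lt_min ε0 hρ)⟩) hμ.2
    · intro μ hμ
      exact hq3 μ (hmem μ ⟨by linarith [hμ.1, lt_min ε0 hρ], hμ.2⟩) hμ.1
    · intro μ hμ
      obtain ⟨a1, a2, a3, a4, a5, a6⟩ := hq1 μ (hmem μ hμ)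
      have hm := min_le_left δ (1 / 2)
      exact ⟨a1, a2, by nlinarith, by nlinarith, by nlinarith, by nlinarith⟩
  obtain ⟨ρ, ρ0, hρ⟩ := Metric.eventually_nhds_iff.1 (g1.and (g2.and (g3.and hI)))
  obtain ⟨μ₀, μ0, hμρ, p, hp, hpΩ, qm, qp, hc, -⟩ := key 1 one_pos ρ ρ0
  have hd : ∀ μ ∈ Ioo (-μ₀) μ₀, dist μ 0 < ρ := by
    intro μ hμ
    rw [Real.dist_eq, sub_zero, abs_lt]
    exact ⟨by linarith [hμ.1], by linarith [hμ.2]⟩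
  refine ⟨μ₀, μ0, fun μ hμ => (hρ (hd μ hμ)).2.2.2, sL, sR, t,
    fun μ hμ => (hρ (hd μ hμ)).1.continuousWithinAt,
    fun μ hμ => (hρ (hd μ hμ)).2.1.continuousWithinAt,
    fun μ hμ => (hρ (hd μ hμ)).2.2.1.continuousWithinAt, g6, g7,
    ⟨Ioo (-p) p, isOpen_Ioo, ⟨by linarith, hp⟩, hpΩ, _, hc⟩, ?_⟩
  intro δ hδ
  exact key δ hδ μ₀ μ0
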